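/- arXiv:1701.02083 — 2 statements merged into one kernel-verified Lean document; each statement's English description precedes it below -/
import Mathlib

section
/- For the n-dimensional sphere S^n (n ≥ 1) one has TC(S^n) = 2 if n is odd and TC(S^n) = 3 if n is even. -/
/-!
The upper bounds come from motion planners built out of homotopies: a planner over `U` is a
homotopy between the two projections `U → Sⁿ`, and two maps into `Sⁿ` that are nowhere antipodal
are homotopic along normalised segments (`homotopic_of_ne_neg`). This handles the pairs
`(x, y)` with `y ≠ -x`, and, passing through a constant `w`, the pairs with `x, y ≠ -w`; two
non-proportional choices of `w` complete a cover by three sets. For `n` odd there is a map `J` of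
the sphere with `J x ⟂ x`, so on `y ≠ x` one may go `x ↦ J x ↦ -x ↦ y`, and two sets suffice.

The lower bounds are the cohomological argument: a motion planner over `U` kills the class
`1 × u - u × 1` on `U`, where `u` generates `Hⁿ(Sⁿ; ℤ)`, and for `n` even the square of this class
is `-2 u × u ≠ 0`. No cohomology theory is needed beyond explicit integer cochains on sequences of
points, in the style of Alexander and Spanier, of which only the values on sequences of small
diameter matter:

* `orient n` is the generator `u`: colour each point of the sphere by the largest index of a
  positive coordinate, and take the determinant of the colour indicators of `n + 1` points. It is a
  cocycle on small sequences (`cob_orient`), since a small sequence meeting all colours contains no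
  point without positive coordinate.
* `exists_primitive` turns a motion planner into a primitive of the difference of the two pullbacks
  of `orient`, by subdividing the homotopy and applying the prism operator (`cob_prism`).
* `cup_self_eq_cob` is the statement that the cup product of a class dying on `A₁` and a class
  dying on `A₂` dies on `A₁ ∪ A₂`.
* Nontriviality is detected by `torusSum`, the evaluation on the fundamental cycle of the
  triangulated discrete torus `(ℤ/m)ᴺ`; it vanishes on coboundaries (`torusSum_cob`). An explicit
  map `gridMap` of degree one from the torus to the sphere takes exactly one simplex to a simplex
  on which `orient` does not vanish (`eq_of_orient_ne_zero`, `orient_standard`).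
  Evaluating on `Tⁿ → Sⁿ × pt` excludes a single planner, and evaluating the square on
  `Tⁿ × Tⁿ → Sⁿ × Sⁿ` gives `-1 - (-1)ⁿ`, which for `n` even excludes two planners.
-/

open unitInterval

/-- A continuous motion-planning section of the path fibration `π : PX → X × X`,
`π γ = (γ 0, γ 1)`, over a subset `U ⊆ X × X`.  Here `PX = C(I, X)` is the space of
paths in `X` with the compact–open topology. -/
def HasMotionPlanner {X : Type*} [TopologicalSpace X] (U : Set (X × X)) : Prop :=
  ∃ s : C(U, C(unitInterval, X)), ∀ p : U, s p 0 = (p : X × X).1 ∧ s p 1 = (p : X × X).2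

/-- The topological complexity of a space `X`: the minimal number `k` such that `X × X`
can be covered by `k` open subsets, each admitting a continuous section of the path
fibration; `⊤` (infinity) if no such `k` exists. -/
noncomputable def topologicalComplexity (X : Type*) [TopologicalSpace X] : ℕ∞ :=
  sInf {c : ℕ∞ | ∃ k : ℕ, c = k ∧ ∃ U : Fin k → Set (X × X),
    (∀ i, IsOpen (U i)) ∧ (⋃ i, U i) = Set.univ ∧ ∀ i, HasMotionPlanner (U i)}

namespace TCSphere

/-! ### Cochains on sequences of points -/

/-- The increasing map `ℕ → ℕ` omitting the value `i`; `x ∘ skip i` is the `i`-th face of `x`. -/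
def skip (i j : ℕ) : ℕ := if j < i then j else j + 1

/-- A function of sequences depends only on the first `p` terms. A cochain of degree `p` is a
function `(ℕ → X) → ℤ` with `Arity (p + 1)`: simplices are encoded by infinite sequences in order
to avoid casts between the types `Fin n`. -/
def Arity {X : Type*} (p : ℕ) (f : (ℕ → X) → ℤ) : Prop :=
  ∀ x y : ℕ → X, (∀ i < p, x i = y i) → f x = f y

/-- The coboundary of a cochain depending on `p` points; the result depends on `p + 1` points. -/
def cob {X : Type*} (p : ℕ) (f : (ℕ → X) → ℤ) (x : ℕ → X) : ℤ :=
  ∑ i ∈ Finset.range (p + 1), (-1) ^ i * f (x ∘ skip i)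

/-- The cup product of a cochain `f` of degree `p` with `g`: front face times back face. -/
def cup {X : Type*} (p : ℕ) (f g : (ℕ → X) → ℤ) (x : ℕ → X) : ℤ :=
  f x * g fun j => x (p + j)

/-- The `i`-th simplex `a x₀, …, a xᵢ, b xᵢ, b xᵢ₊₁, …` of the prism between `a ∘ x` and `b ∘ x`. -/
def mix {X Y : Type*} (a b : X → Y) (i : ℕ) (x : ℕ → X) (j : ℕ) : Y :=
  if j ≤ i then a (x j) else b (x (j - 1))

/-- The prism operator between the maps `a` and `b`, on cochains depending on `p + 1` points. -/
def prism {X Y : Type*} (p : ℕ) (a b : X → Y) (f : (ℕ → Y) → ℤ) (x : ℕ → X) : ℤ :=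
  ∑ i ∈ Finset.range p, (-1) ^ i * f (mix a b i x)

lemma double_sum_succ (G : ℕ → ℕ → ℤ) (a b : ℕ) :
    ∑ j ∈ Finset.range (a + 1), ∑ i ∈ Finset.range (b + 1), G j i =
      ∑ j ∈ Finset.range a, ∑ i ∈ Finset.range b, G j i + ∑ j ∈ Finset.range a, G j b +
        ∑ i ∈ Finset.range b, G a i + G a b := by
  rw [Finset.sum_range_succ]
  simp_rw [Finset.sum_range_succ _ b]
  rw [Finset.sum_add_distrib]
  ring

/-- The cancellation behind `cob_cob`. -/
lemma double_sum_eq_zero (H : ℕ → ℕ → ℤ) (p : ℕ) (h : ∀ i j, i ≤ j → H (j + 1) i = -H i j) :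
    ∑ i ∈ Finset.range (p + 1), ∑ j ∈ Finset.range p, H i j = 0 := by
  induction p with
  | zero => simp
  | succ p ih =>
    rw [double_sum_succ, ih, zero_add]
    have : ∑ i ∈ Finset.range (p + 1), H i p = -∑ i ∈ Finset.range (p + 1), H (p + 1) i := by
      rw [← Finset.sum_neg_distrib]
      refine Finset.sum_congr rfl fun i hi => ?_
      rw [h i p (by simpa [Nat.lt_succ_iff] using hi), neg_neg]
    rw [this, Finset.sum_range_succ (fun i => H (p + 1) i)]
    ring

/-- The index bookkeeping behind `cob_prism`: the faces of the prism simplices split into the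
diagonal ones, which telescope, and the others, which belong to the prisms over the faces. -/
lemma double_sum_prism (F : ℕ → ℕ → ℤ) (p : ℕ) :
    ∑ j ∈ Finset.range (p + 1), ∑ i ∈ Finset.range (p + 2), F j i =
      ∑ j ∈ Finset.range (p + 1), (F j j + F j (j + 1)) +
        ∑ i ∈ Finset.range (p + 1), ∑ j ∈ Finset.range p,
          if i ≤ j then F (j + 1) i else F j (i + 1) := by
  induction p with
  | zero => simp [Finset.sum_range_succ]
  | succ p ih =>
    rw [double_sum_succ _ (p + 1) (p + 2), ih, double_sum_succ _ (p + 1) p,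
      Finset.sum_range_succ (fun j => F j j + F j (j + 1)) (p + 1)]
    have e1 : ∑ i ∈ Finset.range (p + 1), (if i ≤ p then F (p + 1) i else F p (i + 1)) =
        ∑ i ∈ Finset.range (p + 1), F (p + 1) i :=
      Finset.sum_congr rfl fun i hi => if_pos (by simpa [Nat.lt_succ_iff] using hi)
    have e2 : ∑ j ∈ Finset.range p, (if p + 1 ≤ j then F (j + 1) (p + 1) else F j (p + 1 + 1)) =
        ∑ j ∈ Finset.range p, F j (p + 2) :=
      Finset.sum_congr rfl fun j hj => if_neg (by have := Finset.mem_range.1 hj; omega)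
    rw [e1, e2, if_neg (by omega), Finset.sum_range_succ (fun i => F (p + 1) i) (p + 1),
      Finset.sum_range_succ (fun j => F j (p + 2)) p]
    ring

lemma cob_cob {X : Type*} (p : ℕ) (f : (ℕ → X) → ℤ) (x : ℕ → X) :
    cob (p + 1) (cob p f) x = 0 := by
  unfold cob
  simp_rw [Finset.mul_sum]
  refine double_sum_eq_zero _ (p + 1) fun i j hij => ?_
  have : (x ∘ skip (j + 1)) ∘ skip i = (x ∘ skip i) ∘ skip j := by
    funext l
    simp only [Function.comp, skip]
    congr 1
    split_ifs <;> omega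
  rw [this]
  ring

/-- The prism operator is a cochain homotopy between the pullbacks along `a` and `b`. -/
lemma cob_prism {X Y : Type*} (p : ℕ) (a b : X → Y) (f : (ℕ → Y) → ℤ) (hf : Arity (p + 1) f)
    (x : ℕ → X) :
    cob p (prism p a b f) x + prism (p + 1) a b (cob (p + 1) f) x = f (b ∘ x) - f (a ∘ x) := by
  unfold cob prism
  simp_rw [Finset.mul_sum]
  rw [double_sum_prism]
  -- the simplex `a x₀, …, a xⱼ₋₁, b xⱼ, …` is a common face of two consecutive prism simplices
  set T : ℕ → ℤ := fun j => f fun l => if l < j then a (x l) else b (x l) with hT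
  have h1 : ∀ j, (-1) ^ j * ((-1) ^ j * f (mix a b j x ∘ skip j)) = T j := by
    intro j
    rw [← mul_assoc, ← mul_pow]
    simp only [mul_neg, mul_one, neg_neg, one_pow, one_mul, hT]
    congr 1
    funext l
    simp only [Function.comp, skip, mix]
    split_ifs <;> first | rfl | omega
  have h2 : ∀ j, (-1) ^ j * ((-1) ^ (j + 1) * f (mix a b j x ∘ skip (j + 1))) = -T (j + 1) := by
    intro j
    have : mix a b j x ∘ skip (j + 1) = fun l => if l < j + 1 then a (x l) else b (x l) := by
      funext l
      simp only [Function.comp, skip, mix]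
      split_ifs <;> first | rfl | omega
    rw [this, ← mul_assoc, ← pow_add, show j + (j + 1) = 2 * j + 1 by ring, pow_succ, pow_mul]
    simp [hT]
  have h3 : ∑ j ∈ Finset.range (p + 1),
      ((-1) ^ j * ((-1) ^ j * f (mix a b j x ∘ skip j)) +
        (-1) ^ j * ((-1) ^ (j + 1) * f (mix a b j x ∘ skip (j + 1)))) = T 0 - T (p + 1) := by
    rw [← Finset.sum_range_sub' T]
    refine Finset.sum_congr rfl fun j _ => ?_
    rw [h1, h2, sub_eq_add_neg]
  have h4 : T (p + 1) = f (a ∘ x) := hf _ _ fun i hi => by simp [hi]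
  have h5 : T 0 = f (b ∘ x) := by simp [hT]; rfl
  rw [h3, h4, h5]
  have h6 : ∑ i ∈ Finset.range (p + 1), ∑ j ∈ Finset.range p,
      (if i ≤ j then (-1) ^ (j + 1) * ((-1) ^ i * f (mix a b (j + 1) x ∘ skip i))
        else (-1) ^ j * ((-1) ^ (i + 1) * f (mix a b j x ∘ skip (i + 1)))) =
      -∑ i ∈ Finset.range (p + 1), ∑ j ∈ Finset.range p,
        (-1) ^ i * ((-1) ^ j * f (mix a b j (x ∘ skip i))) := by
    simp_rw [← Finset.sum_neg_distrib]
    refine Finset.sum_congr rfl fun i _ => Finset.sum_congr rfl fun j _ => ?_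
    split_ifs with hij
    · have : mix a b (j + 1) x ∘ skip i = mix a b j (x ∘ skip i) := by
        funext l
        simp only [Function.comp, skip, mix]
        split_ifs <;> first | rfl | omega | (congr 2; omega)
      rw [this]
      ring
    · have : mix a b j x ∘ skip (i + 1) = mix a b j (x ∘ skip i) := by
        funext l
        simp only [Function.comp, skip, mix]
        split_ifs <;> first | rfl | omega | (congr 2; omega)
      rw [this]
      ring
  rw [h6]
  ring

/-- The Leibniz rule. -/
lemma cob_cup {X : Type*} (p q : ℕ) (f g : (ℕ → X) → ℤ) (hf : Arity (p + 1) f) (x : ℕ → X) :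
    cob (p + q + 1) (cup p f g) x =
      cup (p + 1) (cob (p + 1) f) g x + (-1) ^ p * cup p f (cob (q + 1) g) x := by
  simp only [cob, cup]
  rw [show p + q + 1 + 1 = (p + 1) + (q + 1) by ring, Finset.sum_range_add,
    Finset.sum_range_succ _ (p + 1), Finset.sum_range_succ' _ (q + 1)]
  have h1 : ∀ i ∈ Finset.range (p + 1),
      (-1 : ℤ) ^ i * (f (x ∘ skip i) * g fun j => (x ∘ skip i) (p + j)) =
      ((-1) ^ i * f (x ∘ skip i)) * g fun j => x (p + 1 + j) := by
    intro i hi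
    have : (fun j => (x ∘ skip i) (p + j)) = fun j => x (p + 1 + j) := by
      funext j
      have := Finset.mem_range.1 hi
      simp only [Function.comp, skip]
      rw [if_neg (by omega)]
      congr 1
      omega
    rw [this]
    ring
  have h2 : ∀ i, p + 1 ≤ i → f (x ∘ skip i) = f x := fun i hi =>
    hf _ _ fun j hj => by simp [skip, show j < i by omega]
  have h3 : ∀ i ∈ Finset.range (q + 1),
      (-1 : ℤ) ^ (p + 1 + i) * (f (x ∘ skip (p + 1 + i)) *
        g fun j => (x ∘ skip (p + 1 + i)) (p + j)) =
      (-1) ^ p * f x * ((-1) ^ (i + 1) * g ((fun j => x (p + j)) ∘ skip (i + 1))) := by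
    intro i _
    rw [h2 _ (by omega)]
    have : (fun j => (x ∘ skip (p + 1 + i)) (p + j)) = (fun j => x (p + j)) ∘ skip (i + 1) := by
      funext j
      simp only [Function.comp, skip]
      congr 1
      split_ifs <;> omega
    rw [this]
    ring
  have h4 : ((fun j => x (p + j)) ∘ skip 0) = fun j => x (p + 1 + j) := by
    funext j
    simp only [Function.comp, skip]
    congr 1
    simp
    omega
  rw [Finset.sum_congr rfl h1, Finset.sum_congr rfl h3, ← Finset.sum_mul, ← Finset.mul_sum, h4,
    h2 (p + 1) le_rfl]
  ring

lemma Arity.cob {X : Type*} {p : ℕ} {f : (ℕ → X) → ℤ} (hf : Arity p f) :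
    Arity (p + 1) (cob p f) := fun x y h => by
  unfold TCSphere.cob
  refine Finset.sum_congr rfl fun i _ => ?_
  rw [hf (x ∘ skip i) (y ∘ skip i)]
  intro j hj
  simp only [Function.comp, skip]
  split_ifs
  · exact h _ (by omega)
  · exact h _ (by omega)

lemma Arity.cup {X : Type*} {p q : ℕ} {f g : (ℕ → X) → ℤ} (hf : Arity (p + 1) f)
    (hg : Arity (q + 1) g) : Arity (p + q + 1) (cup p f g) := fun x y h => by
  unfold TCSphere.cup
  rw [hf x y fun i hi => h i (by omega), hg _ _ fun i hi => h (p + i) (by omega)]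

lemma Arity.prism {X Y : Type*} {p : ℕ} (a b : X → Y) {f : (ℕ → Y) → ℤ} (hf : Arity (p + 1) f) :
    Arity p (prism p a b f) := fun x y h => by
  unfold TCSphere.prism
  refine Finset.sum_congr rfl fun i hi => ?_
  rw [hf (mix a b i x) (mix a b i y)]
  intro j hj
  have := Finset.mem_range.1 hi
  simp only [mix]
  split_ifs
  · rw [h _ (by omega)]
  · rw [h _ (by omega)]

/-- If every simplex of `S` has all its reindexings in one of two families, on which the cocycle `z`
is the coboundary of `b₁`, respectively of `b₂`, then `z ∪ z` is a coboundary on `S`: with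
`zᵢ = z - d bᵢ` the product `z₁ ∪ z₂` vanishes on `S`, and it differs from `z ∪ z` by a
coboundary. -/
lemma cup_self_eq_cob {X : Type*} (k : ℕ) (S : Set (ℕ → X)) (hS : ∀ x ∈ S, ∀ φ : ℕ → ℕ, x ∘ φ ∈ S)
    (z b₁ b₂ : (ℕ → X) → ℤ) (hz : Arity (k + 2) z) (h₁ : Arity (k + 1) b₁) (h₂ : Arity (k + 1) b₂)
    (hdz : ∀ x ∈ S, cob (k + 2) z x = 0)
    (h : ∀ x ∈ S, (∀ φ : ℕ → ℕ, z (x ∘ φ) = cob (k + 1) b₁ (x ∘ φ)) ∨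
      ∀ φ : ℕ → ℕ, z (x ∘ φ) = cob (k + 1) b₂ (x ∘ φ)) :
    ∃ w : (ℕ → X) → ℤ, Arity (2 * k + 2) w ∧
      ∀ x ∈ S, cup (k + 1) z z x = cob (2 * k + 2) w x := by
  set z₁ : (ℕ → X) → ℤ := fun x => z x - cob (k + 1) b₁ x with hz₁
  have hz₁a : Arity (k + 2) z₁ := fun x y hxy => by
    simp only [hz₁]
    rw [hz x y hxy, h₁.cob x y hxy]
  refine ⟨fun x => cup k b₁ z x + (-1) ^ (k + 1) * cup (k + 1) z₁ b₂ x, fun x y hxy => ?_,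
    fun x hx => ?_⟩
  · have e1 := h₁.cup hz
    have e2 := hz₁a.cup h₂
    simp only
    rw [e1 x y fun i hi => hxy i (by omega), e2 x y fun i hi => hxy i (by omega)]
  · have hlin : cob (2 * k + 2) (fun x => cup k b₁ z x + (-1) ^ (k + 1) * cup (k + 1) z₁ b₂ x) x =
        cob (2 * k + 2) (cup k b₁ z) x +
          (-1) ^ (k + 1) * cob (2 * k + 2) (cup (k + 1) z₁ b₂) x := by
      unfold cob
      rw [Finset.mul_sum, ← Finset.sum_add_distrib]
      exact Finset.sum_congr rfl fun i _ => by ring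
    have e1 := cob_cup k (k + 1) b₁ z h₁ x
    have e2 := cob_cup (k + 1) k z₁ b₂ hz₁a x
    rw [show k + (k + 1) + 1 = 2 * k + 2 by ring] at e1
    rw [show k + 1 + k + 1 = 2 * k + 2 by ring] at e2
    have hdz₁ : cob (k + 1 + 1) z₁ x = 0 := by
      have : cob (k + 1 + 1) z₁ x = cob (k + 2) z x - cob (k + 1 + 1) (cob (k + 1) b₁) x := by
        unfold cob
        rw [← Finset.sum_sub_distrib]
        exact Finset.sum_congr rfl fun i _ => by simp only [hz₁, cob]; ring
      rw [this, cob_cob, hdz x hx, sub_zero]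
    rw [hlin, e1, e2]
    have hdz' : cob (k + 1 + 1) z (fun j => x (k + j)) = 0 := hdz _ (hS x hx (k + ·))
    have key : (z x - cob (k + 1) b₁ x) *
        (z (fun j => x (k + 1 + j)) - cob (k + 1) b₂ fun j => x (k + 1 + j)) = 0 := by
      rcases h x hx with h | h
      · rw [show z x = cob (k + 1) b₁ x from h id, sub_self, zero_mul]
      · rw [show (z fun j => x (k + 1 + j)) = cob (k + 1) b₂ fun j => x (k + 1 + j) from
          h (k + 1 + ·), sub_self, mul_zero]
    simp only [cup, hdz₁, hdz']
    simp only [hz₁]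
    have hs : ((-1 : ℤ) ^ (k + 1)) * (-1) ^ (k + 1) = 1 := by rw [← mul_pow]; simp
    linear_combination key - (z x - cob (k + 1) b₁ x) * (cob (k + 1) b₂ fun j => x (k + 1 + j)) * hs

/-! ### The fundamental cycle of the discrete torus -/

/-- The `i`-th vertex of the simplex of the triangulated discrete torus that starts at `v` and then
increments the coordinates in the order `π 0, π 1, …`. -/
def vert {N m : ℕ} (v : Fin N → ZMod m) (π : Equiv.Perm (Fin N)) (i : ℕ) : Fin N → ZMod m :=
  fun c => if (π.symm c : ℕ) < i then v c + 1 else v c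

/-- The evaluation of a cochain on the fundamental cycle of the discrete torus `(ℤ/m)ᴺ`. -/
def torusSum {N m : ℕ} [NeZero m] (f : (ℕ → Fin N → ZMod m) → ℤ) : ℤ :=
  ∑ π : Equiv.Perm (Fin N), ∑ v : Fin N → ZMod m, (Equiv.Perm.sign π : ℤ) * f (vert v π)

lemma vert_swap_skip {k m : ℕ} (v : Fin (k + 1) → ZMod m) (π : Equiv.Perm (Fin (k + 1)))
    (j : Fin k) :
    vert v (π * Equiv.swap j.castSucc j.succ) ∘ skip (j + 1) = vert v π ∘ skip (j + 1) := by
  funext l c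
  simp only [Function.comp, vert]
  have h : (π * Equiv.swap j.castSucc j.succ).symm c =
      Equiv.swap j.castSucc j.succ (π.symm c) := rfl
  rw [h]
  have h2 : ((Equiv.swap j.castSucc j.succ (π.symm c) : Fin (k + 1)) : ℕ) < skip (j + 1) l ↔
      (π.symm c : ℕ) < skip (j + 1) l := by
    rw [Equiv.swap_apply_def]
    unfold skip
    split_ifs with h1 h2 h3 h4 h5 <;> simp_all [Fin.ext_iff] <;> omega
  simp only [h2]

/-- Inner faces cancel in pairs: exchanging two consecutive increments changes only the vertex
between them, and reverses the sign. -/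
lemma torusSum_inner_face {k m : ℕ} [NeZero m] (f : (ℕ → Fin (k + 1) → ZMod m) → ℤ) (j : Fin k) :
    torusSum (fun x => f (x ∘ skip (j + 1))) = 0 := by
  rw [torusSum, Finset.sum_comm]
  refine Finset.sum_eq_zero fun v _ => ?_
  have h := Equiv.sum_comp (Equiv.mulRight (Equiv.swap j.castSucc j.succ))
    fun π : Equiv.Perm (Fin (k + 1)) =>
      (Equiv.Perm.sign π : ℤ) * f (vert v π ∘ skip (j + 1))
  have hne : j.castSucc ≠ j.succ := by simp [Fin.ext_iff]
  simp only [Equiv.coe_mulRight, vert_swap_skip, Equiv.Perm.sign_mul,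
    Equiv.Perm.sign_swap hne] at h
  simp only [mul_neg, mul_one, Units.val_neg, neg_mul, Finset.sum_neg_distrib] at h
  linarith

/-- Dropping the first vertex of a simplex leaves the initial face of the simplex starting at the
second vertex, whose increments are rotated cyclically. -/
lemma vert_rotate {k m : ℕ} (v : Fin (k + 1) → ZMod m) (π : Equiv.Perm (Fin (k + 1))) (i : ℕ)
    (hi : i < k + 1) :
    vert (v + Pi.single (π 0) 1) (π * finRotate (k + 1)) i = vert v π (i + 1) := by
  funext c
  obtain ⟨p, rfl⟩ := π.surjective c
  obtain ⟨q, rfl⟩ := (finRotate (k + 1)).surjective p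
  have h : (π * finRotate (k + 1)).symm (π (finRotate (k + 1) q)) = q := by
    rw [Equiv.symm_apply_eq]; rfl
  simp only [vert, h, Equiv.symm_apply_apply, Pi.add_apply]
  rcases eq_or_ne q (Fin.last k) with rfl | hq
  · rw [finRotate_last]
    simp [show ¬ k < i by omega]
  · have hq' : ((finRotate (k + 1) q : Fin (k + 1)) : ℕ) = q + 1 := coe_finRotate_of_ne_last hq
    have : finRotate (k + 1) q ≠ 0 := by
      intro h0; rw [h0] at hq'; simp at hq'
    rw [Pi.single_eq_of_ne (by simpa using this), hq']
    simp

/-- The last faces are matched with the first faces by `vert_rotate`. -/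
lemma torusSum_outer_face {k m : ℕ} [NeZero m] (f : (ℕ → Fin (k + 1) → ZMod m) → ℤ)
    (hf : Arity (k + 1) f) :
    torusSum (fun x => f (x ∘ skip (k + 1))) = (-1) ^ k * torusSum (fun x => f (x ∘ skip 0)) := by
  unfold torusSum
  rw [Finset.mul_sum, ← Equiv.sum_comp (Equiv.mulRight (finRotate (k + 1)))]
  refine Finset.sum_congr rfl fun π _ => ?_
  rw [Finset.mul_sum, ← Equiv.sum_comp (Equiv.addRight (Pi.single (π 0) (1 : ZMod m)))]
  refine Finset.sum_congr rfl fun v _ => ?_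
  simp only [Equiv.coe_mulRight, Equiv.coe_addRight, Equiv.Perm.sign_mul, sign_finRotate]
  rw [hf (vert (v + Pi.single (π 0) 1) (π * finRotate (k + 1)) ∘ skip (k + 1)) (vert v π ∘ skip 0)]
  · push_cast
    ring
  · intro i hi
    simp only [Function.comp, skip, if_pos hi]
    rw [vert_rotate _ _ _ hi]
    rfl

/-- The fundamental cycle of the torus is a cycle. -/
theorem torusSum_cob {k m : ℕ} [NeZero m] (f : (ℕ → Fin (k + 1) → ZMod m) → ℤ)
    (hf : Arity (k + 1) f) : torusSum (cob (k + 1) f) = 0 := by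
  have h : torusSum (cob (k + 1) f) =
      ∑ i ∈ Finset.range (k + 2), (-1) ^ i * torusSum (fun x => f (x ∘ skip i)) := by
    unfold torusSum cob
    simp_rw [Finset.mul_sum]
    symm
    rw [Finset.sum_comm]
    refine Finset.sum_congr rfl fun π _ => ?_
    rw [Finset.sum_comm]
    refine Finset.sum_congr rfl fun v _ => Finset.sum_congr rfl fun i _ => ?_
    ring
  rw [h, Finset.sum_range_succ, Finset.sum_range_succ', torusSum_outer_face f hf,
    Finset.sum_eq_zero fun i hi => by
      rw [torusSum_inner_face f ⟨i, Finset.mem_range.1 hi⟩, mul_zero]]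
  have hs : ((-1 : ℤ) ^ k) * (-1) ^ k = 1 := by rw [← mul_pow]; simp
  linear_combination (-torusSum fun x => f (x ∘ skip 0)) * hs

/-! ### The orientation cochain of the sphere -/

/-- The sphere `Sⁿ`. -/
abbrev Sph (n : ℕ) : Type := Metric.sphere (0 : EuclideanSpace ℝ (Fin (n + 1))) 1

open Classical in
/-- The indicator of the colour `i`, where the colour of a point is the largest index of a positive
coordinate. A point without positive coordinate has no colour, and all its indicators vanish. -/
noncomputable def label {n : ℕ} (x : Sph n) (i : Fin (n + 1)) : ℤ :=
  if 0 < x.1 i ∧ ∀ j, i < j → x.1 j ≤ 0 then 1 else 0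

/-- The cochain on `Sⁿ` representing the orientation class: the signed count of the ways in which
the points `x 0, …, x n` exhibit all `n + 1` colours. -/
noncomputable def orient (n : ℕ) (x : ℕ → Sph n) : ℤ :=
  Matrix.det (Matrix.of fun r c : Fin (n + 1) => label (x r) c)

lemma arity_orient (n : ℕ) : Arity (n + 1) (orient n) := fun x y h => by
  unfold orient
  congr 2
  funext r c
  rw [h r r.2]

lemma label_ne_zero {n : ℕ} {x : Sph n} {i : Fin (n + 1)} :
    label x i ≠ 0 ↔ 0 < x.1 i ∧ ∀ j, i < j → x.1 j ≤ 0 := by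
  unfold label
  split_ifs with h
  · simpa using h
  · simpa using h

lemma sum_label {n : ℕ} (x : Sph n) (h : ∃ i, 0 < x.1 i) : ∑ i, label x i = 1 := by
  classical
  have hne : (Finset.univ.filter fun i => 0 < x.1 i).Nonempty := by
    obtain ⟨i, hi⟩ := h
    exact ⟨i, by simpa using hi⟩
  obtain ⟨i, hi, hmax⟩ := Finset.exists_max_image _ id hne
  simp only [Finset.mem_filter, Finset.mem_univ, true_and, id] at hi hmax
  have hi' : 0 < x.1 i ∧ ∀ j, i < j → x.1 j ≤ 0 :=
    ⟨hi, fun j hij => not_lt.1 fun hj => absurd (hmax j hj) (not_le.2 hij)⟩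
  rw [Finset.sum_eq_single i]
  · unfold label; rw [if_pos hi']
  · intro j _ hji
    by_contra hj
    rw [← ne_eq, label_ne_zero] at hj
    rcases lt_or_gt_of_ne hji with hlt | hlt
    · exact absurd hi (not_lt.2 (hj.2 i hlt))
    · exact absurd hj.1 (not_lt.2 (hi'.2 j hlt))
  · simp

/-- A point of a small sequence meeting all colours has a positive coordinate: otherwise each of its
coordinates would be less than `1 / (n + 1)` in absolute value, and its norm less than `1`. -/
lemma exists_pos_of_small {n : ℕ} (x : ℕ → Sph n)
    (hx : ∀ i j, dist (x i) (x j) < 1 / (n + 1)) (hpos : ∀ c, ∃ r, 0 < (x r).1 c) (r : ℕ) :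
    ∃ c, 0 < (x r).1 c := by
  by_contra! hneg
  have hcoord : ∀ c, ((x r).1 c) ^ 2 < (1 / ((n : ℝ) + 1)) ^ 2 := by
    intro c
    obtain ⟨s, hs⟩ := hpos c
    have h1 : |(x r).1 c - (x s).1 c| < 1 / (n + 1) := by
      refine lt_of_le_of_lt ?_ (hx r s)
      rw [Subtype.dist_eq, dist_eq_norm]
      simpa using PiLp.norm_apply_le ((x r).1 - (x s).1) c
    rw [abs_lt] at h1
    have := hneg c
    nlinarith
  have hnorm : ∑ c, ((x r).1 c) ^ 2 = 1 := by
    have h2 : ‖(x r).1‖ = 1 := by simp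
    have h3 := EuclideanSpace.norm_sq_eq (x r).1
    rw [h2] at h3
    simpa using h3.symm
  have hlt : ∑ c, ((x r).1 c) ^ 2 < ∑ _c : Fin (n + 1), (1 / ((n : ℝ) + 1)) ^ 2 :=
    Finset.sum_lt_sum_of_nonempty Finset.univ_nonempty fun c _ => hcoord c
  rw [hnorm] at hlt
  simp only [Finset.sum_const, Finset.card_univ, Fintype.card_fin, nsmul_eq_mul] at hlt
  push_cast at hlt
  have hn : (0 : ℝ) < n + 1 := by positivity
  have : ((n : ℝ) + 1) * (1 / ((n : ℝ) + 1)) ^ 2 = 1 / (n + 1) := by field_simp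
  rw [this, lt_div_iff₀ hn] at hlt
  have : (0 : ℝ) ≤ n := by positivity
  linarith

/-- The coboundary of `orient` is the determinant of the colour matrix of `n + 2` points bordered by
a column of ones. If a colour is missing, it has a zero column; otherwise every point has a colour,
and the first column is the sum of the others. -/
lemma cob_orient {n : ℕ} (x : ℕ → Sph n) (hx : ∀ i j, dist (x i) (x j) < 1 / (n + 1)) :
    cob (n + 1) (orient n) x = 0 := by
  set B : Matrix (Fin (n + 2)) (Fin (n + 2)) ℤ :=
    Matrix.of fun r => Fin.cons (1 : ℤ) (label (x r)) with hB
  have hdet : cob (n + 1) (orient n) x = B.det := by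
    rw [Matrix.det_succ_column_zero, cob, Finset.sum_range]
    refine Finset.sum_congr rfl fun i _ => ?_
    have h1 : B i 0 = 1 := rfl
    rw [h1, mul_one]
    congr 1
    unfold orient
    congr 1
    ext r c
    simp only [hB, Matrix.of_apply, Matrix.submatrix_apply, Fin.cons_succ, Function.comp]
    congr 2
    simp only [skip, Fin.succAbove, Fin.lt_def, Fin.val_castSucc]
    split_ifs <;> simp
  rw [hdet]
  by_cases h : ∃ c, ∀ r : Fin (n + 2), label (x r) c = 0
  · obtain ⟨c, hc⟩ := h
    exact Matrix.det_eq_zero_of_column_eq_zero c.succ fun r => by simp [hB, hc r]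
  · push Not at h
    refine Matrix.exists_mulVec_eq_zero_iff.1 ⟨Fin.cons (-1) 1, fun h0 => ?_, ?_⟩
    · simpa using congrFun h0 0
    · funext r
      have h1 := sum_label (x r) (exists_pos_of_small x hx (fun c => by
        obtain ⟨s, hs⟩ := h c
        exact ⟨s, (label_ne_zero.1 hs).1⟩) r)
      simp [hB, Matrix.mulVec, dotProduct, Fin.sum_univ_succ] at h1 ⊢
      linarith

lemma orient_const {n : ℕ} (p : Sph (n + 1)) : orient (n + 1) (fun _ => p) = 0 := by
  unfold orient
  exact Matrix.det_zero_of_row_eq (i := 0) (j := 1) (by simp) rfl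

/-- A motion planner over a set containing a compact set `A` makes the two pullbacks of `orient`
cohomologous on `A`, as far as sequences of small diameter are concerned. -/
theorem exists_primitive {k : ℕ} {U A : Set (Sph (k + 1) × Sph (k + 1))} (hU : HasMotionPlanner U)
    (hA : IsCompact A) (hAU : A ⊆ U) :
    ∃ β : (ℕ → Sph (k + 1) × Sph (k + 1)) → ℤ, Arity (k + 1) β ∧ ∃ δ > 0,
      ∀ x : ℕ → Sph (k + 1) × Sph (k + 1), (∀ i, x i ∈ A) → (∀ i j, dist (x i) (x j) < δ) →
        orient (k + 1) (fun i => (x i).2) - orient (k + 1) (fun i => (x i).1) =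
          cob (k + 1) β x := by
  classical
  obtain ⟨s, hs⟩ := hU
  have : CompactSpace A := isCompact_iff_compactSpace.1 hA
  set h : A × I → Sph (k + 1) := fun p => s ⟨p.1, hAU p.1.2⟩ p.2 with hh
  have hcont : Continuous h := by
    have : Continuous fun p : A × I => (s ⟨p.1, hAU p.1.2⟩, p.2) := by fun_prop
    exact ContinuousEval.continuous_eval.comp this
  have hε : (0 : ℝ) < 1 / ((k + 1 : ℕ) + 1) := by positivity
  obtain ⟨δ, hδ, huc⟩ := Metric.uniformContinuous_iff.1
    (CompactSpace.uniformContinuous_of_continuous hcont) _ hε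
  obtain ⟨r, hr⟩ := exists_nat_one_div_lt hδ
  set tm : ℕ → I := fun j => Set.projIcc 0 1 zero_le_one (j / ((r : ℝ) + 1)) with htm
  have htm_dist : ∀ j, dist (tm j) (tm (j + 1)) < δ := by
    intro j
    refine lt_of_le_of_lt ?_ hr
    have h1 := (LipschitzWith.projIcc (zero_le_one (α := ℝ))).dist_le_mul
      (j / ((r : ℝ) + 1)) ((j + 1 : ℕ) / ((r : ℝ) + 1))
    refine h1.trans (le_of_eq ?_)
    rw [Real.dist_eq, ← sub_div]
    push_cast
    have h2 : (0 : ℝ) < r + 1 := by positivity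
    rw [show (j : ℝ) - (j + 1) = -1 by ring, abs_div, abs_neg, abs_one, abs_of_pos h2]
    simp
  -- the time `j / (r + 1)` of the homotopy; the value off `A` is irrelevant
  set f : ℕ → Sph (k + 1) × Sph (k + 1) → Sph (k + 1) :=
    fun j p => if hp : p ∈ A then h (⟨p, hp⟩, tm j) else p.1 with hf
  set β : (ℕ → Sph (k + 1) × Sph (k + 1)) → ℤ :=
    fun x => ∑ j ∈ Finset.range (r + 1), prism (k + 1) (f j) (f (j + 1)) (orient (k + 1)) x with hβ
  refine ⟨β, fun x y hxy => ?_, δ, hδ, fun x hxA hx => ?_⟩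
  · refine Finset.sum_congr rfl fun j _ => ?_
    exact (arity_orient (k + 1)).prism (f j) (f (j + 1)) x y hxy
  have hclose : ∀ j j' i i', dist (tm j) (tm j') < δ →
      dist (f j (x i)) (f j' (x i')) < 1 / ((k + 1 : ℕ) + 1) := by
    intro j j' i i' hjj
    simp only [hf, dif_pos (hxA _)]
    refine huc ?_
    rw [Prod.dist_eq]
    exact max_lt (hx i i') hjj
  have hstep : ∀ j, cob (k + 1) (prism (k + 1) (f j) (f (j + 1)) (orient (k + 1))) x =
      orient (k + 1) (f (j + 1) ∘ x) - orient (k + 1) (f j ∘ x) := by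
    intro j
    rw [← cob_prism (k + 1) (f j) (f (j + 1)) _ (arity_orient (k + 1)) x]
    have : prism (k + 1 + 1) (f j) (f (j + 1)) (cob (k + 1 + 1) (orient (k + 1))) x = 0 := by
      refine Finset.sum_eq_zero fun i _ => ?_
      rw [cob_orient, mul_zero]
      intro a b
      unfold mix
      have h0 : ∀ l, dist (tm l) (tm l) < δ := fun l => by rwa [dist_self]
      split_ifs
      · exact hclose _ _ _ _ (h0 _)
      · exact hclose _ _ _ _ (htm_dist _)
      · exact hclose _ _ _ _ (by rw [dist_comm]; exact htm_dist _)
      · exact hclose _ _ _ _ (h0 _)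
    rw [this, add_zero]
  have hsum : cob (k + 1) β x = ∑ j ∈ Finset.range (r + 1),
      cob (k + 1) (prism (k + 1) (f j) (f (j + 1)) (orient (k + 1))) x := by
    simp only [cob, hβ, Finset.mul_sum]
    exact Finset.sum_comm
  rw [hsum, Finset.sum_congr rfl fun j _ => hstep j,
    Finset.sum_range_sub fun j => orient (k + 1) (f j ∘ x)]
  have hend : f (r + 1) ∘ x = fun i => (x i).2 := by
    funext i
    have : tm (r + 1) = 1 := by
      have h2 : ((r : ℝ) + 1) ≠ 0 := by positivity
      simp only [htm]
      push_cast
      rw [div_self h2]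
      exact Set.projIcc_right (h := zero_le_one (α := ℝ))
    simp only [Function.comp, hf, dif_pos (hxA _), hh, this]
    exact (hs _).2
  have hstart : f 0 ∘ x = fun i => (x i).1 := by
    funext i
    have : tm 0 = 0 := by
      simp only [htm]
      push_cast
      rw [zero_div]
      exact Set.projIcc_left (h := zero_le_one (α := ℝ))
    simp only [Function.comp, hf, dif_pos (hxA _), hh, this]
    exact (hs _).1
  rw [hend, hstart]

/-! ### A map of degree one from the torus to the sphere -/

section Circle

variable {m : ℕ} [NeZero m]

lemma toCircle_natCast_eq (k : ℕ) :
    ((ZMod.toCircle ((k : ℕ) : ZMod m) : Circle) : ℂ) =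
      Complex.exp ((2 * Real.pi * k / m : ℝ) * Complex.I) := by
  rw [ZMod.toCircle_natCast]
  push_cast
  ring_nf

lemma toCircle_im (k : ℕ) :
    (ZMod.toCircle ((k : ℕ) : ZMod m) : ℂ).im = Real.sin (2 * Real.pi * k / m) := by
  rw [toCircle_natCast_eq, Complex.exp_ofReal_mul_I_im]

lemma toCircle_re (k : ℕ) :
    (ZMod.toCircle ((k : ℕ) : ZMod m) : ℂ).re = Real.cos (2 * Real.pi * k / m) := by
  rw [toCircle_natCast_eq, Complex.exp_ofReal_mul_I_re]

lemma sin_pos_of_lt {k : ℕ} (hk : 0 < k) (hkm : 2 * k < m) :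
    0 < Real.sin (2 * Real.pi * k / m) := by
  have hm : (0 : ℝ) < m := by exact_mod_cast NeZero.pos m
  have hk' : (0 : ℝ) < k := by exact_mod_cast hk
  have hkm' : (2 * k : ℝ) < m := by exact_mod_cast hkm
  have := Real.pi_pos
  apply Real.sin_pos_of_pos_of_lt_pi (by positivity)
  rw [div_lt_iff₀ hm]
  nlinarith

lemma sin_nonpos_of_le {k : ℕ} (hkm : m ≤ 2 * k) (hk : k ≤ m) :
    Real.sin (2 * Real.pi * k / m) ≤ 0 := by
  have hm : (0 : ℝ) < m := by exact_mod_cast NeZero.pos m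
  have hkm' : (m : ℝ) ≤ 2 * k := by exact_mod_cast hkm
  have hk' : (k : ℝ) ≤ m := by exact_mod_cast hk
  have := Real.pi_pos
  rw [← Real.sin_sub_two_pi]
  apply Real.sin_nonpos_of_nonpos_of_neg_pi_le
  · rw [sub_nonpos, div_le_iff₀ hm]
    nlinarith
  · rw [le_sub_iff_add_le, le_div_iff₀ hm]
    nlinarith

/-- Going around the discrete circle by unit steps, the upper half-plane is entered only at the
step from `0` to `1`. -/
lemma eq_zero_of_im_nonpos_of_im_pos {a : ZMod m} (h0 : (ZMod.toCircle a : ℂ).im ≤ 0)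
    (h1 : 0 < (ZMod.toCircle (a + 1) : ℂ).im) : a = 0 := by
  have ha : ((a.val : ℕ) : ZMod m) = a := ZMod.natCast_zmod_val a
  have ha1 : ((a.val + 1 : ℕ) : ZMod m) = a + 1 := by push_cast; rw [ha]
  rw [← ha, toCircle_im] at h0
  rw [← ha1, toCircle_im] at h1
  have hlt := ZMod.val_lt a
  rw [← ZMod.val_eq_zero]
  by_contra hne
  rcases lt_or_ge (2 * a.val) m with h | h
  · exact absurd (sin_pos_of_lt (Nat.pos_of_ne_zero hne) h) (not_lt.2 h0)
  · exact absurd (sin_nonpos_of_le (k := a.val + 1) (m := m) (by omega) hlt) (not_le.2 h1)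

/-- The upper half-plane is left through the left half-plane. -/
lemma re_nonpos_of_im_pos_of_im_nonpos (hm4 : 4 ≤ m) {a : ZMod m}
    (h0 : 0 < (ZMod.toCircle a : ℂ).im) (h1 : (ZMod.toCircle (a + 1) : ℂ).im ≤ 0) :
    (ZMod.toCircle (a + 1) : ℂ).re ≤ 0 := by
  have ha : ((a.val : ℕ) : ZMod m) = a := ZMod.natCast_zmod_val a
  have ha1 : ((a.val + 1 : ℕ) : ZMod m) = a + 1 := by push_cast; rw [ha]
  rw [← ha, toCircle_im] at h0
  rw [← ha1, toCircle_im] at h1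
  rw [← ha1, toCircle_re]
  have hlt := ZMod.val_lt a
  have h2 : 2 * a.val < m := by
    by_contra! h
    exact absurd (sin_nonpos_of_le h hlt.le) (not_le.2 h0)
  have h3 : m ≤ 2 * (a.val + 1) := by
    by_contra! h
    exact absurd (sin_pos_of_lt (Nat.succ_pos _) h) (not_lt.2 h1)
  have hm : (0 : ℝ) < m := by exact_mod_cast NeZero.pos m
  have h2' : (2 * a.val : ℝ) < m := by exact_mod_cast h2
  have h3' : (m : ℝ) ≤ 2 * ((a.val + 1 : ℕ) : ℝ) := by exact_mod_cast h3
  have hm4' : (4 : ℝ) ≤ m := by exact_mod_cast hm4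
  have := Real.pi_pos
  apply Real.cos_nonpos_of_pi_div_two_le_of_le
  · rw [le_div_iff₀ hm]
    nlinarith
  · rw [div_le_iff₀ hm]
    push_cast
    nlinarith

lemma im_toCircle_one_pos (hm4 : 4 ≤ m) : 0 < (ZMod.toCircle (1 : ZMod m) : ℂ).im := by
  have := toCircle_im (m := m) 1
  rw [Nat.cast_one] at this
  rw [this]
  exact sin_pos_of_lt one_pos (by omega)

lemma dist_toCircle_add_one (a : ZMod m) :
    dist (ZMod.toCircle (a + 1)) (ZMod.toCircle a) ≤ 2 * Real.pi / m := by
  have h1 := toCircle_natCast_eq (m := m) 1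
  rw [Nat.cast_one, Nat.cast_one, mul_one] at h1
  change dist ((ZMod.toCircle (a + 1) : Circle) : ℂ) (ZMod.toCircle a : ℂ) ≤ _
  rw [dist_eq_norm, AddChar.map_add_eq_mul, Circle.coe_mul, h1,
    ← mul_sub_one, norm_mul, Circle.norm_coe, one_mul, mul_comm _ Complex.I]
  refine (Real.norm_exp_I_mul_ofReal_sub_one_le).trans (le_of_eq ?_)
  rw [Real.norm_of_nonneg]
  have := Real.pi_pos
  positivity

end Circle

/-- The vector `(∑ c, Re (z c) - (n - 1), Im (z 0), …, Im (z (n - 1)))` attached to a point of the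
torus. Its first coordinate is positive only if all `z c` lie in the right half-plane, which forces
the degree of the normalised map to be one. -/
noncomputable def torusVec {n : ℕ} (z : Fin n → Circle) : EuclideanSpace ℝ (Fin (n + 1)) :=
  WithLp.toLp 2 (Fin.cons (∑ c, (z c : ℂ).re - (n - 1)) fun c => (z c : ℂ).im)

lemma torusVec_zero {n : ℕ} (z : Fin n → Circle) :
    torusVec z 0 = ∑ c, (z c : ℂ).re - (n - 1) := rfl

lemma torusVec_succ {n : ℕ} (z : Fin n → Circle) (c : Fin n) :
    torusVec z c.succ = (z c : ℂ).im := rfl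

lemma circle_re_le_one (z : Circle) : (z : ℂ).re ≤ 1 := by
  have := Complex.re_le_norm (z : ℂ)
  rwa [Circle.norm_coe] at this

lemma sum_re_le {n : ℕ} (z : Fin n → Circle) (c : Fin n) :
    ∑ d, (z d : ℂ).re ≤ (n - 1) + (z c : ℂ).re := by
  rw [← Finset.sum_erase_add _ _ (Finset.mem_univ c)]
  have h : ∑ d ∈ Finset.univ.erase c, (z d : ℂ).re ≤ ∑ d ∈ Finset.univ.erase c, (1 : ℝ) :=
    Finset.sum_le_sum fun d _ => circle_re_le_one _
  have hn : 1 ≤ n := by have := c.2; omega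
  simp only [Finset.sum_const, Finset.card_erase_of_mem (Finset.mem_univ c), Finset.card_univ,
    Fintype.card_fin, nsmul_eq_mul, Nat.cast_sub hn, Nat.cast_one, mul_one] at h
  linarith

lemma torusVec_ne_zero {n : ℕ} (z : Fin n → Circle) : torusVec z ≠ 0 := by
  intro h
  have him : ∀ c, (z c : ℂ).im = 0 := fun c => by rw [← torusVec_succ, h]; rfl
  have hre : ∑ c, (z c : ℂ).re - (n - 1) = 0 := by rw [← torusVec_zero, h]; rfl
  have hsq : ∀ c, (z c : ℂ).re = 1 ∨ (z c : ℂ).re = -1 := by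
    intro c
    have h1 := Circle.normSq_coe (z c)
    rw [Complex.normSq_apply, him c] at h1
    exact mul_self_eq_one_iff.1 (by linarith)
  by_cases hall : ∀ c, (z c : ℂ).re = 1
  · rw [Finset.sum_congr rfl fun c _ => hall c] at hre
    simp at hre
  · push Not at hall
    obtain ⟨c, hc⟩ := hall
    have h1 := sum_re_le z c
    rw [(hsq c).resolve_left hc] at h1
    linarith

/-- The map from the `n`-torus to `Sⁿ` obtained by normalising `torusVec`. -/
noncomputable def torusMap {n : ℕ} (z : Fin n → Circle) : Sph n :=
  ⟨‖torusVec z‖⁻¹ • torusVec z, by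
    rw [mem_sphere_zero_iff_norm, norm_smul, norm_inv, norm_norm,
      inv_mul_cancel₀ (norm_ne_zero_iff.2 (torusVec_ne_zero z))]⟩

lemma continuous_torusMap {n : ℕ} : Continuous (torusMap (n := n)) := by
  have h : Continuous (torusVec (n := n)) := by
    unfold torusVec
    refine (PiLp.continuous_toLp 2 _).comp (continuous_pi fun i => ?_)
    refine Fin.cases ?_ (fun c => ?_) i
    · simp only [Fin.cons_zero]
      fun_prop
    · simp only [Fin.cons_succ]
      fun_prop
  exact Continuous.subtype_mk
    ((h.norm.inv₀ fun z => norm_ne_zero_iff.2 (torusVec_ne_zero z)).smul h) _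

lemma torusMap_pos_iff {n : ℕ} (z : Fin n → Circle) (i : Fin (n + 1)) :
    0 < (torusMap z).1 i ↔ 0 < torusVec z i := by
  have : 0 < ‖torusVec z‖⁻¹ := inv_pos.2 (norm_pos_iff.2 (torusVec_ne_zero z))
  change 0 < ‖torusVec z‖⁻¹ * torusVec z i ↔ _
  exact mul_pos_iff_of_pos_left this

/-- The restriction of `torusMap` to the grid of `m`-th roots of unity. -/
noncomputable def gridMap {n m : ℕ} [NeZero m] (v : Fin n → ZMod m) : Sph n :=
  torusMap fun c => ZMod.toCircle (v c)

/-- On a fine grid, `gridMap` moves neighbouring points by little. -/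
lemma exists_fine_grid (n : ℕ) {δ : ℝ} (hδ : 0 < δ) :
    ∃ (m : ℕ) (_ : NeZero m), 4 ≤ m ∧ ∀ v w : Fin n → ZMod m,
      (∀ c, w c = v c ∨ w c = v c + 1 ∨ v c = w c + 1) → dist (gridMap v) (gridMap w) < δ := by
  obtain ⟨η, hη, huc⟩ := Metric.uniformContinuous_iff.1
    (CompactSpace.uniformContinuous_of_continuous (continuous_torusMap (n := n))) _ hδ
  obtain ⟨r, hr⟩ := exists_nat_gt (2 * Real.pi / η)
  refine ⟨r + 4, inferInstance, by omega, fun v w h => huc ((dist_pi_lt_iff hη).2 fun c => ?_)⟩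
  have hlt : 2 * Real.pi / ((r + 4 : ℕ) : ℝ) < η := by
    have h4 : (0 : ℝ) < ((r + 4 : ℕ) : ℝ) := by positivity
    rw [div_lt_iff₀ h4]
    rw [div_lt_iff₀ hη] at hr
    push_cast
    nlinarith
  rcases h c with h | h | h
  · rw [h, dist_self]; exact hη
  · rw [h, dist_comm]; exact (dist_toCircle_add_one _).trans_lt hlt
  · rw [h]; exact (dist_toCircle_add_one _).trans_lt hlt

lemma label_gridMap_succ {n m : ℕ} [NeZero m] {v : Fin n → ZMod m} {c : Fin n} :
    label (gridMap v) c.succ ≠ 0 ↔ 0 < (ZMod.toCircle (v c) : ℂ).im ∧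
      ∀ d, c < d → (ZMod.toCircle (v d) : ℂ).im ≤ 0 := by
  rw [label_ne_zero]
  have h : ∀ i, (gridMap v).1 i ≤ 0 ↔ torusVec (fun c => ZMod.toCircle (v c)) i ≤ 0 := fun i => by
    rw [← not_lt, ← not_lt, gridMap, torusMap_pos_iff]
  simp only [h]
  rw [gridMap, torusMap_pos_iff, torusVec_succ, Fin.forall_fin_succ]
  simp [torusVec_succ]

lemma label_gridMap_zero {n m : ℕ} [NeZero m] {v : Fin n → ZMod m} :
    label (gridMap v) 0 ≠ 0 ↔ (n - 1 : ℝ) < ∑ c, (ZMod.toCircle (v c) : ℂ).re ∧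
      ∀ d, (ZMod.toCircle (v d) : ℂ).im ≤ 0 := by
  rw [label_ne_zero]
  have h : ∀ i, (gridMap v).1 i ≤ 0 ↔ torusVec (fun c => ZMod.toCircle (v c)) i ≤ 0 := fun i => by
    rw [← not_lt, ← not_lt, gridMap, torusMap_pos_iff]
  simp only [h]
  rw [gridMap, torusMap_pos_iff, torusVec_zero, Fin.forall_fin_succ, sub_pos]
  simp [torusVec_succ]

/-- A simplex increments the `c`-th coordinate of `a` at time `t c`, and its vertices at times
`o, …, o + n` are considered. If `orient` does not vanish on their images, then all colours occur.
The colour `0` puts some vertex in the right half-planes and outside the upper ones, and the colour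
`c + 1` puts the `c`-th coordinate in the upper half-plane at another vertex, so that `a c = 0`.
The colour `c + 1` then requires a vertex at which `c` is already incremented and no later
coordinate is; hence the increments happen in increasing order, one at a time. -/
lemma eq_of_orient_ne_zero {n m : ℕ} [NeZero m] (hm4 : 4 ≤ m) (a : Fin n → ZMod m) (t : Fin n → ℕ)
    (o : ℕ)
    (h : orient n (fun i => gridMap fun c => if t c < o + i then a c + 1 else a c) ≠ 0) :
    a = 0 ∧ ∀ c, t c = o + c := by
  have hhit : ∀ l : Fin (n + 1), ∃ r : Fin (n + 1),
      label (gridMap fun c => if t c < o + r then a c + 1 else a c) l ≠ 0 := by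
    intro l
    by_contra! h0
    exact h (Matrix.det_eq_zero_of_column_eq_zero l h0)
  obtain ⟨r₀, hr₀⟩ := hhit 0
  rw [label_gridMap_zero] at hr₀
  obtain ⟨hre, him⟩ := hr₀
  have hre' : ∀ c, 0 < (ZMod.toCircle (if t c < o + r₀ then a c + 1 else a c) : ℂ).re := fun c => by
    have := sum_re_le (fun c => ZMod.toCircle (if t c < o + (r₀ : ℕ) then a c + 1 else a c)) c
    linarith
  have hone := im_toCircle_one_pos hm4
  have hzero : (ZMod.toCircle (0 : ZMod m) : ℂ).im = 0 := by simp
  -- the `c`-th coordinate takes only the values `a c` and `a c + 1`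
  have ha : ∀ c, a c = 0 := by
    intro c
    obtain ⟨r, hr⟩ := hhit c.succ
    rw [label_gridMap_succ] at hr
    have h1 := hr.1
    have h2 := him c
    have h3 := hre' c
    split_ifs at h1 h2 h3 with h4 h5
    · exact absurd h2 (not_le.2 h1)
    · exact eq_zero_of_im_nonpos_of_im_pos h2 h1
    · exact absurd (re_nonpos_of_im_pos_of_im_nonpos hm4 h1 h2) (not_le.2 h3)
    · exact absurd h2 (not_le.2 h1)
  have hsign : ∀ c (r : ℕ),
      0 < (ZMod.toCircle (if t c < o + r then a c + 1 else a c) : ℂ).im ↔ t c < o + r := by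
    intro c r
    rw [ha c]
    split_ifs with h
    · simpa [h] using hone
    · simp [h]
  have hlow : ∀ c, o ≤ t c := by
    intro c
    have := mt (hsign c r₀).2 (not_lt.2 (him c))
    omega
  have hex : ∀ c, ∃ r : Fin (n + 1), t c < o + r ∧ ∀ d, c < d → o + r ≤ t d := by
    intro c
    obtain ⟨r, hr⟩ := hhit c.succ
    rw [label_gridMap_succ] at hr
    refine ⟨r, (hsign c r).1 hr.1, fun d hd => ?_⟩
    have := mt (hsign d r).2 (not_lt.2 (hr.2 d hd))
    omega
  have hlt : ∀ c, t c - o < n := by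
    intro c
    obtain ⟨r, hr, _⟩ := hex c
    have := r.2
    have := hlow c
    omega
  refine ⟨funext ha, fun c => ?_⟩
  have hmono : StrictMono fun c : Fin n => (⟨t c - o, hlt c⟩ : Fin n) := by
    intro c d hcd
    obtain ⟨r, hr, hr'⟩ := hex c
    have := hr' d hcd
    have := hlow c
    rw [Fin.mk_lt_mk]
    omega
  have hid : (fun c : Fin n => (⟨t c - o, hlt c⟩ : Fin n)) = id := by
    exact StrictMono.eq_id hmono
  have := congrArg Fin.val (congrFun hid c)
  have := hlow c
  simp only [id] at *
  omega

/-- On the simplex starting at `0` with increments in increasing order, the `r`-th vertex has the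
colour `r`, and `orient` takes the value `1`. -/
lemma orient_standard {n m : ℕ} [NeZero m] (hm4 : 4 ≤ m) (t : Fin n → ℕ) (o : ℕ)
    (ht : ∀ c, t c = o + c) :
    orient n (fun i => gridMap fun c => if t c < o + i then (0 : Fin n → ZMod m) c + 1
      else (0 : Fin n → ZMod m) c) = 1 := by
  have hone := im_toCircle_one_pos hm4
  have hzero : (ZMod.toCircle (0 : ZMod m) : ℂ).im = 0 := by simp
  have hdiag : ∀ r : Fin (n + 1), label (gridMap fun c => if t c < o + r then
      (0 : Fin n → ZMod m) c + 1 else (0 : Fin n → ZMod m) c) r ≠ 0 := by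
    intro r
    refine Fin.cases ?_ (fun r => ?_) r
    · rw [label_gridMap_zero]
      simp [ht]
    · rw [label_gridMap_succ]
      constructor
      · simpa [ht] using hone
      · intro d hd
        have : ¬ (d : ℕ) < r + 1 := by have := Fin.lt_def.1 hd; omega
        simp [ht, this]
  suffices hM : (Matrix.of fun r c : Fin (n + 1) => label (gridMap fun c =>
      if t c < o + r then (0 : Fin n → ZMod m) c + 1 else (0 : Fin n → ZMod m) c) c) = 1 from
    (congrArg Matrix.det hM).trans Matrix.det_one
  ext r c
  have hr := hdiag r
  rw [Matrix.of_apply]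
  rcases eq_or_ne r c with rfl | hrc
  · rw [Matrix.one_apply_eq]
    unfold label at hr ⊢
    split_ifs at hr ⊢ with h
    · rfl
    · exact absurd rfl hr
  · rw [Matrix.one_apply_ne hrc]
    by_contra hc
    rw [← ne_eq, label_ne_zero] at hc
    rw [label_ne_zero] at hr
    rcases lt_or_gt_of_ne hrc with hlt | hlt
    · exact absurd hc.1 (not_lt.2 (hr.2 c hlt))
    · exact absurd hr.1 (not_lt.2 (hc.2 r hlt))

/-! ### Lower bounds -/

lemma torusSum_congr {N m : ℕ} [NeZero m] {f g : (ℕ → Fin N → ZMod m) → ℤ}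
    (h : ∀ v π, f (vert v π) = g (vert v π)) : torusSum f = torusSum g := by
  unfold torusSum
  simp only [h]

lemma torusSum_add {N m : ℕ} [NeZero m] (f g : (ℕ → Fin N → ZMod m) → ℤ) :
    torusSum (fun x => f x + g x) = torusSum f + torusSum g := by
  simp only [torusSum, mul_add, Finset.sum_add_distrib]

lemma torusSum_neg {N m : ℕ} [NeZero m] (f : (ℕ → Fin N → ZMod m) → ℤ) :
    torusSum (fun x => -f x) = -torusSum f := by
  simp only [torusSum, mul_neg, Finset.sum_neg_distrib]

lemma torusSum_eq_single {N m : ℕ} [NeZero m] (f : (ℕ → Fin N → ZMod m) → ℤ)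
    (π₀ : Equiv.Perm (Fin N)) (h : ∀ v π, f (vert v π) ≠ 0 → v = 0 ∧ π = π₀) :
    torusSum f = (Equiv.Perm.sign π₀ : ℤ) * f (vert 0 π₀) := by
  unfold torusSum
  rw [Finset.sum_eq_single π₀, Finset.sum_eq_single 0]
  · intro v _ hv
    by_contra hne
    exact hv (h v π₀ (right_ne_zero_of_mul hne)).1
  · simp
  · intro π _ hπ
    refine Finset.sum_eq_zero fun v _ => ?_
    by_contra hne
    exact hπ (h v π (right_ne_zero_of_mul hne)).2
  · simp

lemma vert_close {N m : ℕ} (v : Fin N → ZMod m) (π : Equiv.Perm (Fin N)) (i j : ℕ) (c : Fin N) :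
    vert v π j c = vert v π i c ∨ vert v π j c = vert v π i c + 1 ∨
      vert v π i c = vert v π j c + 1 := by
  unfold vert
  split_ifs <;> simp

/-- No motion planner exists over the whole of `Sⁿ × Sⁿ`: it would make the two pullbacks of
`orient` cohomologous, but on `Tⁿ → Sⁿ × pt` they evaluate to `1` and `0`. -/
theorem not_hasMotionPlanner_univ {k : ℕ} :
    ¬ HasMotionPlanner (Set.univ : Set (Sph (k + 1) × Sph (k + 1))) := by
  intro hU
  obtain ⟨β, hβ, δ, hδ, h⟩ := exists_primitive hU isCompact_univ le_rfl
  obtain ⟨m, _, hm4, hm⟩ := exists_fine_grid (k + 1) hδ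
  set F : (Fin (k + 1) → ZMod m) → Sph (k + 1) × Sph (k + 1) :=
    fun v => (gridMap v, gridMap (0 : Fin (k + 1) → ZMod m)) with hF
  have h0 : torusSum (cob (k + 1) fun x : ℕ → Fin (k + 1) → ZMod m => β (F ∘ x)) = 0 :=
    torusSum_cob _ fun x y hxy => hβ _ _ fun i hi => by simp [hxy i hi]
  have h1 : torusSum (cob (k + 1) fun x : ℕ → Fin (k + 1) → ZMod m => β (F ∘ x)) =
      torusSum fun x : ℕ → Fin (k + 1) → ZMod m =>
        -orient (k + 1) fun i => gridMap (x i) := by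
    refine torusSum_congr fun v π => ?_
    have h2 := h (F ∘ vert v π) (fun _ => Set.mem_univ _) fun i j => by
      rw [Prod.dist_eq]
      exact max_lt (hm _ _ (vert_close v π i j)) ((dist_self _).trans_lt hδ)
    have h3 : orient (k + 1) (fun i => ((F ∘ vert v π) i).2) = 0 := orient_const _
    rw [h3, zero_sub] at h2
    exact h2.symm
  have hvert : ∀ (v : Fin (k + 1) → ZMod m) (π : Equiv.Perm (Fin (k + 1))),
      (fun i => gridMap (vert v π i)) =
        fun i : ℕ => gridMap fun c => if (π.symm c : ℕ) < 0 + i then v c + 1 else v c := by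
    intro v π
    simp only [zero_add]
    rfl
  have hstd := orient_standard hm4
    (fun c : Fin (k + 1) => ((1 : Equiv.Perm (Fin (k + 1))).symm c : ℕ)) 0 fun c => (zero_add _).symm
  rw [h1, torusSum_neg, torusSum_eq_single (m := m) _ 1] at h0
  · rw [hvert, hstd] at h0
    simp at h0
  · intro v π hne
    rw [hvert] at hne
    obtain ⟨hv, hπ⟩ := eq_of_orient_ne_zero hm4 v _ 0 hne
    refine ⟨hv, ?_⟩
    have : π.symm = 1 := by
      ext c
      simpa using hπ c
    exact congrArg Equiv.symm this

lemma finRotate_pow_val (N j : ℕ) (i : Fin (N + 1)) :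
    ((((finRotate (N + 1)) ^ j) i : Fin (N + 1)) : ℕ) = (i + j) % (N + 1) := by
  induction j with
  | zero => simp [Nat.mod_eq_of_lt i.2]
  | succ j ih =>
    rw [pow_succ', Equiv.Perm.mul_apply, finRotate_apply, Fin.val_add, ih, Fin.val_one']
    simp [add_assoc]

/-- For `n` even, two motion planners do not cover `Sⁿ × Sⁿ`: the square of the difference of the
pullbacks of `orient` would be a coboundary, but it evaluates to `-2` on `Tⁿ × Tⁿ → Sⁿ × Sⁿ`. -/
theorem not_two_cover {k : ℕ} (hk : Even (k + 1)) (U : Fin 2 → Set (Sph (k + 1) × Sph (k + 1)))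
    (hUo : ∀ i, IsOpen (U i)) (hcov : ⋃ i, U i = Set.univ) (hU : ∀ i, HasMotionPlanner (U i)) :
    False := by
  -- shrink the cover, so that `exists_primitive` applies to the closures of the smaller sets
  obtain ⟨V, hVU, hVo, hVcl⟩ := exists_iUnion_eq_closure_subset hUo
    (fun _ => Set.toFinite _) hcov
  obtain ⟨δ₀, hδ₀, hleb⟩ := lebesgue_number_lemma_of_metric
    (isCompact_univ (X := Sph (k + 1) × Sph (k + 1))) hVo hVU.ge
  choose β hβ δ hδ hprim using fun i =>
    exists_primitive (hU i) (isClosed_closure.isCompact (s := closure (V i))) (hVcl i)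
  have hε : (0 : ℝ) < 1 / ((k + 1 : ℕ) + 1) := by positivity
  obtain ⟨η, hη, hη0, hη1, hη2, hη3⟩ : ∃ η > 0, η ≤ δ₀ ∧ η ≤ δ 0 ∧ η ≤ δ 1 ∧
      η ≤ (1 : ℝ) / ((k + 1 : ℕ) + 1) :=
    ⟨min (min δ₀ (δ 0)) (min (δ 1) _), lt_min (lt_min hδ₀ (hδ 0)) (lt_min (hδ 1) hε),
      (min_le_left _ _).trans (min_le_left _ _), (min_le_left _ _).trans (min_le_right _ _),
      (min_le_right _ _).trans (min_le_left _ _), (min_le_right _ _).trans (min_le_right _ _)⟩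
  set z : (ℕ → Sph (k + 1) × Sph (k + 1)) → ℤ := fun x =>
    orient (k + 1) (fun i => (x i).2) - orient (k + 1) (fun i => (x i).1) with hz
  obtain ⟨w, hw, hcup⟩ := cup_self_eq_cob k
    {x : ℕ → Sph (k + 1) × Sph (k + 1) | ∀ i j, dist (x i) (x j) < η}
    (fun x hx φ i j => hx (φ i) (φ j)) z (β 0) (β 1)
    (fun x y hxy => by
      simp only [hz]
      rw [arity_orient (k + 1) (fun i => (x i).2) (fun i => (y i).2) fun i hi => by rw [hxy i hi],
        arity_orient (k + 1) (fun i => (x i).1) (fun i => (y i).1) fun i hi => by rw [hxy i hi]])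
    (hβ 0) (hβ 1)
    (fun x hx => by
      have e1 := cob_orient (fun i => (x i).2) fun i j =>
        ((le_max_right _ _).trans_lt (hx i j)).trans_le hη3
      have e2 := cob_orient (fun i => (x i).1) fun i j =>
        ((le_max_left _ _).trans_lt (hx i j)).trans_le hη3
      rw [← sub_zero (0 : ℤ)]
      nth_rw 1 [← e1]
      rw [← e2]
      simp only [cob, ← Finset.sum_sub_distrib, ← mul_sub]
      rfl)
    (fun x hx => by
      obtain ⟨i, hi⟩ := hleb (x 0) (Set.mem_univ _)
      have hmem : ∀ j, x j ∈ closure (V i) := fun j =>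
        subset_closure (hi (Metric.mem_ball.2 ((hx j 0).trans_le hη0)))
      have hall := fun φ : ℕ → ℕ => fun hsm => hprim i (x ∘ φ) (fun j => hmem (φ j)) hsm
      fin_cases i
      · exact Or.inl fun φ => hall φ fun a b => (hx (φ a) (φ b)).trans_le hη1
      · exact Or.inr fun φ => hall φ fun a b => (hx (φ a) (φ b)).trans_le hη2)
  obtain ⟨m, _, hm4, hm⟩ := exists_fine_grid (k + 1) hη
  set F : (Fin (k + 1 + (k + 1)) → ZMod m) → Sph (k + 1) × Sph (k + 1) :=
    fun v => (gridMap fun c => v (Fin.castAdd (k + 1) c), gridMap fun c => v (Fin.natAdd (k + 1) c))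
    with hF
  have h0 : torusSum (cob (k + 1 + k + 1) fun x : ℕ → Fin (k + 1 + k + 1) → ZMod m => w (F ∘ x)) =
      0 :=
    torusSum_cob _ fun x y hxy => hw _ _ fun i hi => by
      simp only [Function.comp]
      rw [hxy i (by omega)]
  -- `orient` on the two factors, evaluated on the vertices of a simplex from the `o`-th onwards
  set X : ℕ → (ℕ → Fin (k + 1 + (k + 1)) → ZMod m) → ℤ := fun o x =>
    orient (k + 1) fun i => gridMap fun c => x (o + i) (Fin.castAdd (k + 1) c) with hX
  set Y : ℕ → (ℕ → Fin (k + 1 + (k + 1)) → ZMod m) → ℤ := fun o x =>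
    orient (k + 1) fun i => gridMap fun c => x (o + i) (Fin.natAdd (k + 1) c) with hY
  have hXne : ∀ o v π, X o (vert v π) ≠ 0 → (∀ c, v (Fin.castAdd (k + 1) c) = 0) ∧
      ∀ c : Fin (k + 1), (π.symm (Fin.castAdd (k + 1) c) : ℕ) = o + c := fun o v π hne => by
    obtain ⟨hv, hπ⟩ := eq_of_orient_ne_zero hm4 (fun c => v (Fin.castAdd (k + 1) c))
      (fun c => π.symm (Fin.castAdd (k + 1) c)) o hne
    exact ⟨congrFun hv, hπ⟩
  have hYne : ∀ o v π, Y o (vert v π) ≠ 0 → (∀ c, v (Fin.natAdd (k + 1) c) = 0) ∧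
      ∀ c : Fin (k + 1), (π.symm (Fin.natAdd (k + 1) c) : ℕ) = o + c := fun o v π hne => by
    obtain ⟨hv, hπ⟩ := eq_of_orient_ne_zero hm4 (fun c => v (Fin.natAdd (k + 1) c))
      (fun c => π.symm (Fin.natAdd (k + 1) c)) o hne
    exact ⟨congrFun hv, hπ⟩
  -- the same coordinates cannot be incremented both in the front and in the back half
  have hXX : ∀ v π, X 0 (vert v π) * X (k + 1) (vert v π) = 0 := fun v π => by
    by_contra hne
    have e1 := (hXne _ _ _ (left_ne_zero_of_mul hne)).2 0
    have e2 := (hXne _ _ _ (right_ne_zero_of_mul hne)).2 0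
    omega
  have hYY : ∀ v π, Y 0 (vert v π) * Y (k + 1) (vert v π) = 0 := fun v π => by
    by_contra hne
    have e1 := (hYne _ _ _ (left_ne_zero_of_mul hne)).2 0
    have e2 := (hYne _ _ _ (right_ne_zero_of_mul hne)).2 0
    omega
  -- the exchange of the two blocks of coordinates, an even permutation since `k + 1` is even
  set ρ : Equiv.Perm (Fin (k + 1 + (k + 1))) := (finRotate (k + 1 + k + 1)) ^ (k + 1) with hρ
  have hρ1 : ∀ c : Fin (k + 1), (ρ (Fin.castAdd (k + 1) c) : ℕ) = k + 1 + c := fun c => by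
    refine (finRotate_pow_val _ _ _).trans ?_
    rw [Fin.val_castAdd, Nat.mod_eq_of_lt (by omega), add_comm]
  have hρ2 : ∀ c : Fin (k + 1), (ρ (Fin.natAdd (k + 1) c) : ℕ) = c := fun c => by
    refine (finRotate_pow_val _ _ _).trans ?_
    rw [Fin.val_natAdd, show k + 1 + (c : ℕ) + (k + 1) = c + (k + 1 + k + 1) by ring,
      Nat.add_mod_right, Nat.mod_eq_of_lt (by omega)]
  have hρs : Equiv.Perm.sign ρ = 1 := by
    rw [hρ, map_pow]
    obtain ⟨r, hr⟩ := hk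
    rw [show ∀ u : ℤˣ, u ^ (k + 1) = 1 from fun u => by
      rw [hr, ← two_mul, pow_mul, Int.units_sq, one_pow]]
  have hXY : torusSum (fun x => X 0 x * Y (k + 1) x) = 1 := by
    rw [torusSum_eq_single _ 1]
    · have e1 : X 0 (vert 0 1) = 1 := orient_standard hm4 _ 0 fun c => (zero_add _).symm
      have e2 : Y (k + 1) (vert 0 1) = 1 := orient_standard hm4 _ (k + 1) fun c => rfl
      rw [e1, e2]
      simp
    · intro v π hne
      have e1 := hXne _ _ _ (left_ne_zero_of_mul hne)
      have e2 := hYne _ _ _ (right_ne_zero_of_mul hne)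
      refine ⟨funext (Fin.addCases e1.1 e2.1), congrArg Equiv.symm (?_ : π.symm = 1)⟩
      refine Equiv.ext (Fin.addCases (fun c => ?_) fun c => ?_)
      · exact Fin.ext (by simpa using e1.2 c)
      · exact Fin.ext (e2.2 c)
  have hYX : torusSum (fun x => Y 0 x * X (k + 1) x) = 1 := by
    rw [torusSum_eq_single _ ρ.symm]
    · have e1 : Y 0 (vert 0 ρ.symm) = 1 :=
        orient_standard hm4 _ 0 fun c => (hρ2 c).trans (zero_add _).symm
      have e2 : X (k + 1) (vert 0 ρ.symm) = 1 := orient_standard hm4 _ (k + 1) hρ1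
      rw [e1, e2, Equiv.Perm.sign_symm, hρs]
      simp
    · intro v π hne
      have e1 := hYne _ _ _ (left_ne_zero_of_mul hne)
      have e2 := hXne _ _ _ (right_ne_zero_of_mul hne)
      refine ⟨funext (Fin.addCases e2.1 e1.1), congrArg Equiv.symm (?_ : π.symm = ρ)⟩
      refine Equiv.ext (Fin.addCases (fun c => ?_) fun c => ?_)
      · exact Fin.ext ((e2.2 c).trans (hρ1 c).symm)
      · exact Fin.ext (((e1.2 c).trans (zero_add _)).trans (hρ2 c).symm)
  have h1 : torusSum (cob (k + 1 + k + 1) fun x : ℕ → Fin (k + 1 + k + 1) → ZMod m => w (F ∘ x)) =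
      torusSum fun x => -(X 0 x * Y (k + 1) x) + -(Y 0 x * X (k + 1) x) := by
    refine torusSum_congr fun v π => ?_
    have h2 := hcup (F ∘ vert v π) fun i j => by
      rw [Prod.dist_eq]
      exact max_lt (hm _ _ fun c => vert_close v π i j _) (hm _ _ fun c => vert_close v π i j _)
    have h3 : cup (k + 1) z z (F ∘ vert v π) = (Y 0 (vert v π) - X 0 (vert v π)) *
        (Y (k + 1) (vert v π) - X (k + 1) (vert v π)) := by
      simp only [cup, hz, hX, hY, zero_add]
      rfl
    rw [show 2 * k + 2 = k + 1 + k + 1 by ring] at h2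
    refine (h2.symm.trans h3).trans ?_
    linear_combination hXX v π + hYY v π
  rw [h1, torusSum_add, torusSum_neg, torusSum_neg, hXY, hYX] at h0
  norm_num at h0

/-! ### Upper bounds -/

/-- The first projection, restricted to `U`. -/
def fstOn {n : ℕ} (U : Set (Sph n × Sph n)) : C(U, Sph n) := ⟨fun p => p.1.1, by fun_prop⟩

/-- The second projection, restricted to `U`. -/
def sndOn {n : ℕ} (U : Set (Sph n × Sph n)) : C(U, Sph n) := ⟨fun p => p.1.2, by fun_prop⟩

/-- Currying a homotopy between the two projections gives a motion planner. -/
lemma hasMotionPlanner_of_homotopic {n : ℕ} {U : Set (Sph n × Sph n)}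
    (h : (fstOn U).Homotopic (sndOn U)) : HasMotionPlanner U := by
  obtain ⟨H⟩ := h
  exact ⟨(H.toContinuousMap.comp ContinuousMap.prodSwap).curry,
    fun p => ⟨H.apply_zero p, H.apply_one p⟩⟩

/-- The segment from `f y` to `g y` avoids the origin and can be normalised. -/
lemma homotopic_of_ne_neg {n : ℕ} {Y : Type*} [TopologicalSpace Y] (f g : C(Y, Sph n))
    (h : ∀ y, (g y).1 ≠ -(f y).1) : f.Homotopic g := by
  set L : I × Y → EuclideanSpace ℝ (Fin (n + 1)) :=
    fun p => (1 - p.1 : ℝ) • (f p.2).1 + (p.1 : ℝ) • (g p.2).1 with hL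
  have hLc : Continuous L := by fun_prop
  have hf : ∀ y, ‖(f y).1‖ = 1 := fun y => mem_sphere_zero_iff_norm.1 (f y).2
  have hg : ∀ y, ‖(g y).1‖ = 1 := fun y => mem_sphere_zero_iff_norm.1 (g y).2
  have hL0 : ∀ p, L p ≠ 0 := by
    intro p hp
    have h1 : (p.1 : ℝ) • (g p.2).1 = -((1 - p.1 : ℝ) • (f p.2).1) :=
      eq_neg_of_add_eq_zero_right hp
    have h2 := congrArg norm h1
    rw [norm_neg, norm_smul, norm_smul, hf, hg, Real.norm_of_nonneg p.1.2.1,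
      Real.norm_of_nonneg (sub_nonneg.2 p.1.2.2), mul_one, mul_one] at h2
    have h3 : (p.1 : ℝ) ≠ 0 := by
      intro h0
      rw [h0] at h2
      norm_num at h2
    rw [← h2, ← smul_neg] at h1
    exact h p.2 (smul_right_injective _ h3 h1)
  refine ⟨⟨⟨fun p => ⟨‖L p‖⁻¹ • L p, ?_⟩, ?_⟩, fun y => ?_, fun y => ?_⟩⟩
  · rw [mem_sphere_zero_iff_norm, norm_smul, norm_inv, norm_norm,
      inv_mul_cancel₀ (norm_ne_zero_iff.2 (hL0 p))]
  · exact Continuous.subtype_mk ((hLc.norm.inv₀ fun p => norm_ne_zero_iff.2 (hL0 p)).smul hLc) _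
  · ext1
    simp [hL, hf]
  · ext1
    simp [hL, hg]

/-- The pairs of points that are not antipodal. -/
def nonAntipodal (n : ℕ) : Set (Sph n × Sph n) := {p | p.2.1 ≠ -p.1.1}

/-- The pairs of points both different from `-w`. -/
def awayFrom {n : ℕ} (w : Sph n) : Set (Sph n × Sph n) := {p | w.1 ≠ -p.1.1 ∧ p.2.1 ≠ -w.1}

lemma isOpen_nonAntipodal (n : ℕ) : IsOpen (nonAntipodal n) :=
  isOpen_ne_fun (by fun_prop) (by fun_prop)

lemma isOpen_awayFrom {n : ℕ} (w : Sph n) : IsOpen (awayFrom w) :=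
  (isOpen_ne_fun (by fun_prop) (by fun_prop)).inter (isOpen_ne_fun (by fun_prop) (by fun_prop))

lemma hasMotionPlanner_nonAntipodal (n : ℕ) : HasMotionPlanner (nonAntipodal n) :=
  hasMotionPlanner_of_homotopic (homotopic_of_ne_neg _ _ fun p => p.2)

lemma hasMotionPlanner_awayFrom {n : ℕ} (w : Sph n) : HasMotionPlanner (awayFrom w) :=
  hasMotionPlanner_of_homotopic
    ((homotopic_of_ne_neg _ (ContinuousMap.const _ w) fun p => p.2.1).trans
      (homotopic_of_ne_neg _ _ fun p => p.2.2))

/-- The `i`-th standard basis vector, as a point of the sphere. -/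
noncomputable def basisPt {n : ℕ} (i : Fin (n + 1)) : Sph n :=
  ⟨EuclideanSpace.single i 1, by simp⟩

lemma three_cover {n : ℕ} (hn : 1 ≤ n) :
    nonAntipodal n ∪ awayFrom (basisPt 0) ∪ awayFrom (basisPt (Fin.last n)) = Set.univ := by
  refine Set.eq_univ_of_forall fun p => ?_
  by_contra hp
  simp only [Set.mem_union, not_or, nonAntipodal, awayFrom, Set.mem_ofPred_eq, not_not,
    not_and_or] at hp
  obtain ⟨⟨h, h0⟩, h1⟩ := hp
  have hl : Fin.last n ≠ 0 := by
    rw [Ne, Fin.ext_iff]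
    simp
    omega
  have e0 : p.1.1 (Fin.last n) = 0 := by
    rcases h0 with h0 | h0
    · have := congrArg (fun v => v (Fin.last n)) h0
      simpa [basisPt, hl] using this
    · rw [h, neg_inj] at h0
      rw [h0]
      simp [basisPt, hl]
  rcases h1 with h1 | h1
  · have := congrArg (fun v => v (Fin.last n)) h1
    simp [basisPt, e0] at this
  · rw [h, neg_inj] at h1
    rw [h1] at e0
    simp [basisPt] at e0

/-- The involution exchanging the indices `2j` and `2j + 1`. -/
def pairSwap {n : ℕ} (hn : Odd n) (i : Fin (n + 1)) : Fin (n + 1) :=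
  if h : (i : ℕ) % 2 = 0 then ⟨i + 1, by obtain ⟨r, hr⟩ := hn; omega⟩ else ⟨i - 1, by omega⟩

lemma pairSwap_pairSwap {n : ℕ} (hn : Odd n) (i : Fin (n + 1)) :
    pairSwap hn (pairSwap hn i) = i := by
  unfold pairSwap
  ext
  split_ifs with h1 h2 h2 <;> simp at h2 ⊢ <;> omega

lemma neg_one_pow_pairSwap {n : ℕ} (hn : Odd n) (i : Fin (n + 1)) :
    (-1 : ℝ) ^ (pairSwap hn i : ℕ) = -(-1) ^ (i : ℕ) := by
  unfold pairSwap
  split_ifs with h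
  · rw [pow_succ]; ring
  · obtain ⟨j, hj⟩ : ∃ j, (i : ℕ) = j + 1 := ⟨i - 1, by omega⟩
    simp [hj, pow_succ]

/-- The map `(x₀, x₁, x₂, x₃, …) ↦ (x₁, -x₀, x₃, -x₂, …)` of an odd-dimensional sphere, a unit
tangent vector field. -/
noncomputable def rotate {n : ℕ} (hn : Odd n) : C(Sph n, Sph n) where
  toFun x := ⟨WithLp.toLp 2 fun i => (-1) ^ (i : ℕ) * x.1 (pairSwap hn i), by
    have hx : ‖x.1‖ = 1 := mem_sphere_zero_iff_norm.1 x.2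
    rw [mem_sphere_zero_iff_norm]
    refine Eq.trans ?_ hx
    rw [EuclideanSpace.norm_eq, EuclideanSpace.norm_eq]
    congr 1
    simp only [norm_mul, norm_pow, norm_neg, norm_one, one_pow, one_mul]
    exact Equiv.sum_comp (Function.Involutive.toPerm _ (pairSwap_pairSwap hn))
      fun i => ‖x.1 i‖ ^ 2⟩
  continuous_toFun := by
    refine Continuous.subtype_mk ((PiLp.continuous_toLp 2 _).comp (continuous_pi fun i => ?_)) _
    fun_prop

/-- `rotate` moves every point off itself (`c = 1`) and its antipode (`c = -1`). -/
lemma rotate_ne {n : ℕ} (hn : Odd n) (x : Sph n) {c : ℝ} (hc : c * c = 1) :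
    (rotate hn x).1 ≠ c • x.1 := by
  intro h
  have hi : ∀ i : Fin (n + 1), (-1) ^ (i : ℕ) * x.1 (pairSwap hn i) = c * x.1 i := fun i =>
    congrArg (fun v => v i) h
  have hx : x.1 = 0 := by
    ext i
    have h1 := hi i
    have h2 := hi (pairSwap hn i)
    rw [neg_one_pow_pairSwap, pairSwap_pairSwap] at h2
    have hs : ((-1 : ℝ) ^ (i : ℕ)) * (-1) ^ (i : ℕ) = 1 := by rw [← mul_pow]; simp
    rw [PiLp.zero_apply]
    linear_combination (-(1 / 2) * c) * h1 - (1 / 2 * (-1) ^ (i : ℕ)) * h2 -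
      (1 / 2 * x.1 i) * hs - (1 / 2 * x.1 i) * hc
  have := mem_sphere_zero_iff_norm.1 x.2
  rw [hx, norm_zero] at this
  exact zero_ne_one this

/-- On an odd-dimensional sphere one can move from `x` to `-x` through `rotate x`, and from there to
any `y ≠ x`. -/
lemma hasMotionPlanner_ne {n : ℕ} (hn : Odd n) :
    HasMotionPlanner {p : Sph n × Sph n | p.2.1 ≠ p.1.1} := by
  set U := {p : Sph n × Sph n | p.2.1 ≠ p.1.1}
  refine hasMotionPlanner_of_homotopic ?_
  have h1 : (fstOn U).Homotopic ((rotate hn).comp (fstOn U)) :=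
    homotopic_of_ne_neg _ _ fun p => by
      simpa using rotate_ne hn (fstOn U p) (c := -1) (by norm_num)
  have h2 : ((rotate hn).comp (fstOn U)).Homotopic ⟨fun p => -fstOn U p, by fun_prop⟩ :=
    homotopic_of_ne_neg _ _ fun p h => by
      refine rotate_ne hn (fstOn U p) (c := 1) (by norm_num) ?_
      simpa using h.symm
  refine (h1.trans h2).trans (homotopic_of_ne_neg _ _ fun p => ?_)
  change p.1.2.1 ≠ - -p.1.1.1
  rw [neg_neg]
  exact p.2

end TCSphere

open TCSphere

/-- The topological complexity of the `n`-sphere: `TC(Sⁿ) = 2` for `n` odd and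
`TC(Sⁿ) = 3` for `n` even. -/
theorem TC_sphere (n : ℕ) (hn : 1 ≤ n) :
    topologicalComplexity (Metric.sphere (0 : EuclideanSpace ℝ (Fin (n + 1))) 1) =
      if Odd n then 2 else 3 := by
  have hlow : ∀ k : ℕ, (∃ U : Fin k → Set (Sph n × Sph n),
      (∀ i, IsOpen (U i)) ∧ (⋃ i, U i) = Set.univ ∧ ∀ i, HasMotionPlanner (U i)) → 2 ≤ k := by
    rintro k ⟨U, _, hcov, hU⟩
    obtain ⟨d, rfl⟩ : ∃ d, n = d + 1 := ⟨n - 1, by omega⟩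
    by_contra! hk
    interval_cases k
    · rw [Set.iUnion_of_empty] at hcov
      exact Set.notMem_empty (basisPt 0, basisPt 0) (hcov ▸ Set.mem_univ _)
    · have h0 : U 0 = Set.univ := by
        rw [← hcov]
        exact (iSup_unique (f := U)).symm
      exact not_hasMotionPlanner_univ (h0 ▸ hU 0)
  split_ifs with hodd
  · refine le_antisymm (sInf_le ⟨2, rfl, ![nonAntipodal n, {p | p.2.1 ≠ p.1.1}], ?_, ?_, ?_⟩)
      (le_sInf ?_)
    · exact Fin.forall_fin_two.2 ⟨isOpen_nonAntipodal n, isOpen_ne_fun (by fun_prop) (by fun_prop)⟩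
    · refine Set.eq_univ_of_forall fun p => Set.mem_iUnion.2 ?_
      by_cases h : p.2.1 = p.1.1
      · refine ⟨0, fun h' => ?_⟩
        have hp : p.1.1 = 0 := by
          ext i
          have := congrArg (fun v => v i) (h.symm.trans h')
          rw [PiLp.neg_apply] at this
          rw [PiLp.zero_apply]
          linarith
        have := mem_sphere_zero_iff_norm.1 p.1.2
        rw [hp, norm_zero] at this
        exact zero_ne_one this
      · exact ⟨1, h⟩
    · exact Fin.forall_fin_two.2 ⟨hasMotionPlanner_nonAntipodal n, hasMotionPlanner_ne hodd⟩
    · rintro _ ⟨k, rfl, hk⟩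
      exact_mod_cast hlow k hk
  · refine le_antisymm (sInf_le ⟨3, rfl,
      ![nonAntipodal n, awayFrom (basisPt 0), awayFrom (basisPt (Fin.last n))], ?_, ?_, ?_⟩)
      (le_sInf ?_)
    · intro i
      fin_cases i
      exacts [isOpen_nonAntipodal n, isOpen_awayFrom _, isOpen_awayFrom _]
    · rw [← three_cover hn]
      ext p
      simp [Fin.exists_fin_succ, or_assoc]
    · intro i
      fin_cases i
      exacts [hasMotionPlanner_nonAntipodal n, hasMotionPlanner_awayFrom _,
        hasMotionPlanner_awayFrom _]
    · rintro _ ⟨k, rfl, hk⟩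
      have h2 := hlow k hk
      have h3 : k ≠ 2 := by
        rintro rfl
        obtain ⟨U, hUo, hcov, hU⟩ := hk
        obtain ⟨d, rfl⟩ : ∃ d, n = d + 1 := ⟨n - 1, by omega⟩
        exact not_two_cover (Nat.not_odd_iff_even.1 hodd) U hUo hcov hU
      exact_mod_cast (show 3 ≤ k by omega)
end

section
/- For any k ≥ 1 and n ≥ 1, the topological complexity of the Cartesian product of k copies of the sphere S^n equals TC((S^n)^k) = 2k + 1 if n is even, and TC((S^n)^k) = k + 1 if n is odd. -/
/-!
Upper bound. Over the sphere, `x` and `y` are joined by a short arc if `y ≠ -x`. If `v` is a tangent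
vector field on `Sⁿ` and `v x ≠ 0`, then `x` moves to `-x` through the direction of `v x`, and from
there by a short arc to any `y ≠ x`. For `n` odd there is such a field without zeros, and these two
open sets cover `Sⁿ × Sⁿ`. For `n` even the field `rot` vanishes only at the two poles, and a third
planner, which contracts the hemispheres, covers the pairs off the equator. On the power `(Sⁿ)ᵏ` the
planners are combined by a partition argument (`topologicalComplexity_pi_le`): `r + 1` planners on
`X` yield `k r + 1` planners on `Xᵏ`, indexed by the total of a multi-index.

Lower bound. This is the zero-divisor cup-length argument in Alexander–Spanier cohomology with
integer coefficients, which can be set up with bare functions of tuples of points. With `sᵢ` the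
indicator function of `0 ≤ xᵢ`, the cochain `δs₀ ∪ ⋯ ∪ δsₙ₋₁ ∪ sₙ` is a cocycle on `Sⁿ`, because near
each point some `sᵢ` is constant (`cyc_al`). Homotopic maps pull it back to cohomologous cocycles
(`exists_bound_of_homotopy`), so its zero-divisors `zd m` on `X × X`, `X = (Sⁿ)ᵏ`, become coboundaries
near closed subsets of an open set with a motion planner. If `r` such sets cover, then each product
of `r` zero-divisors is a coboundary (`bd_pr`, `bd_of_cover`).

To see that a product is not a coboundary it is evaluated on the fundamental cycle of a fine
triangulated torus mapped to `X × X`. Coboundaries evaluate to zero by Stokes' theorem (`ev_dd`,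
`ev_eventually_zero`). With an explicit map of degree `±1` from the torus to the sphere, the simplices
contributing to the product are those traversing the blocks of coordinates one after another in a
suitable order, starting at a fixed corner. For `n` odd only one order occurs, for the product of the
`k` zero-divisors. For `n` even a permutation of the blocks is an even permutation of the coordinates,
so that all contributions have the same sign even for the product of the `k` squares, which has `2k`
zero-divisors. This reflects the identity `(ω × 1 - 1 × ω)² = -2 (ω × ω)` for `ω` of even degree.
-/

open unitInterval

namespace TCSpheres

/-! ### Motion planners and the product inequality -/

theorem hasMotionPlanner_of_homotopic {X : Type*} [TopologicalSpace X] {U : Set (X × X)}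
    (h : ContinuousMap.Homotopic (⟨fun p : U => p.1.1, by fun_prop⟩ : C(U, X))
      ⟨fun p : U => p.1.2, by fun_prop⟩) : HasMotionPlanner U := by
  obtain ⟨H⟩ := h
  refine ⟨(H.toContinuousMap.comp ⟨Prod.swap, continuous_swap⟩).curry, fun p => ?_⟩
  exact ⟨H.apply_zero p, H.apply_one p⟩

/-- A motion planner over `U` is the same thing as a homotopy between the two projections of `U`
to `X`; this is the form in which planners are built and used below. -/
theorem homotopic_of_planner {X : Type*} [TopologicalSpace X] {U : Set (X × X)}
    (h : HasMotionPlanner U) :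
    ContinuousMap.Homotopic (⟨fun p : U => p.1.1, by fun_prop⟩ : C(U, X))
      ⟨fun p : U => p.1.2, by fun_prop⟩ := by
  obtain ⟨s, hs⟩ := h
  refine ⟨⟨s.uncurry.comp ⟨Prod.swap, continuous_swap⟩, fun p => (hs p).1, fun p => (hs p).2⟩⟩

theorem planner_mono {X : Type*} [TopologicalSpace X] {U V : Set (X × X)}
    (h : HasMotionPlanner V) (hUV : U ⊆ V) : HasMotionPlanner U := by
  obtain ⟨s, hs⟩ := h
  exact ⟨s.comp ⟨Set.inclusion hUV, continuous_inclusion hUV⟩, fun p => hs (Set.inclusion hUV p)⟩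

/-- Motion planners over pairwise disjoint open sets glue to one over their union. -/
theorem hasMotionPlanner_iUnion {X ι : Type*} [TopologicalSpace X] {W : ι → Set (X × X)}
    (hW : ∀ i, IsOpen (W i)) (hd : ∀ i j, i ≠ j → Disjoint (W i) (W j))
    (hp : ∀ i, HasMotionPlanner (W i)) : HasMotionPlanner (⋃ i, W i) := by
  choose s hs using hp
  have hS : ∀ x : ↥(⋃ i, W i), ∃ i, (Subtype.val ⁻¹' W i : Set ↥(⋃ i, W i)) ∈ nhds x := by
    intro x
    obtain ⟨i, hi⟩ := Set.mem_iUnion.1 x.2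
    exact ⟨i, ((hW i).preimage continuous_subtype_val).mem_nhds hi⟩
  let φ : ∀ i, C((Subtype.val ⁻¹' W i : Set ↥(⋃ i, W i)), C(unitInterval, X)) := fun i =>
    (s i).comp ⟨fun x => ⟨x.1.1, x.2⟩, by fun_prop⟩
  have hφ : ∀ i j x (hxi : x ∈ (Subtype.val ⁻¹' W i : Set ↥(⋃ i, W i)))
      (hxj : x ∈ (Subtype.val ⁻¹' W j : Set ↥(⋃ i, W i))), φ i ⟨x, hxi⟩ = φ j ⟨x, hxj⟩ := by
    intro i j x hxi hxj
    by_cases hij : i = j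
    · subst hij; rfl
    · exact absurd hxj (Set.disjoint_left.1 (hd i j hij) hxi)
  refine ⟨ContinuousMap.liftCover _ φ hφ hS, fun p => ?_⟩
  obtain ⟨i, hi⟩ := Set.mem_iUnion.1 p.2
  have := ContinuousMap.liftCover_coe (S := fun i => (Subtype.val ⁻¹' W i : Set ↥(⋃ i, W i)))
    (φ := φ) (hφ := hφ) (hS := hS) (i := i) ⟨p, hi⟩
  simp only at this
  rw [this]
  exact hs i ⟨p.1, hi⟩

/-- A planner on a power of `X`, assembled from planners on the coordinates. -/
theorem hasMotionPlanner_pi {X : Type*} [TopologicalSpace X] {k : ℕ}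
    {A : Fin k → Set (X × X)} (hA : ∀ m, HasMotionPlanner (A m)) :
    HasMotionPlanner {y : (Fin k → X) × (Fin k → X) | ∀ m, (y.1 m, y.2 m) ∈ A m} := by
  apply hasMotionPlanner_of_homotopic
  have := fun m => (homotopic_of_planner (hA m)).comp
    (ContinuousMap.Homotopic.refl (⟨fun p => ⟨(p.1.1 m, p.1.2 m), p.2 m⟩, by fun_prop⟩ :
      C({y : (Fin k → X) × (Fin k → X) | ∀ m, (y.1 m, y.2 m) ∈ A m}, A m)))
  exact ContinuousMap.Homotopic.pi this

/-- Product inequality for powers: if `X × X` is covered by the cozero sets of `r + 1` nonnegative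
continuous functions, each admitting a motion planner, then `TC(X ^ k) ≤ k r + 1`. A point of
`X ^ k × X ^ k` is sorted by a multi-index `J` maximizing the product of the weights; among
multi-indices of a fixed total the strict maximizers cut out pairwise disjoint open sets. -/
theorem topologicalComplexity_pi_le {X : Type*} [TopologicalSpace X] (k r : ℕ)
    (ρ : Fin (r + 1) → X × X → ℝ) (hc : ∀ i, Continuous (ρ i)) (h0 : ∀ i y, 0 ≤ ρ i y)
    (hpos : ∀ y, ∃ i, 0 < ρ i y) (hp : ∀ i, HasMotionPlanner {y | 0 < ρ i y}) :
    topologicalComplexity (Fin k → X) ≤ ((k * r + 1 : ℕ) : ℕ∞) := by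
  classical
  set f : (Fin k → Fin (r + 1)) → ((Fin k → X) × (Fin k → X)) → ℝ :=
    fun J y => ∏ m, ρ (J m) (y.1 m, y.2 m) with hf
  have hfc : ∀ J, Continuous (f J) := fun J =>
    continuous_finsetProd _ fun m _ => (hc _).comp (by fun_prop)
  set T : (Fin k → Fin (r + 1)) → ℕ := fun J => ∑ m, (J m : ℕ) with hT
  set W : (Fin k → Fin (r + 1)) → Set ((Fin k → X) × (Fin k → X)) :=
    fun J => {y | 0 < f J y} ∩ ⋂ J', {y | J' ≠ J → T J' = T J → f J' y < f J y} with hW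
  have hWo : ∀ J, IsOpen (W J) := by
    intro J
    refine (isOpen_lt continuous_const (hfc J)).inter (isOpen_iInter_of_finite fun J' => ?_)
    by_cases h1 : J' ≠ J <;> by_cases h2 : T J' = T J
    · simpa [h1, h2] using isOpen_lt (hfc J') (hfc J)
    all_goals simp [h1, h2]
  have hWp : ∀ J, HasMotionPlanner (W J) := by
    intro J
    refine planner_mono (hasMotionPlanner_pi (fun m => hp (J m))) ?_
    intro y hy m
    have h1 : 0 < f J y := hy.1
    refine lt_of_le_of_ne (h0 _ _) fun h => ?_
    rw [hf] at h1
    simp only at h1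
    rw [Finset.prod_eq_zero (Finset.mem_univ m) h.symm] at h1
    exact lt_irrefl _ h1
  refine sInf_le ⟨k * r + 1, rfl, fun l => ⋃ J : {J // T J = l}, W J.1,
    fun l => isOpen_iUnion fun J => hWo _, ?_, fun l => ?_⟩
  · refine Set.eq_univ_of_forall fun y => ?_
    -- in each coordinate, the smallest index among those of maximal weight
    have hmax : ∀ m, ∃ i, (∀ i', ρ i' (y.1 m, y.2 m) ≤ ρ i (y.1 m, y.2 m)) ∧
        ∀ i', ρ i' (y.1 m, y.2 m) = ρ i (y.1 m, y.2 m) → i ≤ i' := by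
      intro m
      obtain ⟨i0, hi0⟩ := Finite.exists_max fun i => ρ i (y.1 m, y.2 m)
      obtain ⟨i, hi, hi'⟩ := Finset.exists_min_image
        (Finset.univ.filter fun i => ρ i (y.1 m, y.2 m) = ρ i0 (y.1 m, y.2 m)) id ⟨i0, by simp⟩
      simp only [Finset.mem_filter, Finset.mem_univ, true_and, id] at hi hi'
      exact ⟨i, fun i' => hi ▸ hi0 i', fun i' h => hi' i' (h.trans hi)⟩
    choose J hJ1 hJ2 using hmax
    have hJpos : ∀ m, 0 < ρ (J m) (y.1 m, y.2 m) := fun m => by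
      obtain ⟨i, hi⟩ := hpos (y.1 m, y.2 m)
      exact hi.trans_le (hJ1 m i)
    have hTle : T J < k * r + 1 := by
      have : T J ≤ ∑ _m : Fin k, r := Finset.sum_le_sum fun m _ => by omega
      simp at this
      omega
    refine Set.mem_iUnion.2 ⟨⟨T J, hTle⟩, Set.mem_iUnion.2 ⟨⟨J, rfl⟩,
      Finset.prod_pos fun m _ => hJpos m, Set.mem_iInter.2 fun J' hne hTe => ?_⟩⟩
    by_contra hlt
    apply hne
    have hle : ∀ m, ρ (J' m) (y.1 m, y.2 m) = ρ (J m) (y.1 m, y.2 m) := by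
      intro m
      by_contra hm
      have hm' := lt_of_le_of_ne (hJ1 m (J' m)) hm
      apply hlt
      by_cases hz : ∃ m', ρ (J' m') (y.1 m', y.2 m') = 0
      · obtain ⟨m', hm'⟩ := hz
        have : f J' y = 0 := Finset.prod_eq_zero (Finset.mem_univ m') hm'
        rw [this]
        exact Finset.prod_pos fun m _ => hJpos m
      · push Not at hz
        exact Finset.prod_lt_prod (fun i _ => lt_of_le_of_ne (h0 _ _) (hz i).symm)
          (fun i _ => hJ1 i _) ⟨m, Finset.mem_univ _, hm'⟩
    have hge : ∀ m, J m ≤ J' m := fun m => hJ2 m _ (hle m)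
    have := (Finset.sum_eq_sum_iff_of_le
      (fun m (_ : m ∈ Finset.univ) => (show (J m : ℕ) ≤ J' m from hge m))).1 hTe.symm
    funext m
    exact (Fin.ext (this m (Finset.mem_univ m))).symm
  · refine hasMotionPlanner_iUnion (fun J => hWo _) (fun J J' hne => ?_) (fun J => hWp _)
    refine Set.disjoint_left.2 fun y hy hy' => ?_
    have hne' : J.1 ≠ J'.1 := fun h => hne (Subtype.ext h)
    have h1 := Set.mem_iInter.1 hy.2 J'.1 hne'.symm (J'.2.trans J.2.symm)
    have h2 := Set.mem_iInter.1 hy'.2 J.1 hne' (J.2.trans J'.2.symm)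
    exact lt_asymm h1 h2

/-! ### Motion planners on spheres -/

/-- The `n`-sphere, as the unit sphere of `ℝⁿ⁺¹`. -/
abbrev Sph (n : ℕ) := Metric.sphere (0 : EuclideanSpace ℝ (Fin (n + 1))) 1

theorem Sph.norm_eq {n : ℕ} (x : Sph n) : ‖(x : EuclideanSpace ℝ (Fin (n + 1)))‖ = 1 := by
  simp

/-- Radial projection of a nowhere vanishing map to the sphere. -/
noncomputable def toSph {n : ℕ} {U : Type*} [TopologicalSpace U]
    (w : U → EuclideanSpace ℝ (Fin (n + 1))) (hw : Continuous w) (h0 : ∀ u, w u ≠ 0) :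
    C(U, Sph n) :=
  ⟨fun u => ⟨‖w u‖⁻¹ • w u, by simp [norm_smul, h0 u]⟩,
    Continuous.subtype_mk ((hw.norm.inv₀ fun u => norm_ne_zero_iff.2 (h0 u)).smul hw) _⟩

theorem toSph_coe {n : ℕ} {U : Type*} [TopologicalSpace U]
    (w : U → EuclideanSpace ℝ (Fin (n + 1))) (hw : Continuous w) (h0 : ∀ u, w u ≠ 0) (u : U) :
    (toSph w hw h0 u : EuclideanSpace ℝ (Fin (n + 1))) = ‖w u‖⁻¹ • w u := rfl

theorem toSph_of_norm {n : ℕ} {U : Type*} [TopologicalSpace U]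
    (w : U → EuclideanSpace ℝ (Fin (n + 1))) (hw : Continuous w) (h0 : ∀ u, w u ≠ 0) (u : U)
    (x : Sph n) (h1 : w u = x) : toSph w hw h0 u = x := by
  apply Subtype.ext
  rw [toSph_coe, h1, Sph.norm_eq]
  simp

/-- Two maps to a sphere which are nowhere antipodal are homotopic, by normalizing the
straight-line homotopy. -/
theorem homotopic_of_ne_neg {n : ℕ} {U : Type*} [TopologicalSpace U] (f g : C(U, Sph n))
    (h : ∀ u, (f u : EuclideanSpace ℝ (Fin (n + 1))) ≠ -(g u)) : ContinuousMap.Homotopic f g := by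
  set w : I × U → EuclideanSpace ℝ (Fin (n + 1)) :=
    fun p => (1 - (p.1 : ℝ)) • (f p.2 : EuclideanSpace ℝ (Fin (n + 1))) + (p.1 : ℝ) • (g p.2).1
    with hw
  have hc : Continuous w := by fun_prop
  have h0 : ∀ p, w p ≠ 0 := by
    rintro ⟨t, u⟩ h0
    simp only [hw] at h0
    have h1 := eq_neg_of_add_eq_zero_left h0
    have h2 := congrArg norm h1
    rw [norm_neg, norm_smul, norm_smul, Sph.norm_eq, Sph.norm_eq, Real.norm_eq_abs,
      Real.norm_eq_abs, abs_of_nonneg t.2.1, abs_of_nonneg (by linarith [t.2.2])] at h2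
    have h3 : (t : ℝ) = 1 / 2 := by linarith
    rw [h3, ← smul_neg, show (1 - 1 / 2 : ℝ) = 1 / 2 by norm_num] at h1
    exact h u (smul_right_injective _ (by norm_num : (1 / 2 : ℝ) ≠ 0) h1)
  refine ⟨⟨toSph w hc h0, fun u => ?_, fun u => ?_⟩⟩
  · exact toSph_of_norm w hc h0 _ _ (by simp [hw])
  · exact toSph_of_norm w hc h0 _ _ (by simp [hw])

/-- The involution of `{0, …, n}` exchanging `2j` and `2j + 1`; it fixes `n` when `n` is even. -/
def pairing {n : ℕ} (i : Fin (n + 1)) : Fin (n + 1) :=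
  if h : (i : ℕ) % 2 = 0 then
    if h' : (i : ℕ) + 1 < n + 1 then ⟨i + 1, h'⟩ else i
  else ⟨i - 1, by omega⟩

theorem pairing_pairing {n : ℕ} (i : Fin (n + 1)) : pairing (pairing i) = i := by
  apply Fin.ext
  unfold pairing
  split_ifs <;> simp_all <;> omega

/-- The signs turning `pairing` into an antisymmetric matrix, with the value `0` at the fixed
point. -/
def pairSign {n : ℕ} (i : Fin (n + 1)) : ℝ :=
  if (i : ℕ) % 2 = 0 then if (i : ℕ) + 1 < n + 1 then -1 else 0 else 1

theorem pairSign_pairing {n : ℕ} (i : Fin (n + 1)) : pairSign (pairing i) = - pairSign i := by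
  unfold pairing pairSign
  split_ifs <;> simp_all <;> omega

/-- The linear vector field `(x₀, x₁, x₂, x₃, …) ↦ (-x₁, x₀, -x₃, x₂, …)`, whose last coordinate
is zero when `n` is even. It is tangent to the unit sphere. -/
noncomputable def rot {n : ℕ} (x : EuclideanSpace ℝ (Fin (n + 1))) :
    EuclideanSpace ℝ (Fin (n + 1)) := WithLp.toLp 2 fun i => pairSign i * x (pairing i)

theorem continuous_rot {n : ℕ} : Continuous (rot (n := n)) := by
  unfold rot
  fun_prop

theorem inner_rot {n : ℕ} (x : EuclideanSpace ℝ (Fin (n + 1))) : inner ℝ (rot x) x = 0 := by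
  have h1 : inner ℝ (rot x) x = ∑ i, pairSign i * x (pairing i) * x i := by
    rw [PiLp.inner_apply]
    refine Finset.sum_congr rfl fun i _ => ?_
    simp only [rot, RCLike.inner_apply, conj_trivial]
    ring
  have h2 : ∑ i, pairSign i * x (pairing i) * x i = -∑ i, pairSign i * x (pairing i) * x i := by
    conv_lhs => rw [← Equiv.sum_comp (Function.Involutive.toPerm pairing pairing_pairing)]
    rw [← Finset.sum_neg_distrib]
    refine Finset.sum_congr rfl fun i _ => ?_
    change pairSign (pairing i) * x (pairing (pairing i)) * x (pairing i) = _
    rw [pairing_pairing, pairSign_pairing]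
    ring
  rw [h1]
  linarith

theorem eq_zero_of_rot_eq_zero {n : ℕ} {x : EuclideanSpace ℝ (Fin (n + 1))} (h : rot x = 0)
    (i : Fin (n + 1)) (hi : pairSign i ≠ 0) : x i = 0 := by
  have h1 : rot x (pairing i) = 0 := by rw [h]; rfl
  simp only [rot, pairing_pairing, pairSign_pairing] at h1
  rcases mul_eq_zero.1 h1 with h2 | h2
  · exact absurd (neg_eq_zero.1 h2) hi
  · exact h2

theorem pairSign_ne_zero {n : ℕ} (i : Fin (n + 1)) (hi : Odd n ∨ i ≠ Fin.last n) :
    pairSign i ≠ 0 := by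
  have h2 : (i : ℕ) % 2 = 0 → (i : ℕ) + 1 < n + 1 := by
    intro h
    rcases hi with hi | hi
    · have := i.2
      have := Nat.odd_iff.1 hi
      omega
    · have : (i : ℕ) ≠ n := fun h => hi (Fin.ext h)
      have := i.2
      omega
  unfold pairSign
  split_ifs with h3 h4
  · norm_num
  · exact absurd (h2 h3) h4
  · norm_num

theorem inner_ne_neg {n : ℕ} {x v : EuclideanSpace ℝ (Fin (n + 1))} (hx : x ≠ 0)
    (h : inner ℝ v x = 0) : v ≠ x ∧ v ≠ -x := by
  constructor
  · rintro rfl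
    exact hx (inner_self_eq_zero.1 h)
  · rintro rfl
    rw [inner_neg_left, neg_eq_zero] at h
    exact hx (inner_self_eq_zero.1 h)

/-- Weights whose cozero sets carry the motion planners on the sphere: non-antipodal pairs,
distinct pairs away from the zeros of the vector field, and pairs off the equator. -/
noncomputable def sphWeight {n : ℕ} (i : ℕ) (y : Sph n × Sph n) : ℝ :=
  match i with
  | 0 => ‖y.1.1 + y.2.1‖
  | 1 => ‖y.1.1 - y.2.1‖ * ‖rot y.1.1‖
  | _ => |y.1.1 (Fin.last n)| * |y.2.1 (Fin.last n)|

theorem continuous_sphWeight {n : ℕ} (i : ℕ) : Continuous (sphWeight (n := n) i) := by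
  unfold sphWeight
  have := continuous_rot (n := n)
  split <;> fun_prop

theorem sphWeight_nonneg {n : ℕ} (i : ℕ) (y : Sph n × Sph n) : 0 ≤ sphWeight i y := by
  unfold sphWeight
  split <;> positivity

theorem planner_zero {n : ℕ} : HasMotionPlanner {y : Sph n × Sph n | 0 < sphWeight 0 y} := by
  apply hasMotionPlanner_of_homotopic
  apply homotopic_of_ne_neg
  rintro ⟨y, hy⟩ h
  have h : y.1.1 = -y.2.1 := h
  simp [sphWeight, h] at hy

/-- For `y ≠ x` and `rot x ≠ 0`, move from `x` through the tangent direction of `rot x` to `-x`, and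
then to `y`, which is not antipodal to `-x`. -/
theorem planner_one {n : ℕ} : HasMotionPlanner {y : Sph n × Sph n | 0 < sphWeight 1 y} := by
  apply hasMotionPlanner_of_homotopic
  have hne : ∀ p : {y : Sph n × Sph n | 0 < sphWeight 1 y}, rot p.1.1.1 ≠ 0 := by
    rintro ⟨y, hy⟩ h
    have h : rot y.1.1 = 0 := h
    simp [sphWeight, h] at hy
  have hx : ∀ p : {y : Sph n × Sph n | 0 < sphWeight 1 y}, p.1.1.1 ≠ 0 := fun p h => by
    have := Sph.norm_eq p.1.1
    rw [h] at this
    simp at this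
  set V := toSph (fun p : {y : Sph n × Sph n | 0 < sphWeight 1 y} => rot p.1.1.1)
    (continuous_rot.comp (by fun_prop)) hne with hV
  have hVi : ∀ p, inner ℝ (V p).1 p.1.1.1 = 0 := fun p => by
    rw [hV, toSph_coe, inner_smul_left, inner_rot, mul_zero]
  have h1 : ContinuousMap.Homotopic (⟨fun p => p.1.1, by fun_prop⟩ :
      C({y : Sph n × Sph n | 0 < sphWeight 1 y}, Sph n)) V := by
    apply homotopic_of_ne_neg
    intro p h
    have h : p.1.1.1 = -(V p).1 := h
    exact (inner_ne_neg (hx p) (hVi p)).2 (by rw [h, neg_neg])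
  have h2 : ContinuousMap.Homotopic V (⟨fun p => -p.1.1, by fun_prop⟩ :
      C({y : Sph n × Sph n | 0 < sphWeight 1 y}, Sph n)) := by
    apply homotopic_of_ne_neg
    intro p h
    have h : (V p).1 = - -p.1.1.1 := h
    exact (inner_ne_neg (hx p) (hVi p)).1 (by rw [h, neg_neg])
  refine (h1.trans h2).trans ?_
  apply homotopic_of_ne_neg
  rintro ⟨y, hy⟩ h
  have h : -y.1.1 = -y.2.1 := h
  simp [sphWeight, neg_inj.1 h] at hy

/-- The two open hemispheres `xₙ ≠ 0` contract in the sphere to a common point of the equator, so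
the planner below also connects pairs in different hemispheres. -/
theorem homotopic_const {n : ℕ} (hn : 1 ≤ n) {U : Type*} [TopologicalSpace U] (f : C(U, Sph n))
    (h : ∀ u, (f u).1 (Fin.last n) ≠ 0) : ContinuousMap.Homotopic f
      (ContinuousMap.const U ⟨EuclideanSpace.single 0 1, by simp⟩) := by
  have h0 : Fin.last n ≠ 0 := fun h => by
    have := congrArg Fin.val h
    simp at this
    omega
  apply homotopic_of_ne_neg
  intro u hu
  have h1 : (f u).1 = - EuclideanSpace.single 0 1 := hu
  apply h u
  rw [h1]
  simp [h0]

theorem planner_two {n : ℕ} (hn : 1 ≤ n) :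
    HasMotionPlanner {y : Sph n × Sph n | 0 < sphWeight 2 y} := by
  apply hasMotionPlanner_of_homotopic
  refine (homotopic_const hn _ ?_).trans (homotopic_const hn _ ?_).symm
  · rintro ⟨y, hy⟩ h
    have h : y.1.1 (Fin.last n) = 0 := h
    simp [sphWeight, h] at hy
  · rintro ⟨y, hy⟩ h
    have h : y.2.1 (Fin.last n) = 0 := h
    simp [sphWeight, h] at hy

/-- The cozero sets of the weights cover; the third one is needed only at the antipodal pairs of zeros
of `rot`, which exist only for `n` even. -/
theorem sphWeight_pos {n : ℕ} (y : Sph n × Sph n) :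
    0 < sphWeight 0 y ∨ 0 < sphWeight 1 y ∨ (Even n ∧ 0 < sphWeight 2 y) := by
  by_cases h0 : y.1.1 + y.2.1 = 0
  · have hy : y.2.1 = -y.1.1 := (neg_eq_of_add_eq_zero_right h0).symm
    have hx : y.1.1 ≠ 0 := fun h => by
      have := Sph.norm_eq y.1
      rw [h] at this
      simp at this
    by_cases h1 : rot y.1.1 = 0
    · right; right
      have hz : ∀ i, Odd n ∨ i ≠ Fin.last n → y.1.1 i = 0 :=
        fun i hi => eq_zero_of_rot_eq_zero h1 i (pairSign_ne_zero i hi)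
      have he : Even n := by
        by_contra h
        exact hx (PiLp.ext fun i => hz i (Or.inl (Nat.not_even_iff_odd.1 h)))
      have hl : y.1.1 (Fin.last n) ≠ 0 := fun h => hx (PiLp.ext fun i => by
        by_cases hi : i = Fin.last n
        · rw [hi, h]; rfl
        · exact hz i (Or.inr hi))
      refine ⟨he, ?_⟩
      simp only [sphWeight, hy]
      have : (-y.1.1 : EuclideanSpace ℝ (Fin (n + 1))) (Fin.last n) ≠ 0 := by simpa using hl
      positivity
    · right; left
      have : y.1.1 - y.2.1 ≠ 0 := by
        rw [hy, sub_neg_eq_add, ← two_smul ℝ]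
        exact smul_ne_zero two_ne_zero hx
      simp only [sphWeight]
      positivity
  · left
    simp only [sphWeight]
    positivity

theorem upper_bound (k n : ℕ) (hn : 1 ≤ n) :
    topologicalComplexity (Fin k → Sph n) ≤ if Odd n then k + 1 else 2 * k + 1 := by
  split_ifs with h
  · refine (topologicalComplexity_pi_le k 1 (fun i => sphWeight i) (fun i => continuous_sphWeight _)
      (fun i => sphWeight_nonneg _) (fun y => ?_) (fun i => ?_)).trans (by simp)
    · rcases sphWeight_pos y with h1 | h1 | h1
      · exact ⟨0, h1⟩
      · exact ⟨1, h1⟩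
      · exact absurd h1.1 (Nat.not_even_iff_odd.2 h)
    · fin_cases i
      · exact planner_zero
      · exact planner_one
  · refine (topologicalComplexity_pi_le k 2 (fun i => sphWeight i) (fun i => continuous_sphWeight _)
      (fun i => sphWeight_nonneg _) (fun y => ?_) (fun i => ?_)).trans (by simp [mul_comm])
    · rcases sphWeight_pos y with h1 | h1 | h1
      · exact ⟨0, h1⟩
      · exact ⟨1, h1⟩
      · exact ⟨2, h1.2⟩
    · fin_cases i
      · exact planner_zero
      · exact planner_one
      · exact planner_two hn

/-! ### Cochains -/

/-- Cochains on a set `Z`, written as functions of an infinite sequence of vertices of which only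
an initial segment matters (see `Dep`). -/
abbrev Co (Z : Type*) := (ℕ → Z) → ℤ

/-- The map `ℕ → ℕ` skipping the value `j`. -/
def face (j i : ℕ) : ℕ := if i < j then i else i + 1

/-- The cochain depends on its first `m` vertices only. -/
def Dep {Z : Type*} (m : ℕ) (f : Co Z) : Prop := ∀ v w : ℕ → Z, (∀ i < m, v i = w i) → f v = f w

/-- The coboundary of a cochain in `m` vertices (so of degree `m - 1`). -/
def dd {Z : Type*} (m : ℕ) (f : Co Z) : Co Z :=
  fun v => ∑ j ∈ Finset.range (m + 1), (-1) ^ j * f (fun i => v (face j i))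

/-- The cup product of a degree `p` cochain with another cochain. -/
def cup {Z : Type*} (p : ℕ) (f g : Co Z) : Co Z := fun v => f v * g (fun i => v (i + p))

theorem Dep.mono {Z : Type*} {m m' : ℕ} {f : Co Z} (h : Dep m f) (hm : m ≤ m') : Dep m' f :=
  fun v w hvw => h v w fun i hi => hvw i (hi.trans_le hm)

theorem Dep.cup {Z : Type*} {p m : ℕ} {f g : Co Z} (hf : Dep (p + 1) f) (hg : Dep m g)
    (hm : 1 ≤ m) : Dep (p + m) (cup p f g) := by
  intro v w h
  unfold TCSpheres.cup
  rw [hf v w fun i hi => h i (by omega), hg (fun i => v (i + p)) (fun i => w (i + p))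
    fun i hi => h _ (by omega)]

theorem Dep.dd {Z : Type*} {m : ℕ} {f : Co Z} (hf : Dep m f) : Dep (m + 1) (dd m f) := by
  intro v w h
  unfold TCSpheres.dd
  refine Finset.sum_congr rfl fun j _ => ?_
  rw [hf (fun i => v (face j i)) (fun i => w (face j i)) fun i hi => h _ (by
    unfold face; split_ifs <;> omega)]

theorem Dep.sub {Z : Type*} {m : ℕ} {f g : Co Z} (hf : Dep m f) (hg : Dep m g) :
    Dep m (f - g) := by
  intro v w h
  simp only [Pi.sub_apply, hf v w h, hg v w h]

theorem Dep.add {Z : Type*} {m : ℕ} {f g : Co Z} (hf : Dep m f) (hg : Dep m g) :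
    Dep m (f + g) := by
  intro v w h
  simp only [Pi.add_apply, hf v w h, hg v w h]

theorem Dep.zero {Z : Type*} (m : ℕ) : Dep m (0 : Co Z) := fun _ _ _ => rfl

theorem Dep.sum {Z ι : Type*} {m : ℕ} {s : Finset ι} {f : ι → Co Z} (hf : ∀ i, Dep m (f i)) :
    Dep m (∑ i ∈ s, f i) := by
  intro v w h
  simp only [Finset.sum_apply]
  exact Finset.sum_congr rfl fun i _ => hf i v w h

theorem dd_add {Z : Type*} (m : ℕ) (f g : Co Z) : dd m (f + g) = dd m f + dd m g := by
  funext v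
  simp [dd, mul_add, Finset.sum_add_distrib]

theorem dd_sub {Z : Type*} (m : ℕ) (f g : Co Z) : dd m (f - g) = dd m f - dd m g := by
  funext v
  simp [dd, mul_sub, Finset.sum_sub_distrib]

theorem dd_smul {Z : Type*} (m : ℕ) (a : ℤ) (f : Co Z) : dd m (a • f) = a • dd m f := by
  funext v
  simp [dd, Finset.mul_sum, mul_left_comm]

theorem dd_zero {Z : Type*} (m : ℕ) : dd m (0 : Co Z) = 0 := by
  funext v
  simp [dd]

theorem dd_sum {Z ι : Type*} (m : ℕ) (s : Finset ι) (f : ι → Co Z) :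
    dd m (∑ i ∈ s, f i) = ∑ i ∈ s, dd m (f i) := by
  classical
  induction s using Finset.induction_on with
  | empty => simp [dd_zero]
  | insert a s ha ih => rw [Finset.sum_insert ha, Finset.sum_insert ha, dd_add, ih]

/-- The Leibniz rule. It also holds for `m = 0`, where `g` is a constant and `dd 0` is the
augmentation. -/
theorem leibniz {Z : Type*} {p m : ℕ} {f g : Co Z} (hf : Dep (p + 1) f) (v : ℕ → Z) :
    dd (p + m) (cup p f g) v =
      cup (p + 1) (dd (p + 1) f) g v + (-1) ^ p * cup p f (dd m g) v := by
  have hlow : ∀ j ∈ Finset.range (p + 1), (-1) ^ j * cup p f g (fun i => v (face j i)) =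
      (-1) ^ j * f (fun i => v (face j i)) * g (fun i => v (i + (p + 1))) := by
    intro j hj
    have hj := Finset.mem_range.1 hj
    unfold cup
    rw [mul_assoc]
    congr 3
    funext i
    change v (face j (i + p)) = _
    unfold face
    rw [if_neg (by omega), add_assoc]
  have hhigh : ∀ x ∈ Finset.range m, (-1) ^ (p + 1 + x) *
      cup p f g (fun i => v (face (p + 1 + x) i)) =
      (-1) ^ p * (f v * ((-1) ^ (x + 1) * g (fun i => v (face (x + 1) i + p)))) := by
    intro x _
    unfold cup
    have e1 : f (fun i => v (face (p + 1 + x) i)) = f v := hf _ _ fun i hi => by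
      unfold face
      rw [if_pos (by omega)]
    have e2 : (fun i => v (face (p + 1 + x) (i + p))) = fun i => v (face (x + 1) i + p) := by
      funext i
      unfold face
      split_ifs <;> first | omega | (congr 1 <;> omega)
    rw [e1, e2]
    ring
  have hlast : f (fun i => v (face (p + 1) i)) = f v := hf _ _ fun i hi => by
    unfold face
    rw [if_pos hi]
  have hzero : (fun i => v (face 0 i + p)) = fun i => v (i + (p + 1)) := by
    funext i
    unfold face
    simp only [not_lt_zero, if_false]
    congr 1
    omega
  have hL : dd (p + m) (cup p f g) v =
      (∑ j ∈ Finset.range (p + 1), (-1) ^ j * f (fun i => v (face j i)) *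
        g (fun i => v (i + (p + 1)))) + ∑ x ∈ Finset.range m,
        (-1) ^ p * (f v * ((-1) ^ (x + 1) * g (fun i => v (face (x + 1) i + p)))) := by
    unfold dd
    rw [show p + m + 1 = (p + 1) + m by omega, Finset.sum_range_add, Finset.sum_congr rfl hlow,
      Finset.sum_congr rfl hhigh]
  have hR1 : cup (p + 1) (dd (p + 1) f) g v =
      (∑ j ∈ Finset.range (p + 1), (-1) ^ j * f (fun i => v (face j i)) *
        g (fun i => v (i + (p + 1)))) + (-1) ^ (p + 1) * f v * g (fun i => v (i + (p + 1))) := by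
    unfold cup dd
    rw [Finset.sum_range_succ, hlast, add_mul, Finset.sum_mul]
  have hR2 : (-1) ^ p * cup p f (dd m g) v = (∑ x ∈ Finset.range m,
        (-1) ^ p * (f v * ((-1) ^ (x + 1) * g (fun i => v (face (x + 1) i + p))))) +
        (-1) ^ p * (f v * g (fun i => v (i + (p + 1)))) := by
    unfold cup dd
    rw [Finset.sum_range_succ', ← hzero, mul_add, mul_add, Finset.mul_sum, Finset.mul_sum]
    simp
  rw [hL, hR1, hR2]
  ring

theorem dd_dd {Z : Type*} {m : ℕ} {f : Co Z} : dd (m + 1) (dd m f) = 0 := by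
  funext v
  have key : ∀ i j : ℕ, i < j → ∀ x, face j (face i x) = face i (face (j - 1) x) := by
    intro i j hij x
    unfold face
    split_ifs <;> omega
  simp only [dd, Finset.mul_sum, Pi.zero_apply]
  rw [← Finset.sum_product']
  refine Finset.sum_involution
    (fun a _ => if a.2 < a.1 then (a.2, a.1 - 1) else (a.2 + 1, a.1)) ?_ ?_ ?_ ?_
  · rintro ⟨j, i⟩ h
    by_cases hij : i < j
    · have h1 : (fun x => v (face j (face i x))) = fun x => v (face i (face (j - 1) x)) := by
        funext x; rw [key i j hij]
      obtain ⟨j', rfl⟩ : ∃ j', j = j' + 1 := ⟨j - 1, by omega⟩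
      simp only [hij, if_true, h1, Nat.add_sub_cancel]
      ring
    · have h1 : (fun x => v (face (i + 1) (face j x))) = fun x => v (face j (face i x)) := by
        funext x
        rw [key j (i + 1) (by omega), Nat.add_sub_cancel]
      simp only [hij, if_false, h1]
      ring
  · rintro ⟨j, i⟩ h _ h'
    by_cases hij : i < j <;> simp only [hij, if_true, if_false, Prod.mk.injEq] at h' <;> omega
  · rintro ⟨j, i⟩ h
    simp only [Finset.mem_product, Finset.mem_range] at h
    by_cases hij : i < j <;>
      simp only [hij, if_true, if_false, Finset.mem_product, Finset.mem_range] <;> omega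
  · rintro ⟨j, i⟩ h
    by_cases hij : i < j
    · have h2 : ¬ (j - 1 < i) := by omega
      simp only [hij, if_true, h2, if_false, Prod.mk.injEq, and_true]
      omega
    · have h2 : j < i + 1 := by omega
      simp only [hij, if_false, h2, if_true, Nat.add_sub_cancel]

/-! ### Products of coboundaries of functions -/

/-- A function regarded as a cochain of degree `0`. -/
def pt {Z : Type*} (a : Z → ℤ) : Co Z := fun v => a (v 0)

/-- The coboundary of a function. -/
def dl {Z : Type*} (a : Z → ℤ) : Co Z := fun v => a (v 1) - a (v 0)

/-- The degree `n` cochain `δA₀ ∪ δA₁ ∪ ⋯ ∪ δAₙ₋₁ ∪ Aₙ`. -/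
def al {Z : Type*} : ℕ → (ℕ → Z → ℤ) → Co Z
  | 0, A => pt (A 0)
  | n + 1, A => cup 1 (dl (A 0)) (al n fun i => A (i + 1))

theorem dep_pt {Z : Type*} (a : Z → ℤ) : Dep 1 (pt a) := fun v w h => by
  simp only [pt, h 0 one_pos]

theorem dep_dl {Z : Type*} (a : Z → ℤ) : Dep 2 (dl a) := fun v w h => by
  simp only [dl, h 0 two_pos, h 1 one_lt_two]

theorem dep_al {Z : Type*} (n : ℕ) (A : ℕ → Z → ℤ) : Dep (n + 1) (al n A) := by
  induction n generalizing A with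
  | zero => exact dep_pt _
  | succ n ih =>
    have := (dep_dl (A 0)).cup (ih fun i => A (i + 1)) (by omega)
    rwa [add_comm 1] at this

theorem dd_pt {Z : Type*} (a : Z → ℤ) : dd 1 (pt a) = dl a := by
  funext v
  simp [dd, pt, dl, face, Finset.sum_range_succ]
  ring

theorem dd_dl {Z : Type*} (a : Z → ℤ) : dd 2 (dl a) = 0 := by
  rw [← dd_pt, dd_dd]

theorem al_eq_prod {Z : Type*} (n : ℕ) (A : ℕ → Z → ℤ) (v : ℕ → Z) :
    al n A v = (∏ i ∈ Finset.range n, (A i (v (i + 1)) - A i (v i))) * A n (v n) := by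
  induction n generalizing A v with
  | zero => simp [al, pt]
  | succ n ih =>
    rw [Finset.prod_range_succ']
    simp only [al, cup, dl, ih]
    ring

theorem dd_al_succ {Z : Type*} (n : ℕ) (A : ℕ → Z → ℤ) (v : ℕ → Z) :
    dd (n + 2) (al (n + 1) A) v = -cup 1 (dl (A 0)) (dd (n + 1) (al n fun i => A (i + 1))) v := by
  have := leibniz (m := n + 1) (g := al n fun i => A (i + 1)) (dep_dl (A 0)) v
  rw [add_comm 1 (n + 1), dd_dl] at this
  rw [al, this]
  simp [cup]

/-- `al n A` is closed on any simplex on which one of the functions `A₀, …, Aₙ` is constant: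
its coboundary is, up to sign, `δA₀ ∪ ⋯ ∪ δAₙ`. -/
theorem dd_al_eq_zero {Z : Type*} (n : ℕ) (A : ℕ → Z → ℤ) (v : ℕ → Z)
    (h : ∃ j ≤ n, ∃ c, ∀ i < n + 2, A j (v i) = c) : dd (n + 1) (al n A) v = 0 := by
  induction n generalizing A v with
  | zero =>
    obtain ⟨j, hj, c, hc⟩ := h
    obtain rfl : j = 0 := by omega
    simp only [al, zero_add, dd_pt, dl, hc 0 (by omega), hc 1 (by omega), sub_self]
  | succ n ih =>
    obtain ⟨j, hj, c, hc⟩ := h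
    rw [dd_al_succ, neg_eq_zero]
    rcases j with _ | j
    · simp only [cup, dl, hc 0 (by omega), hc 1 (by omega), sub_self, zero_mul]
    · unfold cup
      rw [ih _ _ ⟨j, by omega, c, fun i hi => hc _ (by omega)⟩, mul_zero]

/-- The homotopy formula: replacing each `Aᵢ` by `Bᵢ` changes `al n A` by a coboundary, on every
simplex on which for some `j` both `Aⱼ` and `Bⱼ` are constant with the same value. For `n = 0` the
difference vanishes there, which is the reason for the clause `n = 0 → g = 0`. -/
theorem al_homotopy {Z : Type*} (n : ℕ) (A B : ℕ → Z → ℤ) : ∃ g : Co Z, Dep n g ∧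
    (n = 0 → g = 0) ∧ ∀ v : ℕ → Z, (∃ j ≤ n, ∃ c, ∀ i < n + 1, A j (v i) = c ∧ B j (v i) = c) →
      al n B v - al n A v = dd n g v := by
  induction n generalizing A B with
  | zero =>
    refine ⟨0, Dep.zero _, fun _ => rfl, fun v h => ?_⟩
    obtain ⟨j, hj, c, hc⟩ := h
    obtain rfl : j = 0 := by omega
    obtain ⟨h1, h2⟩ := hc 0 (by omega)
    simp [al, pt, h1, h2, dd_zero]
  | succ n ih =>
    obtain ⟨g', hg', hg0, hg⟩ := ih (fun i => A (i + 1)) (fun i => B (i + 1))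
    set a := pt (B 0) - pt (A 0) with ha
    have hda : Dep 1 a := (dep_pt _).sub (dep_pt _)
    have hdda : dd 1 a = dl (B 0) - dl (A 0) := by rw [ha, dd_sub, dd_pt, dd_pt]
    have hB : Dep (n + 1) (al n fun i => B (i + 1)) := dep_al _ _
    refine ⟨cup 0 a (al n fun i => B (i + 1)) - cup 1 (dl (A 0)) g', Dep.sub ?_ ?_, by simp, ?_⟩
    · have := hda.cup hB (by omega)
      rwa [zero_add] at this
    · rcases Nat.eq_zero_or_pos n with rfl | hn
      · rw [hg0 rfl]
        intro v w _
        simp [cup]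
      · have := (dep_dl (A 0)).cup hg' hn
        rwa [add_comm 1] at this
    · rintro v ⟨j, hj, c, hc⟩
      have e1 : dd (n + 1) (cup 0 a (al n fun i => B (i + 1))) v =
          cup 1 (dl (B 0) - dl (A 0)) (al n fun i => B (i + 1)) v := by
        have := leibniz (m := n + 1) (g := al n fun i => B (i + 1)) hda v
        rw [zero_add, zero_add, hdda] at this
        rw [this]
        simp only [pow_zero, one_mul, add_eq_left]
        unfold cup
        rcases j with _ | j
        · obtain ⟨h1, h2⟩ := hc 0 (by omega)
          simp [ha, pt, h1, h2]
        · rw [dd_al_eq_zero, mul_zero]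
          exact ⟨j, by omega, c, fun i hi => (hc _ (by omega)).2⟩
      have e2 : dd (n + 1) (cup 1 (dl (A 0)) g') v = - cup 1 (dl (A 0)) (dd n g') v := by
        have := leibniz (m := n) (g := g') (dep_dl (A 0)) v
        rw [add_comm 1 n, dd_dl] at this
        rw [this]
        simp [cup]
      have e3 : cup 1 (dl (A 0)) (dd n g') v = cup 1 (dl (A 0))
          ((al n fun i => B (i + 1)) - al n fun i => A (i + 1)) v := by
        unfold cup
        rcases j with _ | j
        · obtain ⟨h1, -⟩ := hc 0 (by omega)
          obtain ⟨h2, -⟩ := hc 1 (by omega)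
          simp [dl, h1, h2]
        · rw [← hg _ ⟨j, by omega, c, fun i hi => hc _ (by omega)⟩]
          rfl
      rw [dd_sub, Pi.sub_apply, e1, e2, e3]
      simp only [al, cup, Pi.sub_apply]
      ring

/-! ### Alexander–Spanier cohomology and the cup-length estimate -/

/-- The cochain `F` in `m` vertices vanishes on small simplices near the points of `S`. -/
def LocZero {Y : Type*} [TopologicalSpace Y] (S : Set Y) (m : ℕ) (F : Co Y) : Prop :=
  ∀ y ∈ S, ∃ V ∈ nhds y, ∀ v : ℕ → Y, (∀ i < m, v i ∈ V) → F v = 0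

/-- Alexander–Spanier cocycles of degree `p`. -/
def Cyc {Y : Type*} [TopologicalSpace Y] (p : ℕ) (f : Co Y) : Prop :=
  Dep (p + 1) f ∧ LocZero Set.univ (p + 2) (dd (p + 1) f)

/-- Alexander–Spanier coboundaries of degree `p`: cochains which agree locally with some `dd p g`.
In degree `0` only `g = 0` is allowed, so that nonzero constants are not coboundaries. -/
def Bd {Y : Type*} [TopologicalSpace Y] (p : ℕ) (f : Co Y) : Prop :=
  ∃ g, Dep p g ∧ (p = 0 → g = 0) ∧ LocZero Set.univ (p + 1) (f - dd p g)

theorem leibniz' {Y : Type*} {p m : ℕ} {f g : Co Y} (hf : Dep (p + 1) f) :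
    dd (p + m) (cup p f g) =
      cup (p + 1) (dd (p + 1) f) g + ((-1) ^ p : ℤ) • cup p f (dd m g) := by
  funext v
  rw [leibniz hf]
  simp

/-- The cup product `α₀ ∪ ⋯ ∪ αᵣ₋₁` of cochains of degree `n`. -/
def pr {Y : Type*} (n : ℕ) : ℕ → (ℕ → Co Y) → Co Y
  | 0, _ => 1
  | r + 1, α => cup n (α 0) (pr n r fun b => α (b + 1))

theorem pr_eq_prod {Y : Type*} (n r : ℕ) (α : ℕ → Co Y) (v : ℕ → Y) :
    pr n r α v = ∏ b ∈ Finset.range r, α b (fun i => v (i + b * n)) := by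
  induction r generalizing α v with
  | zero => simp [pr]
  | succ r ih =>
    rw [Finset.prod_range_succ', pr, cup, ih, mul_comm]
    simp only [zero_mul, add_zero]
    congr 1
    refine Finset.prod_congr rfl fun b _ => ?_
    congr 1
    funext i
    congr 1
    ring

section

variable {Y : Type*} [TopologicalSpace Y]

theorem LocZero.add {S : Set Y} {m : ℕ} {F G : Co Y} (hF : LocZero S m F) (hG : LocZero S m G) :
    LocZero S m (F + G) := by
  intro y hy
  obtain ⟨V, hV, h1⟩ := hF y hy
  obtain ⟨W, hW, h2⟩ := hG y hy
  refine ⟨V ∩ W, Filter.inter_mem hV hW, fun v hv => ?_⟩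
  rw [Pi.add_apply, h1 v fun i hi => (hv i hi).1, h2 v fun i hi => (hv i hi).2, add_zero]

theorem LocZero.smul {S : Set Y} {m : ℕ} {F : Co Y} (hF : LocZero S m F) (a : ℤ) :
    LocZero S m (a • F) := by
  intro y hy
  obtain ⟨V, hV, h1⟩ := hF y hy
  refine ⟨V, hV, fun v hv => ?_⟩
  rw [Pi.smul_apply, h1 v hv, smul_zero]

theorem LocZero.cup_left {S : Set Y} {p m m' : ℕ} {f g : Co Y} (hF : LocZero S m f) (hm : m ≤ m') :
    LocZero S m' (cup p f g) := by
  intro y hy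
  obtain ⟨V, hV, h1⟩ := hF y hy
  refine ⟨V, hV, fun v hv => ?_⟩
  rw [cup, h1 v fun i hi => hv i (by omega), zero_mul]

theorem LocZero.cup_right {S : Set Y} {p m m' : ℕ} {f g : Co Y} (hG : LocZero S m g)
    (hm : m + p ≤ m') : LocZero S m' (cup p f g) := by
  intro y hy
  obtain ⟨V, hV, h1⟩ := hG y hy
  refine ⟨V, hV, fun v hv => ?_⟩
  rw [cup, h1 _ fun i hi => hv (i + p) (by omega), mul_zero]

theorem Cyc.cup {p q : ℕ} {f g : Co Y} (hf : Cyc p f) (hg : Cyc q g) :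
    Cyc (p + q) (cup p f g) := by
  refine ⟨hf.1.cup hg.1 (by omega), ?_⟩
  rw [add_assoc p q 1, leibniz' hf.1]
  exact (hf.2.cup_left (by omega)).add ((hg.2.cup_right (by omega)).smul _)

theorem Bd.add {p : ℕ} {f g : Co Y} (hf : Bd p f) (hg : Bd p g) : Bd p (f + g) := by
  obtain ⟨F, h1, h2, h3⟩ := hf
  obtain ⟨G, h4, h5, h6⟩ := hg
  refine ⟨F + G, h1.add h4, fun h => by rw [h2 h, h5 h, add_zero], ?_⟩
  rw [dd_add, add_sub_add_comm]
  exact h3.add h6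

theorem Bd.cup_cyc {p q : ℕ} {f g : Co Y} (hf : Bd (p + 1) f) (hg : Cyc q g) :
    Bd (p + 1 + q) (TCSpheres.cup (p + 1) f g) := by
  obtain ⟨F, h1, -, h3⟩ := hf
  refine ⟨TCSpheres.cup p F g, ?_, by omega, ?_⟩
  · have := h1.cup hg.1 (by omega)
    rwa [add_comm q 1, ← add_assoc] at this
  · rw [show p + 1 + q = p + (q + 1) by omega, leibniz' h1]
    have e : TCSpheres.cup (p + 1) f g - (TCSpheres.cup (p + 1) (dd (p + 1) F) g +
        ((-1) ^ p : ℤ) • TCSpheres.cup p F (dd (q + 1) g)) =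
        TCSpheres.cup (p + 1) (f - dd (p + 1) F) g +
        (-(-1) ^ p : ℤ) • TCSpheres.cup p F (dd (q + 1) g) := by
      funext v
      simp only [TCSpheres.cup, Pi.add_apply, Pi.sub_apply, Pi.smul_apply, smul_eq_mul]
      ring
    rw [e]
    exact (h3.cup_left (by omega)).add ((hg.2.cup_right (by omega)).smul _)

theorem Cyc.cup_bd {p q : ℕ} {f g : Co Y} (hf : Cyc p f) (hg : Bd q g) :
    Bd (p + q) (TCSpheres.cup p f g) := by
  obtain ⟨G, h1, h2, h3⟩ := hg
  rcases Nat.eq_zero_or_pos q with rfl | hq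
  · rw [h2 rfl, dd_zero, sub_zero] at h3
    refine ⟨0, Dep.zero _, fun _ => rfl, ?_⟩
    rw [dd_zero, sub_zero]
    exact h3.cup_right (by omega)
  · refine ⟨((-1) ^ p : ℤ) • TCSpheres.cup p f G, ?_, by omega, ?_⟩
    · intro v w h
      rw [Pi.smul_apply, Pi.smul_apply, (hf.1.cup h1 hq) v w h]
    · rw [dd_smul, leibniz' hf.1]
      have e : TCSpheres.cup p f g - ((-1) ^ p : ℤ) • (TCSpheres.cup (p + 1) (dd (p + 1) f) G +
          ((-1) ^ p : ℤ) • TCSpheres.cup p f (dd q G)) =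
          TCSpheres.cup p f (g - dd q G) +
          (-(-1) ^ p : ℤ) • TCSpheres.cup (p + 1) (dd (p + 1) f) G := by
        have h1 : ((-1 : ℤ) ^ p) * (-1) ^ p = 1 := by rw [← mul_pow]; simp
        funext v
        simp only [TCSpheres.cup, Pi.add_apply, Pi.sub_apply, Pi.smul_apply, smul_eq_mul]
        linear_combination (-f v * dd q G fun i => v (i + p)) * h1
      rw [e]
      exact (h3.cup_right (by omega)).add ((hf.2.cup_left (by omega)).smul _)

theorem cyc_pr {n : ℕ} (r : ℕ) {α : ℕ → Co Y} (h : ∀ b, Cyc n (α b)) :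
    Cyc (r * n) (pr n r α) := by
  induction r generalizing α with
  | zero =>
    rw [zero_mul]
    refine ⟨fun _ _ _ => rfl, fun y _ => ⟨Set.univ, Filter.univ_mem, fun v _ => ?_⟩⟩
    simp [dd, pr, Finset.sum_range_succ]
  | succ r ih =>
    rw [show (r + 1) * n = n + r * n by ring]
    exact (h 0).cup (ih fun b => h (b + 1))

theorem bd_pr_sub {n : ℕ} (hn : 1 ≤ n) (r : ℕ) {α β : ℕ → Co Y} (hα : ∀ b, Cyc n (α b))
    (hβ : ∀ b, Cyc n (β b)) (h : ∀ b, Bd n (α b - β b)) : Bd (r * n) (pr n r α - pr n r β) := by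
  induction r generalizing α β with
  | zero =>
    refine ⟨0, Dep.zero _, fun _ => rfl, fun y _ => ⟨Set.univ, Filter.univ_mem, fun v _ => ?_⟩⟩
    simp [dd_zero, pr]
  | succ r ih =>
    obtain ⟨p, rfl⟩ : ∃ p, n = p + 1 := ⟨n - 1, by omega⟩
    rw [show (r + 1) * (p + 1) = (p + 1) + r * (p + 1) by ring]
    have e : pr (p + 1) (r + 1) α - pr (p + 1) (r + 1) β =
        cup (p + 1) (α 0 - β 0) (pr (p + 1) r fun b => α (b + 1)) +
        cup (p + 1) (β 0) ((pr (p + 1) r fun b => α (b + 1)) -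
          pr (p + 1) r fun b => β (b + 1)) := by
      funext v
      simp only [pr, cup, Pi.add_apply, Pi.sub_apply]
      ring
    rw [e]
    exact ((h 0).cup_cyc (cyc_pr r fun b => hα (b + 1))).add
      ((hβ 0).cup_bd (ih (fun b => hα (b + 1)) (fun b => hβ (b + 1)) fun b => h (b + 1)))

/-- The cup-length estimate: if each point lies in some `K b` near which the cocycle `α b` is a
coboundary, then the product of the `α b` is a coboundary. Subtracting the `dd n (g b)` turns the
factors into cocycles whose product is locally zero on the nose. -/
theorem bd_pr {n : ℕ} (hn : 1 ≤ n) (r : ℕ) {α g : ℕ → Co Y} {K : ℕ → Set Y}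
    (hα : ∀ b, Cyc n (α b)) (hg : ∀ b, Dep n (g b))
    (h : ∀ b, LocZero (K b) (n + 1) (α b - dd n (g b))) (hK : ∀ y, ∃ b < r, y ∈ K b) :
    Bd (r * n) (pr n r α) := by
  have hβ : ∀ b, Cyc n (α b - dd n (g b)) := fun b => by
    refine ⟨(hα b).1.sub (hg b).dd, ?_⟩
    rw [dd_sub, dd_dd, sub_zero]
    exact (hα b).2
  have h1 : Bd (r * n) (pr n r α - pr n r fun b => α b - dd n (g b)) := by
    refine bd_pr_sub hn r hα hβ fun b => ⟨g b, hg b, by omega, fun y _ => ?_⟩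
    exact ⟨Set.univ, Filter.univ_mem, fun v _ => by simp⟩
  have h2 : Bd (r * n) (pr n r fun b => α b - dd n (g b)) := by
    refine ⟨0, Dep.zero _, fun _ => rfl, fun y _ => ?_⟩
    obtain ⟨b, hb, hy⟩ := hK y
    obtain ⟨V, hV, hz⟩ := h b y hy
    refine ⟨V, hV, fun v hv => ?_⟩
    rw [dd_zero, sub_zero, pr_eq_prod]
    refine Finset.prod_eq_zero (Finset.mem_range.2 hb) (hz _ fun i hi => hv _ ?_)
    have : (b + 1) * n ≤ r * n := Nat.mul_le_mul_right n hb
    rw [add_mul] at this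
    omega
  simpa using h1.add h2

end

/-! ### The fundamental cocycle of the sphere and zero-divisors -/

/-- The indicator function of the closed half-sphere `0 ≤ xᵢ` (and `0` for `i > n`). -/
noncomputable def sg {n : ℕ} (i : ℕ) (x : Sph n) : ℤ :=
  if h : i < n + 1 then (if 0 ≤ x.1 ⟨i, h⟩ then 1 else 0) else 0

/-- The open half-sphere `0 < xⱼ` or `xⱼ < 0`. -/
def hs {n : ℕ} (a : Fin (n + 1) × Bool) : Set (Sph n) :=
  {x | if a.2 then 0 < x.1 a.1 else x.1 a.1 < 0}

theorem isOpen_hs {n : ℕ} (a : Fin (n + 1) × Bool) : IsOpen (hs a) := by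
  have hc : Continuous fun x : Sph n => x.1 a.1 := by fun_prop
  obtain ⟨j, b⟩ := a
  cases b
  · simpa [hs] using isOpen_lt hc continuous_const
  · simpa [hs] using isOpen_lt continuous_const hc

theorem exists_mem_hs {n : ℕ} (x : Sph n) : ∃ a, x ∈ hs a := by
  by_contra! h
  have h0 : x.1 = 0 := by
    ext j
    have h1 := h (j, true)
    have h2 := h (j, false)
    simp [hs] at h1 h2
    exact le_antisymm h1 h2
  have := Sph.norm_eq x
  rw [h0] at this
  simp at this

theorem sg_eq_of_mem_hs {n : ℕ} (a : Fin (n + 1) × Bool) {x : Sph n} (hx : x ∈ hs a) :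
    sg a.1 x = if a.2 then 1 else 0 := by
  obtain ⟨j, b⟩ := a
  cases b
  · have : x.1 j < 0 := by simpa [hs] using hx
    simp [sg, this]
  · have : 0 < x.1 j := by simpa [hs] using hx
    simp [sg, this.le, j.is_le]

theorem cyc_al {Y : Type*} [TopologicalSpace Y] {n : ℕ} {p : Y → Sph n} (hp : Continuous p) :
    Cyc n (al n fun i y => sg i (p y)) := by
  refine ⟨dep_al _ _, fun y _ => ?_⟩
  obtain ⟨a, ha⟩ := exists_mem_hs (p y)
  refine ⟨p ⁻¹' hs a, ((isOpen_hs a).preimage hp).mem_nhds ha, fun v hv => ?_⟩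
  exact dd_al_eq_zero _ _ _ ⟨a.1, Nat.lt_succ_iff.1 a.1.2, _, fun i hi => sg_eq_of_mem_hs a (hv i hi)⟩

theorem Cyc.sub {Y : Type*} [TopologicalSpace Y] {p : ℕ} {f g : Co Y} (hf : Cyc p f)
    (hg : Cyc p g) : Cyc p (f - g) := by
  refine ⟨hf.1.sub hg.1, ?_⟩
  have := hf.2.add (hg.2.smul (-1))
  rwa [neg_one_smul, ← sub_eq_add_neg, ← dd_sub] at this

/-- Homotopic maps to the sphere pull the fundamental cocycle back to cohomologous cocycles, here
for a homotopy which is only given over an open set `U` and cochains near a closed `K ⊆ U`. The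
homotopy is cut into steps so short that locally some coordinate keeps its sign during a step. -/
theorem exists_bound_of_homotopy {Y : Type*} [PseudoMetricSpace Y] [CompactSpace Y] {n : ℕ}
    {U K : Set Y} (hU : IsOpen U) (hK : IsClosed K) (hKU : K ⊆ U) (p q : Y → Sph n)
    (H : U × I → Sph n) (hH : Continuous H) (h0 : ∀ y : U, H (y, 0) = p y)
    (h1 : ∀ y : U, H (y, 1) = q y) :
    ∃ g : Co Y, Dep n g ∧ LocZero K (n + 1)
      ((al n fun i y => sg i (p y)) - (al n fun i y => sg i (q y)) - dd n g) := by
  classical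
  let T : Y × I → Sph n := fun z =>
    if h : z.1 ∈ U then H (⟨z.1, h⟩, z.2) else if z.2 = 0 then p z.1 else q z.1
  have T0 : ∀ y, T (y, 0) = p y := fun y => by
    by_cases h : y ∈ U
    · simp only [T, h, dif_pos, h0]
    · simp only [T, h, dif_neg, not_false_eq_true, if_true]
  have T1 : ∀ y, T (y, 1) = q y := fun y => by
    by_cases h : y ∈ U
    · simp only [T, h, dif_pos, h1]
    · simp only [T, h, dif_neg, not_false_eq_true, one_ne_zero, if_false]
  let c : Fin (n + 1) × Bool → Set (Y × I) := fun a => {z | z.1 ∈ U ∧ T z ∈ hs a}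
  have hc : ∀ a, IsOpen (c a) := fun a => by
    have e : c a = (fun z : U × I => ((z.1 : Y), z.2)) '' (H ⁻¹' hs a) := by
      ext ⟨y, t⟩
      constructor
      · rintro ⟨hy, hT⟩
        simp only [T, show y ∈ U from hy, dif_pos] at hT
        exact ⟨(⟨y, hy⟩, t), hT, rfl⟩
      · rintro ⟨⟨y', t'⟩, hz, he⟩
        obtain ⟨rfl, rfl⟩ := Prod.mk.inj he
        refine ⟨y'.2, ?_⟩
        simp only [T, y'.2, dif_pos]
        exact hz
    rw [e]
    exact (hU.isOpenMap_subtype_val.prodMap IsOpenMap.id) _ ((isOpen_hs a).preimage hH)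
  have hcov : K ×ˢ (Set.univ : Set I) ⊆ ⋃ a, c a := by
    rintro z ⟨hz, -⟩
    obtain ⟨a, ha⟩ := exists_mem_hs (T z)
    exact Set.mem_iUnion.2 ⟨a, hKU hz, ha⟩
  obtain ⟨δ, hδ, hb⟩ := lebesgue_number_lemma_of_metric (hK.isCompact.prod isCompact_univ) hc hcov
  obtain ⟨L, hL⟩ := exists_nat_one_div_lt hδ
  let τ : ℕ → I := fun l => Set.projIcc 0 1 zero_le_one ((l : ℝ) / ((L : ℝ) + 1))
  have hτ : ∀ l, dist (τ (l + 1)) (τ l) < δ := fun l => by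
    refine lt_of_le_of_lt ?_ hL
    rw [Subtype.dist_eq, Real.dist_eq]
    refine (Set.abs_projIcc_sub_projIcc zero_le_one).trans ?_
    rw [← sub_div, Nat.cast_succ, add_sub_cancel_left, abs_of_nonneg (by positivity)]
  have hτ0 : τ 0 = 0 := by
    apply Subtype.ext
    simp [τ]
  have hτ1 : τ (L + 1) = 1 := by
    apply Subtype.ext
    have : ((L : ℝ) + 1) ≠ 0 := by positivity
    simp [τ, this]
  let A : ℕ → ℕ → Y → ℤ := fun l i y => sg i (T (y, τ l))
  choose g hg _ hgs using fun l => al_homotopy n (A l) (A (l + 1))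
  refine ⟨-(∑ l ∈ Finset.range (L + 1), g l), ?_, fun y hy => ?_⟩
  · have := (Dep.zero n).sub (Dep.sum (s := Finset.range (L + 1)) hg)
    rwa [zero_sub] at this
  refine ⟨Metric.ball y δ, Metric.ball_mem_nhds y hδ, fun v hv => ?_⟩
  have hstep : ∀ l, al n (A (l + 1)) v - al n (A l) v = dd n (g l) v := fun l => by
    apply hgs
    obtain ⟨a, ha⟩ := hb (y, τ l) ⟨hy, trivial⟩
    refine ⟨a.1, Nat.lt_succ_iff.1 a.1.2, if a.2 then 1 else 0, fun i hi => ⟨?_, ?_⟩⟩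
    · exact sg_eq_of_mem_hs a (ha (by
        rw [← ball_prod_same]
        exact ⟨hv i hi, Metric.mem_ball_self hδ⟩ : (v i, τ l) ∈ _)).2
    · exact sg_eq_of_mem_hs a (ha (by
        rw [← ball_prod_same]
        exact ⟨hv i hi, hτ l⟩ : (v i, τ (l + 1)) ∈ _)).2
  have hsum : al n (A (L + 1)) v - al n (A 0) v = dd n (∑ l ∈ Finset.range (L + 1), g l) v := by
    rw [dd_sum, Finset.sum_apply, ← Finset.sum_range_sub (fun l => al n (A l) v)]
    exact Finset.sum_congr rfl fun l _ => hstep l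
  have hA0 : A 0 = fun i y => sg i (p y) := by
    funext i y
    simp only [A, hτ0, T0]
  have hA1 : A (L + 1) = fun i y => sg i (q y) := by
    funext i y
    simp only [A, hτ1, T1]
  rw [hA0, hA1] at hsum
  rw [← neg_one_smul ℤ (∑ l ∈ Finset.range (L + 1), g l), dd_smul]
  simp only [Pi.sub_apply, Pi.smul_apply, smul_eq_mul]
  linarith

/-- The zero-divisor `pr₁^* ω - pr₂^* ω` on `X × X`, where `X = (Sⁿ)ᵏ` and `ω` is the fundamental
cocycle of the `m`-th factor. -/
noncomputable def zd {k n : ℕ} (m : Fin k) : Co ((Fin k → Sph n) × (Fin k → Sph n)) :=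
  (al n fun i y => sg i (y.1 m)) - (al n fun i y => sg i (y.2 m))

theorem cyc_zd {k n : ℕ} (m : Fin k) : Cyc n (zd m : Co ((Fin k → Sph n) × (Fin k → Sph n))) :=
  (cyc_al (p := fun y : (Fin k → Sph n) × (Fin k → Sph n) => y.1 m) (by fun_prop)).sub
    (cyc_al (p := fun y : (Fin k → Sph n) × (Fin k → Sph n) => y.2 m) (by fun_prop))

/-- A motion planner over a neighbourhood of a closed set `K` makes the two projections homotopic, so
the zero-divisors become coboundaries near `K`. -/
theorem exists_bound_of_planner {k n : ℕ} {U K : Set ((Fin k → Sph n) × (Fin k → Sph n))}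
    (hU : IsOpen U) (hK : IsClosed K) (hKU : K ⊆ U) (h : HasMotionPlanner U) (m : Fin k) :
    ∃ g, Dep n g ∧ LocZero K (n + 1) (zd m - dd n g) := by
  obtain ⟨s, hs⟩ := h
  refine exists_bound_of_homotopy hU hK hKU (fun y => y.1 m) (fun y => y.2 m)
    (fun z => s z.1 z.2 m) ?_ (fun y => by simp only [(hs y).1]) (fun y => by simp only [(hs y).2])
  exact (continuous_apply m).comp (by fun_prop)

/-- A cover by `j ≤ r` open sets with motion planners kills each product of `r` zero-divisors. -/
theorem bd_of_cover {k n j r : ℕ} (hn : 1 ≤ n) (hj : j ≤ r)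
    {U : Fin j → Set ((Fin k → Sph n) × (Fin k → Sph n))} (hU : ∀ i, IsOpen (U i))
    (hcov : ⋃ i, U i = Set.univ) (hs : ∀ i, HasMotionPlanner (U i)) (m : ℕ → Fin k) :
    Bd (r * n) (pr n r fun b => zd (m b) : Co ((Fin k → Sph n) × (Fin k → Sph n))) := by
  obtain ⟨K, hKc, hK, hKU⟩ := exists_iUnion_eq_closed_subset hU
    (fun x => Set.toFinite _) hcov
  let K' : ℕ → Set ((Fin k → Sph n) × (Fin k → Sph n)) := fun b =>
    if h : b < j then K ⟨b, h⟩ else ∅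
  have hg : ∀ b, ∃ g, Dep n g ∧ LocZero (K' b) (n + 1) (zd (m b) - dd n g) := fun b => by
    by_cases h : b < j
    · simp only [K', h, dif_pos]
      exact exists_bound_of_planner (hU _) (hK _) (hKU _) (hs _) _
    · exact ⟨0, Dep.zero _, fun y hy => by simp [K', h] at hy⟩
  choose g hg1 hg2 using hg
  refine bd_pr hn r (K := K') (fun b => cyc_zd _) hg1 hg2 fun y => ?_
  obtain ⟨i, hi⟩ := Set.mem_iUnion.1 (hKc ▸ Set.mem_univ y : y ∈ ⋃ i, K i)
  refine ⟨i, i.2.trans_le hj, ?_⟩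
  simpa [K'] using hi

/-! ### The fundamental cycle of the torus -/

/-- The vertices of the simplex of the grid `(ℤ/M)ᴺ` which starts at `c` and moves by a unit step
in the directions `τ 0, τ 1, …, τ (N - 1)`. -/
def vert {N M : ℕ} (c : Fin N → ZMod M) (τ : Equiv.Perm (Fin N)) (j : ℕ) : Fin N → ZMod M :=
  fun i => c i + if (τ.symm i : ℕ) < j then 1 else 0

/-- Evaluation of a degree `N` cochain on the fundamental cycle of the triangulated torus
`(ℤ/M)ᴺ`, mapped by `φ`. -/
def ev {N M : ℕ} [NeZero M] {Y : Type*} (φ : (Fin N → ZMod M) → Y) (F : Co Y) : ℤ :=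
  ∑ c : Fin N → ZMod M, ∑ τ : Equiv.Perm (Fin N),
    (Equiv.Perm.sign τ : ℤ) * F (fun j => φ (vert c τ j))

theorem vert_mul_swap {N M : ℕ} (c : Fin N → ZMod M) (τ : Equiv.Perm (Fin N)) {j i : ℕ}
    (hj : j + 1 < N) (hi : i ≠ j + 1) :
    vert c (τ * Equiv.swap ⟨j, by omega⟩ ⟨j + 1, hj⟩) i = vert c τ i := by
  funext x
  unfold vert
  congr 1
  obtain ⟨l, rfl⟩ := τ.surjective x
  have e : ∀ a b : Fin N, (τ * Equiv.swap a b).symm (τ l) = Equiv.swap a b l := fun a b => by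
    rw [Equiv.symm_apply_eq]
    simp
  rw [e, Equiv.symm_apply_apply, Equiv.swap_apply_def]
  split_ifs <;> simp_all [Fin.ext_iff] <;> omega

theorem vert_mul_finRotate {p M : ℕ} (c : Fin (p + 1) → ZMod M) (τ : Equiv.Perm (Fin (p + 1)))
    {i : ℕ} (hi : i < p + 1) :
    vert (c + Pi.single (τ 0) 1) (τ * finRotate (p + 1)) i = vert c τ (i + 1) := by
  funext x
  obtain ⟨l, rfl⟩ := (τ * finRotate (p + 1)).surjective x
  unfold vert
  rw [Equiv.symm_apply_apply, Equiv.Perm.mul_apply, Equiv.symm_apply_apply, coe_finRotate]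
  by_cases hl : l = Fin.last p
  · subst hl
    simp
    omega
  · have h0 : finRotate (p + 1) l ≠ 0 := by
      intro h
      have := congrArg Fin.val h
      rw [coe_finRotate, if_neg hl] at this
      simp at this
    have h1 : τ (finRotate (p + 1) l) ≠ τ 0 := fun h => h0 (τ.injective h)
    simp only [Pi.add_apply, Pi.single_eq_of_ne h1, add_zero, hl, if_false, add_lt_add_iff_right]

/-- Stokes' theorem: the fundamental cycle of the torus has no boundary. -/
theorem ev_dd {N M : ℕ} [NeZero M] (hN : 1 ≤ N) {Y : Type*} (φ : (Fin N → ZMod M) → Y) {g : Co Y}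
    (hg : Dep N g) : ev φ (dd N g) = 0 := by
  obtain ⟨p, rfl⟩ : ∃ p, N = p + 1 := ⟨N - 1, by omega⟩
  let T : ℕ → ℤ := fun j => ∑ c : Fin (p + 1) → ZMod M, ∑ τ : Equiv.Perm (Fin (p + 1)),
    (Equiv.Perm.sign τ : ℤ) * g (fun i => φ (vert c τ (face j i)))
  have hE : ev φ (dd (p + 1) g) = ∑ j ∈ Finset.range (p + 1 + 1), (-1) ^ j * T j := by
    simp only [ev, dd, T, Finset.mul_sum]
    rw [Finset.sum_comm' (t' := Finset.univ) (s' := fun _ => Finset.univ) (by simp),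
      Finset.sum_comm' (t' := Finset.univ) (s' := fun _ => Finset.range (p + 1 + 1)) (by simp)]
    rw [Finset.sum_comm]
    refine Finset.sum_congr rfl fun c _ => ?_
    rw [Finset.sum_comm]
    refine Finset.sum_congr rfl fun j _ => ?_
    refine Finset.sum_congr rfl fun τ _ => ?_
    ring
  -- Inner faces cancel in pairs, by exchanging two consecutive directions.
  have hmid : ∀ j < p, T (j + 1) = 0 := by
    intro j hj
    refine Finset.sum_eq_zero fun c _ => ?_
    have hne : (⟨j, by omega⟩ : Fin (p + 1)) ≠ ⟨j + 1, by omega⟩ := by simp [Fin.ext_iff]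
    have h := Equiv.sum_comp
      (Equiv.mulRight (Equiv.swap (⟨j, by omega⟩ : Fin (p + 1)) ⟨j + 1, by omega⟩))
      fun τ : Equiv.Perm (Fin (p + 1)) =>
        (Equiv.Perm.sign τ : ℤ) * g (fun i => φ (vert c τ (face (j + 1) i)))
    have h' : ∀ τ : Equiv.Perm (Fin (p + 1)), ∀ i,
        vert c (τ * Equiv.swap ⟨j, by omega⟩ ⟨j + 1, by omega⟩) (face (j + 1) i) =
          vert c τ (face (j + 1) i) := fun τ i =>
      vert_mul_swap c τ (by omega) (by unfold face; split_ifs <;> omega)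
    simp only [Equiv.coe_mulRight, h', Equiv.Perm.sign_mul, Equiv.Perm.sign_swap hne, mul_neg,
      mul_one, Units.val_neg, neg_mul, Finset.sum_neg_distrib] at h
    omega
  -- The first and the last faces are exchanged by a translation and a cyclic rotation.
  have hend : T 0 = (-1) ^ p * T (p + 1) := by
    have hlast : T (p + 1) = ∑ c : Fin (p + 1) → ZMod M, ∑ τ : Equiv.Perm (Fin (p + 1)),
        (Equiv.Perm.sign τ : ℤ) * g (fun i => φ (vert c τ i)) := by
      refine Finset.sum_congr rfl fun c _ => Finset.sum_congr rfl fun τ _ => ?_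
      rw [hg _ (fun i => φ (vert c τ i)) fun i hi => by rw [face, if_pos hi]]
    have hfirst : T 0 = ∑ τ : Equiv.Perm (Fin (p + 1)), ∑ c : Fin (p + 1) → ZMod M,
        (Equiv.Perm.sign τ : ℤ) * g (fun i => φ (vert c (τ * finRotate (p + 1)) i)) := by
      simp only [T]
      rw [Finset.sum_comm]
      refine Finset.sum_congr rfl fun τ _ => ?_
      rw [← Equiv.sum_comp (Equiv.addRight (Pi.single (τ 0) 1 : Fin (p + 1) → ZMod M))
        fun c => (Equiv.Perm.sign τ : ℤ) * g (fun i => φ (vert c (τ * finRotate (p + 1)) i))]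
      refine Finset.sum_congr rfl fun c _ => ?_
      rw [hg _ (fun i => φ (vert (c + Pi.single (τ 0) 1) (τ * finRotate (p + 1)) i)) fun i hi => by
        rw [vert_mul_finRotate c τ hi, face, if_neg (Nat.not_lt_zero i)]]
      rfl
    rw [hfirst, hlast, Finset.sum_comm, Finset.mul_sum]
    refine Finset.sum_congr rfl fun c _ => ?_
    rw [← Equiv.sum_comp (Equiv.mulRight (finRotate (p + 1))) fun τ =>
      (Equiv.Perm.sign τ : ℤ) * g (fun i => φ (vert c τ i)), Finset.mul_sum]
    refine Finset.sum_congr rfl fun τ _ => ?_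
    have h1 : ((-1 : ℤ) ^ p) * (-1) ^ p = 1 := by rw [← mul_pow]; simp
    simp only [Equiv.coe_mulRight, Equiv.Perm.sign_mul, sign_finRotate, Units.val_mul,
      Nat.add_sub_cancel, Units.val_pow_eq_pow_val, Units.val_neg, Units.val_one]
    linear_combination (-(Equiv.Perm.sign τ : ℤ) *
      g (fun i => φ (vert c (τ * finRotate (p + 1)) i))) * h1
  rw [hE, Finset.sum_range_succ, Finset.sum_range_succ', hend,
    Finset.sum_eq_zero fun j hj => by rw [hmid j (Finset.mem_range.1 hj), mul_zero]]
  ring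

theorem LocZero.exists_delta {Y : Type*} [PseudoMetricSpace Y] [CompactSpace Y] {m : ℕ} {F : Co Y}
    (h : LocZero Set.univ m F) :
    ∃ δ > 0, ∀ v : ℕ → Y, (∀ i < m, dist (v i) (v 0) < δ) → F v = 0 := by
  choose! V hV hz using h
  obtain ⟨δ, hδ, hb⟩ := lebesgue_number_lemma_of_metric (s := Set.univ) isCompact_univ
    (fun y => isOpen_interior (s := V y)) fun y _ =>
      Set.mem_iUnion.2 ⟨y, mem_interior_iff_mem_nhds.2 (hV y trivial)⟩
  refine ⟨δ, hδ, fun v hv => ?_⟩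
  obtain ⟨y, hy⟩ := hb (v 0) trivial
  exact hz y trivial v fun i hi => interior_subset (hy (hv i hi))

theorem dist_toCircle_add_one {M : ℕ} [NeZero M] (a : ZMod M) :
    dist (ZMod.toCircle (a + 1)) (ZMod.toCircle a) = dist (ZMod.toCircle (1 : ZMod M)) 1 := by
  have e : ∀ z w : Circle, dist z w = ‖(z : ℂ) - w‖ := fun z w => dist_eq_norm (z : ℂ) w
  rw [AddChar.map_add_eq_mul, e, e, Circle.coe_mul, Circle.coe_one, ← mul_sub_one, norm_mul,
    Circle.norm_coe, one_mul]

theorem exists_dist_toCircle_lt {η : ℝ} (hη : 0 < η) : ∃ M₀ : ℕ, ∀ M ≥ M₀, ∀ _ : NeZero M,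
    dist (ZMod.toCircle (1 : ZMod M)) 1 < η := by
  have h : Filter.Tendsto (fun M : ℕ => Circle.exp (2 * Real.pi * (1 / (M : ℝ)))) Filter.atTop
      (nhds 1) := by
    have h1 := (tendsto_one_div_atTop_nhds_zero_nat (𝕜 := ℝ)).const_mul (2 * Real.pi)
    rw [mul_zero] at h1
    have h2 := (Circle.exp.continuous.tendsto 0).comp h1
    rwa [Circle.exp_zero] at h2
  obtain ⟨M₀, hM⟩ := Filter.eventually_atTop.1 (h (Metric.ball_mem_nhds 1 hη))
  refine ⟨M₀, fun M hM' _ => ?_⟩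
  have e : ZMod.toCircle (1 : ZMod M) = Circle.exp (2 * Real.pi * (1 / (M : ℝ))) := by
    apply Subtype.ext
    have := ZMod.toCircle_natCast (N := M) 1
    rw [Nat.cast_one] at this
    rw [this, Circle.coe_exp]
    congr 1
    push_cast
    ring
  rw [e]
  exact hM M hM'

/-- Coboundaries vanish on the fundamental cycles of sufficiently fine grids on a torus. -/
theorem ev_eventually_zero {Y : Type*} [PseudoMetricSpace Y] [CompactSpace Y] {N : ℕ} (hN : 1 ≤ N)
    {Q : (Fin N → Circle) → Y} (hQ : Continuous Q) {F : Co Y} (hF : Bd N F) :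
    ∃ M₀ : ℕ, ∀ M ≥ M₀, ∀ _ : NeZero M,
      ev (fun a : Fin N → ZMod M => Q fun i => ZMod.toCircle (a i)) F = 0 := by
  obtain ⟨g, hg, -, hz⟩ := hF
  obtain ⟨δ, hδ, hv⟩ := hz.exists_delta
  obtain ⟨η, hη, hQ'⟩ := Metric.uniformContinuous_iff.1
    (CompactSpace.uniformContinuous_of_continuous hQ) δ hδ
  obtain ⟨M₀, hM₀⟩ := exists_dist_toCircle_lt hη
  refine ⟨M₀, fun M hM _ => ?_⟩
  rw [← ev_dd hN (fun a : Fin N → ZMod M => Q fun i => ZMod.toCircle (a i)) hg]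
  refine Finset.sum_congr rfl fun c _ => Finset.sum_congr rfl fun τ _ => ?_
  congr 1
  rw [← sub_eq_zero]
  refine hv (fun j => Q fun i => ZMod.toCircle (vert c τ j i)) fun j _ => hQ' ?_
  refine (dist_pi_lt_iff hη).2 fun i => ?_
  have h0 : vert c τ 0 i = c i := by simp [vert]
  rw [h0]
  unfold vert
  split_ifs
  · rw [dist_toCircle_add_one]
    exact hM₀ M hM _
  · rwa [add_zero, dist_self]

/-! ### A map of degree one from the torus to the sphere -/

theorem sin_two_pi_nonneg_iff {t : ℝ} (h0 : 0 ≤ t) (h1 : t < 1) :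
    0 ≤ Real.sin (2 * Real.pi * t) ↔ t ≤ 1 / 2 := by
  have hp := Real.pi_pos
  constructor
  · intro h
    by_contra! ht
    have h2 : 0 < Real.sin (2 * Real.pi * t - Real.pi) :=
      Real.sin_pos_of_pos_of_lt_pi (by nlinarith) (by nlinarith)
    rw [Real.sin_sub_pi] at h2
    linarith
  · intro h
    exact Real.sin_nonneg_of_nonneg_of_le_pi (by positivity) (by nlinarith)

theorem toCircle_natCast_im {M : ℕ} [NeZero M] (x : ℕ) :
    (ZMod.toCircle (x : ZMod M) : ℂ).im = Real.sin (2 * Real.pi * (x / M)) := by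
  rw [ZMod.toCircle_natCast,
    show (2 * Real.pi * Complex.I * x / M : ℂ) = ((2 * Real.pi * (x / M) : ℝ) : ℂ) * Complex.I by
      push_cast; ring, Complex.exp_ofReal_mul_I_im]

theorem toCircle_natCast_re {M : ℕ} [NeZero M] (x : ℕ) :
    (ZMod.toCircle (x : ZMod M) : ℂ).re = Real.cos (2 * Real.pi * (x / M)) := by
  rw [ZMod.toCircle_natCast,
    show (2 * Real.pi * Complex.I * x / M : ℂ) = ((2 * Real.pi * (x / M) : ℝ) : ℂ) * Complex.I by
      push_cast; ring, Complex.exp_ofReal_mul_I_re]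

/-- Along the `M`-th roots of unity the sign of the imaginary part changes twice, and it does so
near the point `1` only in the step from `-1` to `0`. -/
theorem eq_neg_one_of_sign_change {M : ℕ} [NeZero M] (hM : 5 ≤ M) (a : ZMod M)
    (h : ¬ (0 ≤ (ZMod.toCircle (a + 1) : ℂ).im ↔ 0 ≤ (ZMod.toCircle a : ℂ).im))
    (hre : 0 ≤ (ZMod.toCircle (a + 1) : ℂ).re) : a = -1 := by
  by_contra hne
  obtain ⟨x, hx, rfl⟩ : ∃ x < M, a = (x : ZMod M) := ⟨a.val, a.val_lt, by simp⟩
  have hx1 : x + 1 < M := by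
    refine lt_of_le_of_ne hx fun hxM => hne (eq_neg_of_add_eq_zero_left ?_)
    have : ((x + 1 : ℕ) : ZMod M) = 0 := by rw [hxM, ZMod.natCast_self]
    exact_mod_cast this
  rw [← Nat.cast_succ] at h hre
  have hMR : (5 : ℝ) ≤ M := by exact_mod_cast hM
  have hM0 : (0 : ℝ) < M := by linarith
  have hx1' : ((x : ℝ) + 1) < M := by exact_mod_cast hx1
  have hx0 : (0 : ℝ) ≤ x := Nat.cast_nonneg x
  rw [toCircle_natCast_im, toCircle_natCast_im, sin_two_pi_nonneg_iff (by positivity)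
    (by rw [div_lt_one hM0]; push_cast; exact hx1'), sin_two_pi_nonneg_iff (by positivity)
    (by rw [div_lt_one hM0]; linarith), div_le_iff₀ hM0, div_le_iff₀ hM0] at h
  rw [toCircle_natCast_re] at hre
  push_cast at h hre
  have h1 : (x : ℝ) ≤ 1 / 2 * M ∧ 1 / 2 * (M : ℝ) < x + 1 := by
    by_contra hc
    apply h
    constructor
    · intro h'
      linarith
    · intro h'
      by_contra h''
      exact hc ⟨h', not_le.1 h''⟩
  have hp := Real.pi_pos
  have e1 : 1 / 2 < ((x : ℝ) + 1) / M := by rw [lt_div_iff₀ hM0]; exact h1.2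
  have e2 : ((x : ℝ) + 1) / M < 3 / 4 := by rw [div_lt_iff₀ hM0]; linarith [h1.1]
  have := Real.cos_neg_of_pi_div_two_lt_of_lt (x := 2 * Real.pi * (((x : ℝ) + 1) / M))
    (by nlinarith) (by nlinarith)
  linarith

theorem toCircle_neg_one_im_neg {M : ℕ} [NeZero M] (hM : 5 ≤ M) :
    (ZMod.toCircle (-1 : ZMod M) : ℂ).im < 0 := by
  have hMR : (5 : ℝ) ≤ M := by exact_mod_cast hM
  have hM0 : (0 : ℝ) < M := by linarith
  have h1 := toCircle_natCast_im (M := M) 1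
  rw [Nat.cast_one, Nat.cast_one] at h1
  rw [AddChar.map_neg_eq_inv, Circle.coe_inv_eq_conj, Complex.conj_im, h1, neg_lt_zero]
  refine Real.sin_pos_of_pos_of_lt_pi (by positivity) ?_
  have hp := Real.pi_pos
  have : 1 / (M : ℝ) < 1 / 2 := by rw [div_lt_div_iff₀ hM0 two_pos]; linarith
  nlinarith

/-- The coordinates `(Im z₁, …, Im zₙ, ∑ Re zᵢ - (n - 1))` of a map from the torus to the sphere. -/
noncomputable def torusVec {n : ℕ} (z : Fin n → Circle) : EuclideanSpace ℝ (Fin (n + 1)) :=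
  WithLp.toLp 2 (Fin.snoc (fun i => (z i : ℂ).im) (∑ i, (z i : ℂ).re - (n - 1)) :
    Fin (n + 1) → ℝ)

theorem torusVec_castSucc {n : ℕ} (z : Fin n → Circle) (i : Fin n) :
    torusVec z i.castSucc = (z i : ℂ).im := by simp [torusVec]

theorem torusVec_last {n : ℕ} (z : Fin n → Circle) :
    torusVec z (Fin.last n) = ∑ i, (z i : ℂ).re - (n - 1) := by simp [torusVec]

theorem continuous_torusVec {n : ℕ} :
    Continuous (torusVec : (Fin n → Circle) → EuclideanSpace ℝ (Fin (n + 1))) := by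
  refine (PiLp.continuous_toLp 2 _).comp (continuous_pi fun j => ?_)
  refine Fin.lastCases ?_ (fun i => ?_) j
  · simp only [Fin.snoc_last]
    have (i : Fin n) : Continuous fun z : Fin n → Circle => (z i : ℂ).re :=
      Complex.continuous_re.comp (continuous_subtype_val.comp (continuous_apply i))
    fun_prop
  · simp only [Fin.snoc_castSucc]
    exact Complex.continuous_im.comp (continuous_subtype_val.comp (continuous_apply i))

theorem circle_re_sq_add_im_sq (z : Circle) : (z : ℂ).re ^ 2 + (z : ℂ).im ^ 2 = 1 := by
  have := Circle.normSq_coe z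
  rw [Complex.normSq_apply] at this
  linarith

theorem circle_re_le_one (z : Circle) : (z : ℂ).re ≤ 1 := by
  nlinarith [circle_re_sq_add_im_sq z, sq_nonneg (z : ℂ).im]

theorem re_nonneg_of_sum {n : ℕ} (z : Fin n → Circle) (h : (n : ℝ) - 1 ≤ ∑ i, (z i : ℂ).re)
    (i : Fin n) : 0 ≤ (z i : ℂ).re := by
  have h1 : ∑ j ∈ Finset.univ.erase i, (z j : ℂ).re ≤ (n : ℝ) - 1 := by
    have := Finset.sum_le_card_nsmul (Finset.univ.erase i) (fun j => (z j : ℂ).re) 1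
      fun j _ => circle_re_le_one (z j)
    rw [Finset.card_erase_of_mem (Finset.mem_univ i), Finset.card_univ, Fintype.card_fin] at this
    have hn : 1 ≤ n := by have := i.2; omega
    rw [nsmul_eq_mul, mul_one, Nat.cast_sub hn, Nat.cast_one] at this
    exact this
  rw [← Finset.add_sum_erase _ _ (Finset.mem_univ i)] at h
  linarith

theorem torusVec_ne_zero {n : ℕ} (z : Fin n → Circle) : torusVec z ≠ 0 := by
  intro h
  have him : ∀ i, (z i : ℂ).im = 0 := fun i => by rw [← torusVec_castSucc, h]; rfl
  have hs : ∑ i, (z i : ℂ).re - ((n : ℝ) - 1) = 0 := by rw [← torusVec_last, h]; rfl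
  have hre : ∀ i, (z i : ℂ).re = 1 := fun i => by
    have h1 := circle_re_sq_add_im_sq (z i)
    have h2 := re_nonneg_of_sum z (by linarith) i
    rw [him i] at h1
    nlinarith
  simp [hre] at hs

/-- A map of degree `±1` from the torus to the sphere. -/
noncomputable def torusMap {n : ℕ} : C(Fin n → Circle, Sph n) :=
  toSph torusVec continuous_torusVec torusVec_ne_zero

theorem sg_torusMap {n : ℕ} (z : Fin n → Circle) (i : Fin (n + 1)) :
    sg i (torusMap z) = if 0 ≤ torusVec z i then 1 else 0 := by
  have h : (0 : ℝ) < ‖torusVec z‖⁻¹ := inv_pos.2 (norm_pos_iff.2 (torusVec_ne_zero z))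
  rw [sg, dif_pos i.2, torusMap, toSph_coe, PiLp.smul_apply, smul_eq_mul]
  simp only [Fin.eta, mul_nonneg_iff_of_pos_left h]

/-- The value of the fundamental cocycle on the `n` steps of a simplex that start at time `m`,
projected to the block of coordinates `e`. It is nonzero only if these steps run through the
block in order, starting from the corner `-1`. -/
theorem al_torusMap {N M n : ℕ} [NeZero M] (hM : 5 ≤ M) (c : Fin N → ZMod M)
    (τ : Equiv.Perm (Fin N)) (e : Fin n → Fin N) (m : ℕ) [Decidable (∀ i : Fin n,
      (τ.symm (e i) : ℕ) = i + m ∧ c (e i) = -1)] :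
    al n sg (fun j => torusMap fun i => ZMod.toCircle (vert c τ (j + m) (e i))) =
      if ∀ i : Fin n, (τ.symm (e i) : ℕ) = i + m ∧ c (e i) = -1 then 1 else 0 := by
  have hlow : ∀ (i : Fin n) (j : ℕ),
      sg i (torusMap fun i => ZMod.toCircle (vert c τ (j + m) (e i))) =
      if 0 ≤ (ZMod.toCircle (vert c τ (j + m) (e i)) : ℂ).im then 1 else 0 := fun i j => by
    have := sg_torusMap (fun i => ZMod.toCircle (vert c τ (j + m) (e i))) i.castSucc
    rwa [torusVec_castSucc] at this
  have hlast : sg n (torusMap fun i => ZMod.toCircle (vert c τ (n + m) (e i))) =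
      if 0 ≤ ∑ i, (ZMod.toCircle (vert c τ (n + m) (e i)) : ℂ).re - ((n : ℝ) - 1)
        then 1 else 0 := by
    have := sg_torusMap (fun i => ZMod.toCircle (vert c τ (n + m) (e i))) (Fin.last n)
    rwa [torusVec_last] at this
  rw [al_eq_prod, ← Fin.prod_univ_eq_prod_range (fun i =>
    sg i (torusMap fun l => ZMod.toCircle (vert c τ (i + 1 + m) (e l))) -
    sg i (torusMap fun l => ZMod.toCircle (vert c τ (i + m) (e l)))) n]
  split_ifs with h
  · have hv : ∀ (i : Fin n) (j : ℕ), vert c τ (j + m) (e i) = if (i : ℕ) < j then 0 else -1 :=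
      fun i j => by
        rw [vert, (h i).1, (h i).2]
        simp only [add_lt_add_iff_right]
        split_ifs <;> simp
    have h1 : ∀ i : Fin n,
        sg i (torusMap fun l => ZMod.toCircle (vert c τ (i + 1 + m) (e l))) -
        sg i (torusMap fun l => ZMod.toCircle (vert c τ (i + m) (e l))) = 1 := fun i => by
      rw [hlow, hlow, hv, hv]
      simp [not_le.2 (toCircle_neg_one_im_neg hM)]
    rw [Finset.prod_congr rfl fun i _ => h1 i, hlast]
    simp [hv]
  · by_contra hne
    have hne' := left_ne_zero_of_mul hne
    rw [Finset.prod_ne_zero_iff] at hne'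
    have hsum : (n : ℝ) - 1 ≤ ∑ i, (ZMod.toCircle (vert c τ (n + m) (e i)) : ℂ).re := by
      have := right_ne_zero_of_mul hne
      rw [hlast] at this
      by_contra hlt
      exact this (if_neg (by linarith))
    apply h
    intro i
    have hi := hne' i (Finset.mem_univ i)
    rw [hlow, hlow] at hi
    have hτ : (τ.symm (e i) : ℕ) = i + m := by
      by_contra hc
      apply hi
      have : vert c τ (i + 1 + m) (e i) = vert c τ (i + m) (e i) := by
        unfold vert
        congr 1
        split_ifs <;> first | rfl | omega
      rw [this, sub_self]
    refine ⟨hτ, ?_⟩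
    have e0 : vert c τ (i + m) (e i) = c (e i) := by simp [vert, hτ]
    have e1 : ∀ j, (i : ℕ) < j → vert c τ (j + m) (e i) = c (e i) + 1 := fun j hj => by
      simp [vert, hτ, hj]
    refine eq_neg_one_of_sign_change hM _ (fun hiff => hi ?_) ?_
    · rw [e0, e1 _ (Nat.lt_succ_self _)]
      simp only [hiff, sub_self]
    · have := re_nonneg_of_sum _ hsum i
      rwa [e1 n i.2] at this

/-! ### Nonvanishing of the products of zero-divisors -/

/-- A permutation which permutes `r` blocks of length `n` in the same way as `π` permutes their
names has sign `sign π ^ n`. -/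
theorem sign_of_blocks {r n : ℕ} (τ : Equiv.Perm (Fin (r * n))) (π : Equiv.Perm (Fin r))
    (h : ∀ b i, τ (finProdFinEquiv (b, i)) = finProdFinEquiv (π b, i)) :
    Equiv.Perm.sign τ = Equiv.Perm.sign π ^ n := by
  rw [← Equiv.Perm.sign_eq_sign_of_equiv (Equiv.prodCongrLeft fun _ : Fin n => π) τ finProdFinEquiv
    (by rintro ⟨b, i⟩; simp [h]), Equiv.Perm.sign_prodCongrLeft]
  simp

/-- If the factors of the product of cochains are nonzero only on simplices which traverse the
blocks one after the other, then the contributions to the evaluation cannot cancel: a permutation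
of the blocks changes the order of the factors `h b`, but not their product, and it is even if `n`
is, and trivial if `n` is odd. -/
theorem ev_pr_ne_zero {r n M : ℕ} [NeZero M] (hn : 1 ≤ n) {Y : Type*}
    (φ : (Fin (r * n) → ZMod M) → Y) (α : ℕ → Co Y) (h : Fin r → ℤ) (h0 : ∀ b, h b ≠ 0)
    (hα : ∀ c τ (b : Fin r), α b (fun j => φ (vert c τ (j + b * n))) ≠ 0 →
      ∃ b', (Odd n → b' = b) ∧ (∀ i, τ (finProdFinEquiv (b, i)) = finProdFinEquiv (b', i)) ∧
        α b (fun j => φ (vert c τ (j + b * n))) = h b')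
    (h1 : ∀ b : Fin r, α b (fun j => φ (vert (-1) 1 (j + b * n))) = h b) :
    ev φ (pr n r α) ≠ 0 := by
  have hpr : ∀ c τ, pr n r α (fun j => φ (vert c τ j)) =
      ∏ b : Fin r, α b (fun j => φ (vert c τ (j + b * n))) := fun c τ => by
    rw [pr_eq_prod, ← Fin.prod_univ_eq_prod_range
      (fun b => α b (fun j => φ (vert c τ (j + b * n)))) r]
  set s : ℤ := ∏ b, h b with hs
  have hs0 : s ≠ 0 := Finset.prod_ne_zero_iff.2 fun b _ => h0 b
  have hterm : ∀ c τ, (Equiv.Perm.sign τ : ℤ) * pr n r α (fun j => φ (vert c τ j)) = 0 ∨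
      (Equiv.Perm.sign τ : ℤ) * pr n r α (fun j => φ (vert c τ j)) = s := by
    intro c τ
    by_cases hz : pr n r α (fun j => φ (vert c τ j)) = 0
    · left
      rw [hz, mul_zero]
    right
    rw [hpr] at hz ⊢
    choose π hodd hπ hv using fun b => hα c τ b (Finset.prod_ne_zero_iff.1 hz b (Finset.mem_univ b))
    have hinj : Function.Injective π := fun b b' hb => by
      have e := (hπ b ⟨0, hn⟩).trans ((congrArg (fun x => finProdFinEquiv (x, ⟨0, hn⟩)) hb).trans
        (hπ b' ⟨0, hn⟩).symm)
      exact congrArg Prod.fst (finProdFinEquiv.injective (τ.injective e))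
    have hbij := Finite.injective_iff_bijective.1 hinj
    have hsign : Equiv.Perm.sign τ = 1 := by
      rw [sign_of_blocks τ (Equiv.ofBijective π hbij) hπ]
      rcases Nat.even_or_odd n with hev | hod
      · obtain ⟨l, rfl⟩ := hev
        rw [← two_mul, pow_mul, Int.units_sq, one_pow]
      · rw [show Equiv.ofBijective π hbij = 1 from Equiv.ext fun b => hodd b hod, map_one, one_pow]
    rw [hsign, Units.val_one, one_mul, Finset.prod_congr rfl fun b _ => hv b, hs]
    exact hbij.prod_comp h
  have hnn : ∀ c τ, 0 ≤ (Equiv.Perm.sign τ : ℤ) * pr n r α (fun j => φ (vert c τ j)) * s := by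
    intro c τ
    rcases hterm c τ with e | e <;> rw [e]
    · simp
    · exact mul_self_nonneg s
  have hpos : 0 < ev φ (pr n r α) * s := by
    simp only [ev, Finset.sum_mul]
    refine Finset.sum_pos' (fun c _ => Finset.sum_nonneg fun τ _ => hnn c τ)
      ⟨-1, Finset.mem_univ _, Finset.sum_pos' (fun τ _ => hnn _ τ) ⟨1, Finset.mem_univ _, ?_⟩⟩
    rw [hpr, Finset.prod_congr rfl fun b _ => h1 b, ← hs, Equiv.Perm.sign_one, Units.val_one,
      one_mul]
    exact mul_self_pos.2 hs0
  intro h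
  rw [h, zero_mul] at hpos
  exact lt_irrefl _ hpos

theorem al_comp {Z W : Type*} (n : ℕ) (A : ℕ → W → ℤ) (p : Z → W) (v : ℕ → Z) :
    al n (fun i z => A i (p z)) v = al n A (fun j => p (v j)) := by
  rw [al_eq_prod, al_eq_prod]

/-- `torusMap` applied to the `b`-th block of the coordinates of the torus. -/
noncomputable def blockMap {r n : ℕ} (b : Fin r) (z : Fin (r * n) → Circle) : Sph n :=
  torusMap fun i => z (finProdFinEquiv (b, i))

theorem continuous_blockMap {r n : ℕ} (b : Fin r) :
    Continuous (blockMap b : (Fin (r * n) → Circle) → Sph n) :=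
  torusMap.continuous.comp (by fun_prop)

/-- The condition that the simplex starting at `c` in the directions given by `τ` traverses the
block `b'` in order during its `b`-th stage, and starts it from the corner `-1`. -/
def Trav {r n M : ℕ} (c : Fin (r * n) → ZMod M) (τ : Equiv.Perm (Fin (r * n))) (b b' : Fin r) :
    Prop :=
  ∀ i, τ (finProdFinEquiv (b, i)) = finProdFinEquiv (b', i) ∧ c (finProdFinEquiv (b', i)) = -1

open Classical in
theorem al_blockMap {r n M : ℕ} [NeZero M] (hM : 5 ≤ M) (c : Fin (r * n) → ZMod M)
    (τ : Equiv.Perm (Fin (r * n))) (b b' : Fin r) :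
    al n sg (fun j => blockMap b' fun i => ZMod.toCircle (vert c τ (j + b * n) i)) =
      if Trav c τ b b' then 1 else 0 := by
  have := al_torusMap hM c τ (fun i => finProdFinEquiv (b', i)) (b * n)
  refine this.trans (if_congr (forall_congr' fun i => and_congr_left fun _ => ?_) rfl rfl)
  rw [← Equiv.eq_symm_apply, eq_comm (a := finProdFinEquiv (b, i)), Fin.ext_iff,
    finProdFinEquiv_apply_val, mul_comm n]

theorem Trav.right_unique {r n M : ℕ} (hn : 1 ≤ n) {c : Fin (r * n) → ZMod M}
    {τ : Equiv.Perm (Fin (r * n))} {b b₁ b₂ : Fin r} (h₁ : Trav c τ b b₁) (h₂ : Trav c τ b b₂) :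
    b₁ = b₂ :=
  congrArg Prod.fst (finProdFinEquiv.injective ((h₁ ⟨0, hn⟩).1.symm.trans (h₂ ⟨0, hn⟩).1))

theorem trav_iff {r n M : ℕ} (hn : 1 ≤ n) (b b' : Fin r) :
    Trav (-1 : Fin (r * n) → ZMod M) 1 b b' ↔ b = b' := by
  constructor
  · intro h
    exact congrArg Prod.fst (finProdFinEquiv.injective (h ⟨0, hn⟩).1)
  · rintro rfl i
    exact ⟨rfl, rfl⟩

/-- For `n` odd, the product of the `k` zero-divisors of the factors is detected by the map
`(T^n)ᵏ → X × X`, `X = (Sⁿ)ᵏ`, which is constant in the first factor `X` and has degree `±1` onto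
the second one. -/
theorem not_bd_odd {k n : ℕ} (hk : 1 ≤ k) (hn : Odd n) (m : ℕ → Fin k)
    (hm : ∀ b : Fin k, m b = b) :
    ¬ Bd (k * n) (pr n k fun b => zd (m b) : Co ((Fin k → Sph n) × (Fin k → Sph n))) := by
  classical
  have hn1 : 1 ≤ n := hn.pos
  intro hB
  let x₀ : Sph n := torusMap 1
  have hQ : Continuous fun z : Fin (k * n) → Circle =>
      (((fun _ => x₀), fun b => blockMap b z) : (Fin k → Sph n) × (Fin k → Sph n)) :=
    continuous_const.prodMk (continuous_pi fun b => continuous_blockMap b)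
  obtain ⟨M₀, h⟩ := ev_eventually_zero (Nat.mul_pos hk hn1) hQ hB
  let M := M₀ + 5
  have hM : 5 ≤ M := Nat.le_add_left 5 M₀
  have hval : ∀ (c : Fin (k * n) → ZMod M) τ (b : Fin k), zd (m b) (fun j =>
      (((fun _ => x₀), fun b' => blockMap b' fun i => ZMod.toCircle (vert c τ (j + b * n) i)) :
        (Fin k → Sph n) × (Fin k → Sph n))) = if Trav c τ b b then -1 else 0 := fun c τ b => by
    have e : al n sg (fun _ : ℕ => x₀) = 0 := by
      rw [al_eq_prod, Finset.prod_eq_zero (Finset.mem_range.2 hn1) (sub_self _), zero_mul]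
    rw [zd, Pi.sub_apply, hm, al_comp n sg fun y : (Fin k → Sph n) × (Fin k → Sph n) => y.1 b,
      al_comp n sg fun y : (Fin k → Sph n) × (Fin k → Sph n) => y.2 b, e, al_blockMap hM]
    split_ifs <;> simp
  refine ev_pr_ne_zero hn1 _ _ (fun _ => -1) (by simp) ?_ ?_
    (h M (Nat.le_add_right _ _) inferInstance)
  · intro c τ b hne
    have hT : Trav c τ b b := by
      by_contra hT
      exact hne ((hval c τ b).trans (if_neg hT))
    exact ⟨b, fun _ => rfl, fun i => (hT i).1, (hval c τ b).trans (if_pos hT)⟩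
  · intro b
    exact (hval _ _ b).trans (if_pos ((trav_iff hn1 b b).2 rfl))

/-- For `n` even, the product of the squares of the `k` zero-divisors is detected by a map
`(T^n)²ᵏ → (Sⁿ)ᵏ × (Sⁿ)ᵏ` of degree `±1`, the blocks `2m` and `2m + 1` corresponding to the `m`-th
factors of the two halves. -/
theorem not_bd_even {k n : ℕ} (hk : 1 ≤ k) (hn1 : 1 ≤ n) (hn : Even n) (m : ℕ → Fin k)
    (hm : ∀ b : Fin (2 * k), (m b : ℕ) = b / 2) :
    ¬ Bd (2 * k * n) (pr n (2 * k) fun b => zd (m b) : Co ((Fin k → Sph n) × (Fin k → Sph n))) := by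
  classical
  intro hB
  let e₀ : Fin k → Fin (2 * k) := fun a => ⟨2 * a, by omega⟩
  let e₁ : Fin k → Fin (2 * k) := fun a => ⟨2 * a + 1, by omega⟩
  have hQ : Continuous fun z : Fin (2 * k * n) → Circle =>
      (((fun a => blockMap (e₀ a) z), fun a => blockMap (e₁ a) z) :
        (Fin k → Sph n) × (Fin k → Sph n)) :=
    (continuous_pi fun a => continuous_blockMap (e₀ a)).prodMk
      (continuous_pi fun a => continuous_blockMap (e₁ a))
  obtain ⟨M₀, h⟩ := ev_eventually_zero (Nat.mul_pos (by omega) hn1) hQ hB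
  let M := M₀ + 5
  have hM : 5 ≤ M := Nat.le_add_left 5 M₀
  have hval : ∀ (c : Fin (2 * k * n) → ZMod M) τ (b : Fin (2 * k)), zd (m b) (fun j =>
      (((fun a => blockMap (e₀ a) fun i => ZMod.toCircle (vert c τ (j + b * n) i)),
        fun a => blockMap (e₁ a) fun i => ZMod.toCircle (vert c τ (j + b * n) i)) :
        (Fin k → Sph n) × (Fin k → Sph n))) =
      (if Trav c τ b (e₀ (m b)) then 1 else 0) - if Trav c τ b (e₁ (m b)) then 1 else 0 :=
    fun c τ b => by
      rw [zd, Pi.sub_apply, al_comp n sg fun y : (Fin k → Sph n) × (Fin k → Sph n) => y.1 (m b),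
        al_comp n sg fun y : (Fin k → Sph n) × (Fin k → Sph n) => y.2 (m b), al_blockMap hM,
        al_blockMap hM]
  have hne01 : ∀ a, e₀ a ≠ e₁ a := fun a ha => by
    have := congrArg Fin.val ha
    simp only [e₀, e₁] at this
    omega
  let s : Fin (2 * k) → ℤ := fun b => if (b : ℕ) % 2 = 0 then 1 else -1
  have hs0 : ∀ a, s (e₀ a) = 1 := fun a => by simp [s, e₀]
  have hs1 : ∀ a, s (e₁ a) = -1 := fun a => by
    simp only [s, e₁]
    rw [if_neg (by omega)]
  -- Not both blocks of a pair can be traversed in the same stage.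
  have hval0 : ∀ (c : Fin (2 * k * n) → ZMod M) τ (b : Fin (2 * k)), Trav c τ b (e₀ (m b)) →
      ((if Trav c τ b (e₀ (m b)) then 1 else 0) - if Trav c τ b (e₁ (m b)) then 1 else 0 : ℤ) =
        s (e₀ (m b)) := fun c τ b hT => by
    rw [if_pos hT, if_neg fun hT' => hne01 _ (hT.right_unique hn1 hT'), hs0, sub_zero]
  have hval1 : ∀ (c : Fin (2 * k * n) → ZMod M) τ (b : Fin (2 * k)), Trav c τ b (e₁ (m b)) →
      ((if Trav c τ b (e₀ (m b)) then 1 else 0) - if Trav c τ b (e₁ (m b)) then 1 else 0 : ℤ) =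
        s (e₁ (m b)) := fun c τ b hT => by
    rw [if_pos hT, if_neg fun hT' => hne01 _ (hT'.right_unique hn1 hT), hs1, zero_sub]
  refine ev_pr_ne_zero hn1 _ _ s (fun b => by simp only [s]; split_ifs <;> simp) ?_ ?_
    (h M (Nat.le_add_right _ _) inferInstance)
  · intro c τ b hne
    by_cases hT : Trav c τ b (e₀ (m b))
    · exact ⟨_, fun ho => absurd hn (Nat.not_even_iff_odd.2 ho), fun i => (hT i).1,
        (hval c τ b).trans (hval0 c τ b hT)⟩
    by_cases hT' : Trav c τ b (e₁ (m b))
    · exact ⟨_, fun ho => absurd hn (Nat.not_even_iff_odd.2 ho), fun i => (hT' i).1,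
        (hval c τ b).trans (hval1 c τ b hT')⟩
    refine absurd ((hval c τ b).trans ?_) hne
    rw [if_neg hT, if_neg hT', sub_zero]
  · intro b
    rcases Nat.mod_two_eq_zero_or_one b with hb | hb
    · have e : b = e₀ (m b) := Fin.ext (by simp only [e₀, hm]; omega)
      have := hval0 (-1) 1 b ((trav_iff hn1 _ _).2 e)
      rw [← e] at this
      exact (hval _ _ b).trans (by rw [← e]; exact this)
    · have e : b = e₁ (m b) := Fin.ext (by simp only [e₁, hm]; omega)
      have := hval1 (-1) 1 b ((trav_iff hn1 _ _).2 e)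
      rw [← e] at this
      exact (hval _ _ b).trans (by rw [← e]; exact this)

theorem lower_bound {k n : ℕ} (hk : 1 ≤ k) (hn : 1 ≤ n) :
    ((if Odd n then k + 1 else 2 * k + 1 : ℕ) : ℕ∞) ≤ topologicalComplexity (Fin k → Sph n) := by
  refine le_sInf ?_
  rintro _ ⟨j, rfl, U, hU, hcov, hs⟩
  rw [Nat.cast_le]
  by_contra! hj
  split_ifs at hj with ho
  · let m : ℕ → Fin k := fun b => if h : b < k then ⟨b, h⟩ else ⟨0, hk⟩
    exact not_bd_odd hk ho m (fun b => by simp [m])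
      (bd_of_cover hn (Nat.lt_succ_iff.1 hj) hU hcov hs m)
  · let m : ℕ → Fin k := fun b => if h : b / 2 < k then ⟨b / 2, h⟩ else ⟨0, hk⟩
    refine not_bd_even hk hn (Nat.not_odd_iff_even.1 ho) m (fun b => ?_)
      (bd_of_cover hn (Nat.lt_succ_iff.1 hj) hU hcov hs m)
    have : (b : ℕ) / 2 < k := by omega
    simp [m, this]

end TCSpheres

/-- The topological complexity of the product of `k` copies of the `n`-sphere:
`TC((Sⁿ)ᵏ) = 2k + 1` for `n` even and `k + 1` for `n` odd. -/
theorem TC_pi_spheres (k n : ℕ) (hk : 1 ≤ k) (hn : 1 ≤ n) :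
    topologicalComplexity (Fin k → Metric.sphere (0 : EuclideanSpace ℝ (Fin (n + 1))) 1) =
      if Odd n then k + 1 else 2 * k + 1 := by
  have h := TCSpheres.lower_bound hk hn
  refine le_antisymm (TCSpheres.upper_bound k n hn) (le_trans (le_of_eq ?_) h)
  split_ifs <;> simp
end
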